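/- arXiv:1912.12556 — 2 statements merged into one kernel-verified Lean document; each statement's English description precedes it below -/
import Mathlib

section
/- Let K be a field of characteristic 0, let V be a finite-dimensional K-vector space, let t ≥ 1, and let φ_1 : X_1 → V, …, φ_{2t} : X_{2t} → V be morphisms from smooth, geometrically irreducible K-varieties X_i to (the affine space underlying) V. If for every i the t-fold self-convolution φ_i^{*t} : X_i^t → V is flat, then the convolution φ_1 * ⋯ * φ_{2t} : X_1 × ⋯ × X_{2t} → V, (x_1,…,x_{2t}) ↦ φ_1(x_1) + ⋯ + φ_{2t}(x_{2t}), is flat. -/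
/-!
A morphism from a smooth variety to affine `n`-space is flat as soon as all its fibres have the
expected dimension, so the theorem reduces to a bound on the dimension of fibres. That bound is
proved by an algebraic version of the Cauchy–Schwarz inequality for energies: the dimension of the
fibres of a long convolution is controlled by the fibres of the words obtained by doubling one half
of it, and doubling repeatedly leads to convolutions of a single `φ_i` with itself.

**Fibres as points over fields.** Let `L` be an algebraic closure of `K`. Instead of the dimension
of the fibre over `v ∈ L^n`, the proof uses the transcendence rank over `L` (`trRk`) of the tuple of
coordinates of a point of the fibre with values in an arbitrary extension field of `L`; this is a
rank function of the algebraic independence matroid. Signs are allowed: a word is a family of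
letters `(i, ±)`, and `Attains φ w k` says that some point `(x_j)` with `∑ ±φ_i(x_j) = v`, where
`v` is rational over `L`, has rank at least `k`. The goal is `k + n ≤ ∑ dim X_i` for every word
of length `2t`.

**Input from flatness.** If `φ_i^{*t}` is flat, then over every extension `κ` of `K` the coordinates
of a `κ`-point of the base pull back to a regular sequence of length `n`, and passing through the
terms of the sequence one at a time gives a point of rank larger by `n`. Hence points of the fibres
of `φ_i^{*t}` have rank at most `t dim X_i - n` (`FibreBound`, `fibreBound_of_flat`). Applied to
the field `κ` generated over `L` by the partial sum of one half, this bounds the word with `t`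
letters `(i, +)` and `t` letters `(i, -)` (`Attains.const_bound`).

**Cauchy–Schwarz.** Take a point of a word cut in two halves `u`, `u'`, and let `s` be the partial
sum over `u`. Two copies of the first half that are independent over `s` form a point of the
word `u` followed by `u` with the signs reversed, and likewise for `u'`
(`exists_independent_copy`). Submodularity of the rank then gives `2k ≤ k₁ + k₂` for the three ranks
(`Attains.cauchySchwarz`). The `n` coordinates of `s` enter both sides and cancel.

**Extremal argument.** Among all words of length `2t` choose one with maximal excess, that is, rank
minus sum of the dimensions, and among those one in which some index `i` occurs as often as
possible. By Cauchy–Schwarz, doubling any half of an extremal word preserves the maximal excess.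
Doubling a half with as many occurrences of `i` as possible would raise the number of occurrences
unless all letters have index `i`. One more doubling and a regrouping of the signs produce the word
treated above, so the maximal excess is at most `-n` (`Attains.target_bound`).

**Back to flatness.** Flatness descends from `L` to `K`, and over `L` it is checked at the maximal
ideals of the coordinate ring of the product, all of which are rational points. Étale charts
(`exists_etale_chart`) show that the local ring there contains a regular sequence of length at least
`∑ dim X_i`. The sequence cutting out the fibre lowers the dimension by its length, hence is regular
(`isWeaklyRegular_of_ringKrullDim_le`), and a local criterion of flatness along a regular sequence
concludes (`flat_of_isWeaklyRegular`).
-/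

/-!
Statement 13: (Proposition 4.9 of Glazer–Hendel.) Let `φ_1 : X_1 → V, …, φ_{2t} : X_{2t} → V`
be morphisms from smooth, geometrically irreducible `K`-varieties to a finite-dimensional
`K`-vector space `V ≅ 𝔸^nV` (char K = 0).  If every `t`-fold self-convolution `φ_i^{*t}` is
flat, then the convolution `φ_1 * ⋯ * φ_{2t}` is flat.

The varieties are presented affinely: `X_i = Spec (K[x_1,…,x_{N_i}] ⧸ I_i)` with `I_i` a
radical ideal (reducedness), `Algebra.Smooth` (smoothness) and the radical of the extension
of `I_i` to an algebraic closure being prime (geometric irreducibility).  A morphism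
`X_i → 𝔸^nV` is given by `nV` polynomials `g i`; products of varieties correspond to
polynomial rings in disjoint variables modulo the sum of the extended ideals, and flatness of
a morphism is flatness of its comorphism.
-/

/-- The ideal of the `t`-fold self-product `X^t ⊆ 𝔸^{t·N}` of `X = V(I) ⊆ 𝔸^N`. -/
noncomputable def selfProdIdeal {K : Type} [CommRing K] {N : ℕ} (t : ℕ)
    (I : Ideal (MvPolynomial (Fin N) K)) : Ideal (MvPolynomial (Fin t × Fin N) K) :=
  Ideal.span (⋃ a : Fin t, (MvPolynomial.rename (Prod.mk a)) '' (I : Set (MvPolynomial (Fin N) K)))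

/-- The ideal of the product `X_1 × ⋯ × X_m ⊆ 𝔸^{N_1 + ⋯ + N_m}` of `X_i = V(I_i) ⊆ 𝔸^{N_i}`. -/
noncomputable def prodIdeal {K : Type} [CommRing K] {m : ℕ} {N : Fin m → ℕ}
    (I : ∀ i, Ideal (MvPolynomial (Fin (N i)) K)) :
    Ideal (MvPolynomial (Σ i : Fin m, Fin (N i)) K) :=
  Ideal.span (⋃ i : Fin m,
    (MvPolynomial.rename (Sigma.mk i)) '' (I i : Set (MvPolynomial (Fin (N i)) K)))

/-! ### Transcendence degree of proper quotients -/

section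

open Cardinal

/-- The transcendence degree of a domain drops modulo a nonzero prime: a lift of a transcendence
basis of the quotient that were still a transcendence basis would make a nonzero element of `Q`
divide a nonzero polynomial in the lifts, giving a relation in the quotient. -/
theorem trdeg_quotient_add_one_le {k D : Type} [Field k] [CommRing D] [IsDomain D] [Algebra k D]
    (hfin : Algebra.trdeg k D < ℵ₀) (Q : Ideal D) [Q.IsPrime] (hQ : Q ≠ ⊥) :
    Algebra.trdeg k (D ⧸ Q) + 1 ≤ Algebra.trdeg k D := by
  have hle : Algebra.trdeg k (D ⧸ Q) ≤ Algebra.trdeg k D := 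
    trdeg_le_of_surjective (Ideal.Quotient.mkₐ k Q) (Ideal.Quotient.mkₐ_surjective k Q)
  by_contra! hlt
  have heq : Algebra.trdeg k D ≤ Algebra.trdeg k (D ⧸ Q) := by
    obtain ⟨a, ha⟩ := Cardinal.lt_aleph0.1 hfin
    obtain ⟨b, hb⟩ := Cardinal.lt_aleph0.1 (hle.trans_lt hfin)
    rw [ha, hb] at hlt ⊢
    norm_cast at hlt ⊢
    omega
  have : FaithfulSMul k (D ⧸ Q) :=
    (faithfulSMul_iff_algebraMap_injective _ _).2 (algebraMap k (D ⧸ Q)).injective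
  obtain ⟨s, hz⟩ := exists_isTranscendenceBasis k (D ⧸ Q)
  let z : s → D := fun i => (Ideal.Quotient.mk_surjective (I := Q) i.1).choose
  have hzz : ∀ i, Ideal.Quotient.mkₐ k Q (z i) = i.1 :=
    fun i => (Ideal.Quotient.mk_surjective (I := Q) i.1).choose_spec
  have hz' : AlgebraicIndependent k z := by
    apply AlgebraicIndependent.of_comp (Ideal.Quotient.mkₐ k Q)
    rw [show (Ideal.Quotient.mkₐ k Q : D → D ⧸ Q) ∘ z = Subtype.val from funext hzz]
    exact hz.1
  have hb : IsTranscendenceBasis k z :=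
    hz'.isTranscendenceBasis_of_trdeg_le hfin (by rw [hz.cardinalMk_eq_trdeg]; exact heq)
  obtain ⟨q, hq, hq0⟩ := Submodule.exists_mem_ne_zero_of_ne_bot hQ
  have := (isTranscendenceBasis_iff_algebraicIndependent_isAlgebraic.1 hb).2
  obtain ⟨r, hr, hdvd⟩ := (Algebra.IsAlgebraic.isAlgebraic (R := Algebra.adjoin k (Set.range z)) q).exists_nonzero_dvd (mem_nonZeroDivisors_of_ne_zero hq0)
  obtain ⟨r, hr'⟩ := r
  rw [Algebra.adjoin_range_eq_range_aeval] at hr'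
  obtain ⟨P, rfl⟩ := hr'
  apply hr
  have h1 : MvPolynomial.aeval z P ∈ Q := Q.mem_of_dvd hdvd hq
  have h2 : MvPolynomial.aeval (fun i : s => i.1) P = 0 := by
    rw [← Ideal.Quotient.eq_zero_iff_mem] at h1
    have := MvPolynomial.comp_aeval_apply (R := k) z (Ideal.Quotient.mkₐ k Q) P
    simp only [hzz] at this
    rw [← this]; exact h1
  have h3 := (algebraicIndependent_iff.1 hz.1) P h2
  subst h3
  exact Subtype.ext (map_zero (MvPolynomial.aeval z))

end

/-! ### Flatness modulo a nonzerodivisor -/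

section

open TensorProduct

section LocalFlat
variable {S R : Type} [CommRing S] [CommRing R] [Algebra S R]

lemma lTensor_subtype_eq_zero_iff (I : Ideal S) {n : ℕ} (r : Fin n → R) (i : Fin n → I) :
    I.subtype.lTensor R (∑ k, r k ⊗ₜ[S] i k) = 0 ↔ ∑ k, (i k : S) • r k = 0 := by
  rw [← (TensorProduct.rid S R).map_eq_zero_iff]
  simp [map_sum]

/-- A linear relation `∑ i k • r k = 0` over `S` becomes trivial modulo `y`, because `R / y` is
flat over `S / y`. Here `S'` and `R'` stand for `S / y` and `R / y`; lifting the trivialization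
leaves the error terms `y • e k` and `y * c j`. -/
lemma exists_lift_relation {S' R' : Type} [CommRing S'] [CommRing R'] [Algebra S S'] [Algebra R R']
    [Algebra S' R'] (y : S)
    (hcomm : ∀ s : S, algebraMap S' R' (algebraMap S S' s) = algebraMap R R' (algebraMap S R s))
    (hS : Function.Surjective (algebraMap S S')) (hSk : ∀ s, algebraMap S S' s = 0 → y ∣ s)
    (hR : Function.Surjective (algebraMap R R'))
    (hRk : ∀ r, algebraMap R R' r = 0 → algebraMap S R y ∣ r)
    [Module.Flat S' R'] {n : ℕ} (r : Fin n → R) (i : Fin n → S) (h : ∑ k, i k • r k = 0) :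
    ∃ (m : ℕ) (a : Fin n → Fin m → S) (z : Fin m → R) (e : Fin n → R) (c : Fin m → S),
      (∀ k, r k = ∑ j, a k j • z j + y • e k) ∧ ∀ j, ∑ k, i k * a k j = y * c j := by
  have h' : ∑ k, (algebraMap S S' (i k)) • (algebraMap R R' (r k)) = 0 := by
    have := congrArg (algebraMap R R') h
    simpa [Algebra.smul_def, hcomm] using this
  obtain ⟨m, a', z', h1, h2⟩ := Module.Flat.isTrivialRelation_of_sum_smul_eq_zero (R := S') (M := R') h'
  beta_reduce at h1 h2
  choose a ha using fun k j => hS (a' k j)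
  choose z hz using fun j => hR (z' j)
  have h3 : ∀ k, algebraMap S R y ∣ r k - ∑ j, a k j • z j := by
    intro k
    apply hRk
    rw [map_sub, h1 k, map_sum, sub_eq_zero]
    refine Finset.sum_congr rfl fun j _ => ?_
    rw [Algebra.smul_def, Algebra.smul_def, map_mul, ← hcomm, ha, hz]
  have h4 : ∀ j, y ∣ ∑ k, i k * a k j := by
    intro j
    apply hSk
    rw [map_sum, ← h2 j]
    refine Finset.sum_congr rfl fun k _ => ?_
    rw [map_mul, ha]
  choose e he using h3
  choose c hc using h4
  refine ⟨m, a, z, e, c, fun k => ?_, hc⟩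
  rw [Algebra.smul_def, ← he]; ring

/-- One step of the local criterion of flatness: if `y` is a nonzerodivisor on `R` lying in the
Jacobson radical and `R / y` is flat over `S / y`, then `R` is flat over `S`. Injectivity of
`R ⊗ I → R` is proved by Noetherian induction on `I`. -/
theorem flat_of_flat_quotient_regular [IsNoetherianRing S] [IsNoetherianRing R] 
    {S' R' : Type} [CommRing S'] [CommRing R'] [Algebra S S'] [Algebra R R']
    [Algebra S' R'] (y : S)
    (hy : algebraMap S R y ∈ (⊥ : Ideal R).jacobson) (hreg : ∀ r : R, y • r = 0 → r = 0)
    (hcomm : ∀ s : S, algebraMap S' R' (algebraMap S S' s) = algebraMap R R' (algebraMap S R s))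
    (hS : Function.Surjective (algebraMap S S')) (hSk : ∀ s, algebraMap S S' s = 0 → y ∣ s)
    (hR : Function.Surjective (algebraMap R R'))
    (hRk : ∀ r, algebraMap R R' r = 0 → algebraMap S R y ∣ r)
    [Module.Flat S' R'] : Module.Flat S R := by
  rw [Module.Flat.iff_lTensor_injective']
  intro I
  induction I using IsNoetherian.induction with | hgt I ih => ?_
  -- If `y ∈ I`, an element of the kernel is `w ⊗ y` with `y • w = 0`, and `y` is regular.
  by_cases hyI : y ∈ I
  · rw [← LinearMap.ker_eq_bot, LinearMap.ker_eq_bot']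
    intro x hx
    obtain ⟨n, r, i, rfl⟩ := TensorProduct.exists_sum_tmul_eq x
    rw [lTensor_subtype_eq_zero_iff] at hx
    obtain ⟨m, a, z, e, c, h1, h2⟩ := exists_lift_relation y hcomm hS hSk hR hRk r _ hx
    have key : ∑ k, r k ⊗ₜ[S] i k
        = (∑ j, c j • z j + ∑ k, (i k : S) • e k) ⊗ₜ[S] (⟨y, hyI⟩ : I) := by
      have e1 : ∀ k, r k ⊗ₜ[S] i k = ∑ j, z j ⊗ₜ[S] (a k j • i k) + 
          ((i k : S) • e k) ⊗ₜ[S] (⟨y, hyI⟩ : I) := by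
        intro k
        conv_lhs => rw [h1 k]
        rw [add_tmul, sum_tmul, smul_tmul, smul_tmul (i k : S)]
        congr 1
        · simp only [smul_tmul]
        · congr 1
          ext
          simp [mul_comm]
      simp only [e1, Finset.sum_add_distrib, add_tmul, sum_tmul]
      congr 1
      rw [Finset.sum_comm]
      refine Finset.sum_congr rfl fun j _ => ?_
      rw [← tmul_sum, smul_tmul]
      congr 1
      ext
      simp only [AddSubmonoidClass.coe_finsetSum, SetLike.val_smul, smul_eq_mul]
      rw [mul_comm (c j), ← h2]
      exact Finset.sum_congr rfl fun k _ => mul_comm _ _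
    rw [key]
    rw [hreg (∑ j, c j • z j + ∑ k, (i k : S) • e k), zero_tmul]
    rw [← hx]
    simp only [h1, smul_add, Finset.sum_add_distrib, Finset.smul_sum, smul_smul]
    congr 1
    · rw [Finset.sum_comm]
      refine Finset.sum_congr rfl fun j _ => ?_
      rw [← h2, Finset.sum_smul]
    · simp only [mul_comm]
  -- If `I` is saturated with respect to `y`, the kernel `N` satisfies `N ≤ y N`, and Nakayama
  -- applies.
  by_cases hyn : ∀ s, y * s ∈ I → s ∈ I
  · let f : R ⊗[S] I →ₗ[R] R ⊗[S] S := AlgebraTensorModule.lTensor R R I.subtype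
    have hf : ∀ x, f x = I.subtype.lTensor R x := fun x => rfl
    rw [← LinearMap.ker_eq_bot, LinearMap.ker_eq_bot']
    suffices h : LinearMap.ker f = ⊥ from fun x hx => (LinearMap.ker_eq_bot'.1 h) x hx
    have : Module.Finite S I := Module.Finite.iff_fg.2 (IsNoetherian.noetherian I)
    refine Submodule.eq_bot_of_le_smul_of_le_jacobson_bot (Ideal.span {algebraMap S R y}) _
      (IsNoetherian.noetherian _) ?_ ((Ideal.span_singleton_le_iff_mem _).2 hy)
    intro x hx
    have hx0 : f x = 0 := hx
    obtain ⟨n, r, i, hxx⟩ := TensorProduct.exists_sum_tmul_eq x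
    have hx' := hx0
    rw [hf, hxx, lTensor_subtype_eq_zero_iff] at hx'
    obtain ⟨m, a, z, e, c, h1, h2⟩ := exists_lift_relation y hcomm hS hSk hR hRk r _ hx'
    have hc : ∀ j, c j ∈ I := fun j => hyn _ (by
      rw [← h2]; exact I.sum_mem fun k _ => Ideal.mul_mem_right _ I (i k).2)
    have key : x = algebraMap S R y • (∑ j, z j ⊗ₜ[S] (⟨c j, hc j⟩ : I) + ∑ k, e k ⊗ₜ[S] i k) := by
      rw [hxx, algebraMap_smul]
      have e1 : ∀ k, r k ⊗ₜ[S] i k = ∑ j, z j ⊗ₜ[S] (a k j • i k) + 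
          y • (e k ⊗ₜ[S] i k) := by
        intro k
        conv_lhs => rw [h1 k]
        rw [add_tmul, sum_tmul, smul_tmul']
        congr 1
        simp only [smul_tmul]
      simp only [e1, Finset.sum_add_distrib, smul_add, Finset.smul_sum]
      congr 1
      rw [Finset.sum_comm]
      refine Finset.sum_congr rfl fun j _ => ?_
      rw [← tmul_sum, ← tmul_smul]
      congr 1
      ext
      simp only [AddSubmonoidClass.coe_finsetSum, SetLike.val_smul, smul_eq_mul]
      rw [← h2]
      exact Finset.sum_congr rfl fun k _ => mul_comm _ _
    have hreg' : ∀ w : R ⊗[S] S, algebraMap S R y • w = 0 → w = 0 := by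
      intro w hw
      rw [algebraMap_smul] at hw
      have := congrArg (TensorProduct.rid S R) hw
      rw [map_smul, map_zero] at this
      simpa using hreg _ this
    rw [key]
    refine Submodule.smul_mem_smul (Ideal.mem_span_singleton_self _) ?_
    rw [LinearMap.mem_ker]
    apply hreg'
    rw [← map_smul, ← key, hx0]
  -- Otherwise some `a ∉ I` has `y * a ∈ I`. The ideals `J = I + (a)` and `B = (I : a)` are strictly
  -- larger than `I`, and the exact sequence `B → I × S → J → 0` reduces `I` to them.
  · push Not at hyn
    obtain ⟨a, ha, haI⟩ := hyn
    let J : Ideal S := I ⊔ Ideal.span {a}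
    have hIJ : I ≤ J := le_sup_left
    have haJ : a ∈ J := (le_sup_right : _ ≤ J) (Ideal.mem_span_singleton_self a)
    let B : Ideal S := Submodule.colon I {a}
    have hB : ∀ s, s ∈ B ↔ s * a ∈ I := fun s => by simp [B, Submodule.mem_colon_singleton]
    have hIJ' : I < J := lt_of_le_of_ne hIJ (fun h => haI (h ▸ haJ))
    have hIB : I < B := by
      refine lt_of_le_of_ne (fun s hs => (hB s).2 (Ideal.mul_mem_right _ I hs)) (fun h => hyI ?_)
      rw [h, hB]; exact ha
    have tJ := ih J hIJ'
    have tB := ih B hIB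
    let f : B →ₗ[S] I × S := LinearMap.prod
      (LinearMap.codRestrict I (-(LinearMap.toSpanSingleton S S a ∘ₗ B.subtype)) 
        (fun s => by simpa using (hB s).1 s.2)) B.subtype
    let g : I × S →ₗ[S] J := LinearMap.coprod (Submodule.inclusion hIJ) 
      (LinearMap.toSpanSingleton S J ⟨a, haJ⟩)
    have hex : Function.Exact f g := by
      rintro ⟨i, s⟩
      constructor
      · intro h
        have h' : (i : S) + s * a = 0 := congrArg Subtype.val h
        refine ⟨⟨s, (hB s).2 ?_⟩, ?_⟩
        · rw [eq_neg_of_add_eq_zero_right h']; exact I.neg_mem i.2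
        · refine Prod.ext (Subtype.ext ?_) rfl
          simp [f, eq_neg_of_add_eq_zero_left h']
      · rintro ⟨s, hs⟩
        obtain ⟨rfl, rfl⟩ := Prod.ext_iff.1 hs
        apply Subtype.ext
        simp [f, g]
    have hg : Function.Surjective g := by
      rintro ⟨j, hj⟩
      obtain ⟨i, hi, z, hz, rfl⟩ := Submodule.mem_sup.1 hj
      obtain ⟨s, rfl⟩ := Ideal.mem_span_singleton'.1 hz
      exact ⟨(⟨i, hi⟩, s), rfl⟩
    have hex' := lTensor_exact R hex hg
    rw [← LinearMap.ker_eq_bot, LinearMap.ker_eq_bot']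
    intro α hα
    have h1 : (Submodule.inclusion hIJ).lTensor R α = 0 := by
      apply tJ
      rw [map_zero, ← LinearMap.comp_apply, ← LinearMap.lTensor_comp]
      exact hα
    have h2 : g.lTensor R ((LinearMap.inl S I S).lTensor R α) = 0 := by
      rw [← LinearMap.comp_apply, ← LinearMap.lTensor_comp]
      convert h1
      ext x
      simp [g]
    obtain ⟨β, hβ⟩ := (hex' _).1 h2
    have h3 : B.subtype.lTensor R β = 0 := by
      have := congrArg ((LinearMap.snd S I S).lTensor R) hβ
      rw [← LinearMap.comp_apply, ← LinearMap.lTensor_comp, ← LinearMap.comp_apply,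
        ← LinearMap.lTensor_comp, LinearMap.snd_comp_inl] at this
      simpa [f] using this
    have h4 : β = 0 := tB (by rw [h3, map_zero])
    have := congrArg ((LinearMap.fst S I S).lTensor R) hβ
    rw [h4, map_zero, map_zero, ← LinearMap.comp_apply,
        ← LinearMap.lTensor_comp, LinearMap.fst_comp_inl] at this
    simpa using this.symm

end LocalFlat

end

/-! ### Flatness along a regular sequence -/

section

open RingTheory.Sequence Pointwise

lemma isWeaklyRegular_quotient_span_singleton {R : Type} [CommRing R] {r : R} {rs : List R}
    (h : IsWeaklyRegular R (r :: rs)) :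
    IsWeaklyRegular (R ⧸ Ideal.span {r}) (rs.map (algebraMap R (R ⧸ Ideal.span {r}))) := by
  have h1 := ((isWeaklyRegular_cons_iff R r rs).1 h).2
  rw [isWeaklyRegular_map_algebraMap_iff]
  have e : (r • (⊤ : Submodule R R)) = Ideal.span {r} := by
    rw [← Submodule.ideal_span_singleton_smul]
    simp
  exact ((Submodule.quotEquivOfEq _ _ e).isWeaklyRegular_congr rs).1 h1

lemma map_mem_jacobson_bot {R R' : Type} [CommRing R] [CommRing R'] (f : R →+* R')
    (hf : Function.Surjective f) {x : R} (hx : x ∈ (⊥ : Ideal R).jacobson) :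
    f x ∈ (⊥ : Ideal R').jacobson := by
  rw [Ideal.mem_jacobson_bot] at hx ⊢
  intro z
  obtain ⟨z, rfl⟩ := hf z
  simpa using (hx z).map f

/-- Local criterion of flatness along a regular sequence generating a maximal ideal. -/
theorem flat_of_isWeaklyRegular (n : ℕ) : ∀ (S R : Type) [CommRing S] [CommRing R] [Algebra S R]
    [IsNoetherianRing S] [IsNoetherianRing R] (ys : List S) (_ : ys.length = n)
    (_ : ∀ y ∈ ys, algebraMap S R y ∈ (⊥ : Ideal R).jacobson)
    (_ : IsWeaklyRegular R (ys.map (algebraMap S R)))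
    (_ : (Ideal.ofList ys).IsMaximal), Module.Flat S R := by
  induction n with
  | zero =>
    intro S R _ _ _ _ _ ys hlen _ _ hmax
    rw [List.length_eq_zero_iff] at hlen
    subst hlen
    rw [Ideal.ofList_nil] at hmax
    have : Nontrivial S := not_subsingleton_iff_nontrivial.1 fun h =>
      hmax.ne_top (Subsingleton.elim _ _)
    let := (Ring.isField_iff_maximal_bot.2 hmax).toField
    infer_instance
  | succ n ih =>
    intro S R _ _ _ _ _ ys hlen hjac hreg hmax
    obtain ⟨y, ys, rfl⟩ := List.exists_cons_of_length_eq_add_one hlen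
    let r := algebraMap S R y
    let φ : S ⧸ Ideal.span {y} →+* R ⧸ Ideal.span {r} :=
      Ideal.Quotient.lift _ ((Ideal.Quotient.mk (Ideal.span {r})).comp (algebraMap S R)) (by
        intro s hs
        obtain ⟨s, rfl⟩ := Ideal.mem_span_singleton'.1 hs
        rw [RingHom.comp_apply, Ideal.Quotient.eq_zero_iff_mem, map_mul]
        exact Ideal.mul_mem_left _ _ (Ideal.mem_span_singleton_self _))
    let : Algebra (S ⧸ Ideal.span {y}) (R ⧸ Ideal.span {r}) := φ.toAlgebra
    have hcomm : ∀ s : S, algebraMap (S ⧸ Ideal.span {y}) (R ⧸ Ideal.span {r})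
      (algebraMap S _ s) = algebraMap R _ (algebraMap S R s) := fun s => rfl
    have hcomm' : (algebraMap (S ⧸ Ideal.span {y}) (R ⧸ Ideal.span {r})) ∘
      (algebraMap S (S ⧸ Ideal.span {y})) = 
        (algebraMap R (R ⧸ Ideal.span {r})) ∘ (algebraMap S R) := funext hcomm
    have : Module.Flat (S ⧸ Ideal.span {y}) (R ⧸ Ideal.span {r}) := by
      refine ih _ _ (ys.map (algebraMap S _)) (by simpa using hlen) ?_ ?_ ?_
      · intro z hz
        obtain ⟨z, hz', rfl⟩ := List.mem_map.1 hz
        rw [hcomm]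
        exact map_mem_jacobson_bot _ Ideal.Quotient.mk_surjective
          (hjac z (List.mem_cons_of_mem _ hz'))
      · rw [List.map_map, hcomm', ← List.map_map]
        exact isWeaklyRegular_quotient_span_singleton hreg
      · rw [← Ideal.map_ofList]
        have h1 : Ideal.map (algebraMap S (S ⧸ Ideal.span {y})) (Ideal.ofList (y :: ys)) =
          Ideal.map (algebraMap S (S ⧸ Ideal.span {y})) (Ideal.ofList ys) := by
          rw [Ideal.ofList_cons, Ideal.map_sup]
          simp [Ideal.map_span]
        rw [← h1]
        refine Ideal.IsMaximal.map_of_surjective_of_ker_le Ideal.Quotient.mk_surjective ?_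
        rw [Ideal.mk_ker, Ideal.ofList_cons]
        exact le_sup_left
    refine flat_of_flat_quotient_regular (S' := S ⧸ Ideal.span {y}) (R' := R ⧸ Ideal.span {r}) y
      (hjac y List.mem_cons_self) ?_ hcomm Ideal.Quotient.mk_surjective ?_
      Ideal.Quotient.mk_surjective ?_
    · intro z hz
      have h1 := ((isWeaklyRegular_cons_iff R _ _).1 hreg).1
      rw [Algebra.smul_def] at hz
      exact h1 (by simpa using hz)
    · intro s hs
      exact Ideal.mem_span_singleton.1 (Ideal.Quotient.eq_zero_iff_mem.1 hs)
    · intro s hs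
      exact Ideal.mem_span_singleton.1 (Ideal.Quotient.eq_zero_iff_mem.1 hs)

end

/-! ### Depth, dimension and regular sequences -/

section

open RingTheory.Sequence Pointwise IsLocalRing CategoryTheory Abelian Limits

lemma ringKrullDim_quotient_add_one_le {R : Type} [CommRing R] {P Q : Ideal R} [P.IsPrime]
    [Q.IsPrime] (h : P < Q) :
    ringKrullDim (R ⧸ Q) + 1 ≤ ringKrullDim (R ⧸ P) := by
  obtain ⟨x, hxQ, hxP⟩ := SetLike.exists_of_lt h
  have h0 : (Ideal.Quotient.mk P x) ∈ nonZeroDivisors (R ⧸ P) :=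
    mem_nonZeroDivisors_of_ne_zero (by rwa [Ne, Ideal.Quotient.eq_zero_iff_mem])
  refine le_trans ?_ (ringKrullDim_quotient_succ_le_of_nonZeroDivisor h0)
  gcongr
  let φ : (R ⧸ P) ⧸ Ideal.span {Ideal.Quotient.mk P x} →+* R ⧸ Q :=
    Ideal.Quotient.lift _ (Ideal.Quotient.factor h.le) (by
      intro a ha
      obtain ⟨a, rfl⟩ := Ideal.mem_span_singleton'.1 ha
      rw [map_mul, Ideal.Quotient.factor_mk, Ideal.Quotient.eq_zero_iff_mem.2 hxQ, mul_zero])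
  exact ringKrullDim_le_of_surjective φ
    (Ideal.Quotient.lift_surjective_of_surjective _ _ (Ideal.Quotient.factor_surjective h.le))

section CM
variable {R : Type} [CommRing R] [IsLocalRing R] [IsNoetherianRing R]

/-- Depth drops by at most one modulo a nonzerodivisor `x`, where depth is witnessed by a regular
sequence: the vanishing of `Ext` from the residue field characterizes it, and the long exact
sequence of multiplication by `x` shifts the degree by one. -/
lemma exists_isRegular_quotSMulTop (M : Type) [AddCommGroup M] [Module R M] [Module.Finite R M]
    [Nontrivial M] {x : R} (hx : x ∈ maximalIdeal R) (hreg : IsSMulRegular M x) {D : ℕ}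
    (rs : List R) (hlen : rs.length = D + 1) (hmem : ∀ r ∈ rs, r ∈ maximalIdeal R)
    (hrs : IsRegular M rs) :
    ∃ rs' : List R, rs'.length = D ∧ (∀ r ∈ rs', r ∈ maximalIdeal R) ∧
      IsRegular (QuotSMulTop x M) rs' := by
  have hlt : ∀ (M : Type) [AddCommGroup M] [Module R M] [Module.Finite R M]
    [Nontrivial M], maximalIdeal R • (⊤ : Submodule R M) < ⊤ := by
    intro M _ _ _ _
    refine lt_top_iff_ne_top.2 (Ne.symm ?_)
    exact Submodule.top_ne_ideal_smul_of_le_jacobson_annihilator (maximalIdeal_le_jacobson _)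
  have hsupp : Module.support R (ResidueField R) = PrimeSpectrum.zeroLocus (maximalIdeal R) := by
    rw [Module.support_eq_zeroLocus]
    erw [Ideal.annihilator_quotient]
  have : Nontrivial (QuotSMulTop x M) := by
    apply Submodule.Quotient.nontrivial_iff.2
    exact (Submodule.top_ne_pointwise_smul_of_mem_jacobson_annihilator
      (maximalIdeal_le_jacobson _ hx)).symm
  have hExt := ModuleCat.subsingleton_ext_of_exists_isRegular (maximalIdeal R)
    (ModuleCat.of R (ResidueField R)) hsupp.subset (ModuleCat.of R M) (hlt M) rs hmem hrs
  refine ModuleCat.exists_isRegular_of_exists_subsingleton_ext (maximalIdeal R) D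
    (ModuleCat.of R (QuotSMulTop x M)) (hlt _) (ModuleCat.of R (ResidueField R)) hsupp ?_
  intro i hi
  have zero1 := AddCommGrpCat.isZero_of_iff_subsingleton.mpr (hExt i (by omega))
  have zero2 := AddCommGrpCat.isZero_of_iff_subsingleton.mpr (hExt (i + 1) (by omega))
  have hreg' : IsSMulRegular (ModuleCat.of R M) x := hreg
  exact AddCommGrpCat.subsingleton_of_isZero <| ShortComplex.Exact.isZero_of_both_zeros
    ((Ext.covariant_sequence_exact₃' (ModuleCat.of R (ResidueField R))
      hreg'.smulShortComplex_shortExact) i (i + 1) rfl)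
    (zero1.eq_zero_of_src _) (zero2.eq_zero_of_tgt _)

/-- The dimension of an associated prime of a module is at least the depth of the module, by
induction along a regular sequence: modulo its first term `x`, some associated prime strictly
contains `P`. -/
lemma length_le_ringKrullDim_of_mem_associatedPrimes (rs : List R) : ∀ (M : Type) [AddCommGroup M]
    [Module R M] [Module.Finite R M] (_ : ∀ r ∈ rs, r ∈ maximalIdeal R) (_ : IsRegular M rs)
    (P : Ideal R) (_ : P ∈ associatedPrimes R M), (rs.length : WithBot ℕ∞) ≤ ringKrullDim (R ⧸ P) := by
  induction rs with
  | nil =>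
    intro M _ _ _ _ _ P hP
    have := hP.isPrime
    simpa using ringKrullDim_nonneg_of_nontrivial
  | cons x rs ih =>
    intro M _ _ _ hmem hreg P hP
    have hPp := hP.isPrime
    rw [isRegular_cons_iff] at hreg
    have hxm : x ∈ maximalIdeal R := hmem x List.mem_cons_self
    -- `N` is the submodule of elements killed by `P`. An element of `N` outside `x M` yields an
    -- associated prime of `M / x M` containing both `P` and `x`.
    let N : Submodule R M :=
      { carrier := {m | ∀ p ∈ P, p • m = 0}
        add_mem' := fun ha hb p hp => by rw [smul_add, ha p hp, hb p hp, add_zero]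
        zero_mem' := fun p hp => smul_zero p
        smul_mem' := fun c m hm p hp => by rw [smul_comm, hm p hp, smul_zero] }
    obtain ⟨_, m0, hm0⟩ := isAssociatedPrime_iff.1 hP
    have hxP : x ∉ P := by
      intro hxP
      have h1 : x ∈ (⋃ p ∈ associatedPrimes R M, p : Set R) := Set.mem_biUnion hP hxP
      rw [biUnion_associatedPrimes_eq_compl_regular] at h1
      exact h1 hreg.1
    have hPne : P ≠ ⊤ := hPp.ne_top
    have hN : N ≠ ⊥ := by
      intro h
      have : m0 ∈ N := fun p hp => by
        simpa [hm0, Submodule.mem_colon_singleton] using hp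
      rw [h, Submodule.mem_bot] at this
      subst this
      apply hPne
      rw [hm0, Ideal.eq_top_iff_one]
      simp [Submodule.mem_colon_singleton]
    have hNx : ∃ n ∈ N, n ∉ x • (⊤ : Submodule R M) := by
      by_contra! hcon
      apply hN
      refine Submodule.eq_bot_of_le_smul_of_le_jacobson_bot (Ideal.span {x}) N
        (IsNoetherian.noetherian _) ?_ ?_
      · intro n hn
        obtain ⟨m, -, rfl⟩ := (Submodule.mem_smul_pointwise_iff_exists _ _ _).1 (hcon n hn)
        refine Submodule.smul_mem_smul (Ideal.mem_span_singleton_self x) ?_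
        intro p hp
        apply hreg.1
        have := hn p hp
        simpa [smul_comm x p] using this
      · rw [Ideal.span_singleton_le_iff_mem, IsLocalRing.jacobson_eq_maximalIdeal _ bot_ne_top]
        exact hxm
    obtain ⟨n, hn, hnx⟩ := hNx
    let nb : QuotSMulTop x M := Submodule.Quotient.mk n
    have hnb : nb ≠ 0 := by rwa [Ne, Submodule.Quotient.mk_eq_zero]
    obtain ⟨Q, hQ, hle⟩ := exists_le_isAssociatedPrime_of_isNoetherianRing R nb hnb
    have hQp := hQ.isPrime
    have hPQ : P ≤ Q := by
      intro p hp
      apply hle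
      rw [Submodule.mem_colon_singleton, Submodule.mem_bot, ← Submodule.Quotient.mk_smul, hn p hp,
        Submodule.Quotient.mk_zero]
    have hxQ : x ∈ Q := by
      apply hle
      rw [Submodule.mem_colon_singleton, Submodule.mem_bot, ← Submodule.Quotient.mk_smul,
        Submodule.Quotient.mk_eq_zero]
      exact Submodule.smul_mem_pointwise_smul _ _ _ Submodule.mem_top
    have hlt : P < Q := lt_of_le_of_ne hPQ (fun h => hxP (h ▸ hxQ))
    refine le_trans ?_ (ringKrullDim_quotient_add_one_le hlt)
    have := ih (QuotSMulTop x M) (fun r hr => hmem r (List.mem_cons_of_mem _ hr)) hreg.2 Q hQ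
    rw [List.length_cons]
    push_cast
    gcongr

lemma supportDim_le_supportDim_quotient_add_length (fs : List R) : ∀ (M : Type) [AddCommGroup M]
    [Module R M] [Module.Finite R M] (_ : ∀ r ∈ fs, r ∈ maximalIdeal R),
    Module.supportDim R M ≤
      Module.supportDim R (M ⧸ (Ideal.ofList fs • ⊤ : Submodule R M)) + fs.length := by
  induction fs with
  | nil =>
    intro M _ _ _ _
    rw [Ideal.ofList_nil, Submodule.bot_smul]
    simpa using (Module.supportDim_eq_of_equiv (Submodule.quotEquivOfEqBot ⊥ rfl)).ge
  | cons x fs ih =>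
    intro M _ _ _ hmem
    refine (Module.supportDim_le_supportDim_quotSMulTop_succ (hmem x List.mem_cons_self)).trans ?_
    rw [Module.supportDim_eq_of_equiv (Submodule.quotOfListConsSMulTopEquivQuotSMulTopInner M x fs)]
    have := ih (QuotSMulTop x M) (fun r hr => hmem r (List.mem_cons_of_mem _ hr))
    rw [List.length_cons]
    push_cast
    rw [← add_assoc]
    gcongr

/-- In a module having a regular sequence `rs`, a sequence `fs` whose quotient has dimension at
most `rs.length - fs.length` is regular: were its first term a zerodivisor, it would lie in an
associated prime, whose dimension is too large. -/
theorem isWeaklyRegular_of_supportDim_le (fs : List R) : ∀ (M : Type) [AddCommGroup M]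
    [Module R M] [Module.Finite R M] [Nontrivial M] (_ : ∀ r ∈ fs, r ∈ maximalIdeal R)
    (rs : List R) (_ : ∀ r ∈ rs, r ∈ maximalIdeal R) (_ : IsRegular M rs)
    (_ : Module.supportDim R (M ⧸ (Ideal.ofList fs • ⊤ : Submodule R M)) + fs.length ≤ rs.length),
    IsWeaklyRegular M fs := by
  induction fs with
  | nil => intros; simp
  | cons f fs ih =>
    intro M _ _ _ _ hmem rs hrm hrs hdim
    have hfm : f ∈ maximalIdeal R := hmem f List.mem_cons_self
    have hmem' : ∀ r ∈ fs, r ∈ maximalIdeal R := fun r hr => hmem r (List.mem_cons_of_mem _ hr)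
    rw [Module.supportDim_eq_of_equiv (Submodule.quotOfListConsSMulTopEquivQuotSMulTopInner M f fs)]
      at hdim
    have hle := supportDim_le_supportDim_quotient_add_length fs (QuotSMulTop f M) hmem'
    have hNt : Nontrivial (QuotSMulTop f M) := by
      apply Submodule.Quotient.nontrivial_iff.2
      exact (Submodule.top_ne_pointwise_smul_of_mem_jacobson_annihilator
        (maximalIdeal_le_jacobson _ hfm)).symm
    have hle' : Module.supportDim R (QuotSMulTop f M) + 1 ≤ rs.length := by
      refine le_trans ?_ hdim
      rw [List.length_cons]
      push_cast
      rw [← add_assoc]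
      gcongr
    have hreg : IsSMulRegular M f := by
      by_contra hnr
      have h1 : f ∈ (⋃ p ∈ associatedPrimes R M, p : Set R) := by
        rw [biUnion_associatedPrimes_eq_compl_regular]
        exact hnr
      obtain ⟨P, hP, hfP⟩ := Set.mem_iUnion₂.1 h1
      have hPp : P.IsPrime := hP.isPrime
      have h2 := length_le_ringKrullDim_of_mem_associatedPrimes rs M hrm hrs P hP
      have h3 : ringKrullDim (R ⧸ P) ≤ Module.supportDim R (QuotSMulTop f M) := by
        obtain ⟨-, m0, hm0⟩ := isAssociatedPrime_iff.1 hP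
        rw [ringKrullDim_quotient, Module.supportDim, Module.support_quotSMulTop]
        have hsub : PrimeSpectrum.zeroLocus (P : Set R) ⊆
            Module.support R M ∩ PrimeSpectrum.zeroLocus {f} := by
          intro Q hQ
          refine ⟨?_, Set.singleton_subset_iff.2 (hQ hfP)⟩
          rw [Module.mem_support_iff_exists_annihilator]
          refine ⟨m0, fun r hr => hQ ?_⟩
          rw [hm0, SetLike.mem_coe, Submodule.mem_colon_singleton, Submodule.mem_bot]
          exact (Submodule.mem_annihilator_span_singleton _ _).1 hr
        exact Order.krullDim_le_of_strictMono (Set.inclusion hsub) (fun a b h => h)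
      have h4 := (add_le_add (h2.trans h3) le_rfl).trans hle'
      norm_cast at h4
      omega
    rw [isWeaklyRegular_cons_iff]
    refine ⟨hreg, ?_⟩
    obtain ⟨D, hD⟩ : ∃ D, rs.length = D + 1 := by
      have h5 : (0 : WithBot ℕ∞) ≤ Module.supportDim R (QuotSMulTop f M) := by
        have : Nonempty (Module.support R (QuotSMulTop f M)) :=
          Module.nonempty_support_of_nontrivial.to_subtype
        exact Order.krullDim_nonneg
      have h4 := (add_le_add h5 le_rfl).trans hle'
      norm_cast at h4
      exact ⟨rs.length - 1, by omega⟩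
    obtain ⟨rs', hlen', hmem'', hrs'⟩ := exists_isRegular_quotSMulTop M hfm hreg rs hD hrm hrs
    refine ih (QuotSMulTop f M) hmem' rs' hmem'' hrs' ?_
    rw [hD, List.length_cons] at hdim
    rw [hlen']
    generalize Module.supportDim R (QuotSMulTop f M ⧸ (Ideal.ofList fs • ⊤ :
      Submodule R (QuotSMulTop f M))) = s at hdim ⊢
    induction s using WithBot.recBotCoe with
    | bot => simp
    | coe s =>
      induction s using ENat.recTopCoe with
      | top => exact absurd hdim (by norm_cast)
      | coe s =>
        norm_cast at hdim ⊢
        omega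

/-- In a Noetherian local ring having a regular sequence `rs`, a sequence `fs` that cuts the
dimension down to at most `rs.length - fs.length` is regular. -/
theorem isWeaklyRegular_of_ringKrullDim_le (fs rs : List R) (hfs : ∀ r ∈ fs, r ∈ maximalIdeal R)
    (hrs : ∀ r ∈ rs, r ∈ maximalIdeal R) (hreg : IsWeaklyRegular R rs)
    (hdim : ringKrullDim (R ⧸ Ideal.ofList fs) + fs.length ≤ rs.length) :
    IsWeaklyRegular R fs := by
  refine isWeaklyRegular_of_supportDim_le fs R hfs rs hrs
    (IsRegular.of_isWeaklyRegular_of_mem_maximalIdeal R hrs hreg) ?_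
  have : (Ideal.ofList fs • ⊤ : Submodule R R) = Ideal.ofList fs := by simp
  rw [this, Module.supportDim_quotient_eq_ringKrullDim]
  exact hdim

end CM

end

/-! ### Transcendence rank -/

section

open Cardinal

/-- The transcendence rank over `k` of a subset `X` of an extension field: the maximal number, in
`ℕ∞`, of elements of `X` that are algebraically independent over `k`, defined as the rank of `X` in
the matroid of algebraic independence. -/
noncomputable def trRk (k : Type) {E : Type} [Field k] [Field E] [Algebra k E] (X : Set E) : ℕ∞ :=
  (AlgebraicIndependent.matroid k E).eRk X

section rank
variable {k E : Type} [Field k] [Field E] [Algebra k E]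

lemma trRk_mono {X Y : Set E} (h : X ⊆ Y) : trRk k X ≤ trRk k Y := Matroid.eRk_mono _ h

lemma trRk_union_le (X Y : Set E) : trRk k (X ∪ Y) ≤ trRk k X + trRk k Y :=
  Matroid.eRk_union_le_eRk_add_eRk _ _ _

lemma mem_trClosure_iff {X : Set E} {a : E} :
    a ∈ (AlgebraicIndependent.matroid k E).closure X ↔
      IsAlgebraic (IntermediateField.adjoin k X) a := by
  rw [AlgebraicIndependent.matroid_closure_eq, SetLike.mem_coe, Subalgebra.mem_algebraicClosure]
  let : Algebra (Algebra.adjoin k X) (IntermediateField.adjoin k X) :=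
    (Subalgebra.inclusion (IntermediateField.algebra_adjoin_le_adjoin k X)).toRingHom.toAlgebra
  have : IsScalarTower (Algebra.adjoin k X) (IntermediateField.adjoin k X) E :=
    IsScalarTower.of_algebraMap_eq (congrFun rfl)
  have : IsFractionRing (Algebra.adjoin k X) (IntermediateField.adjoin k X) := by
    open scoped IntermediateField.algebraAdjoinAdjoin in
    exact inferInstanceAs (IsFractionRing (Algebra.adjoin k X) (IntermediateField.adjoin k X))
  exact (IsFractionRing.isAlgebraic_iff (Algebra.adjoin k X) (IntermediateField.adjoin k X) E)

lemma adjoin_subset_trClosure (X : Set E) :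
    (IntermediateField.adjoin k X : Set E) ⊆ (AlgebraicIndependent.matroid k E).closure X := by
  intro a ha
  rw [mem_trClosure_iff]
  exact isAlgebraic_algebraMap (⟨a, ha⟩ : IntermediateField.adjoin k X)

lemma trRk_le_of_subset_closure {X Y : Set E}
    (h : X ⊆ (AlgebraicIndependent.matroid k E).closure Y) : trRk k X ≤ trRk k Y := by
  rw [trRk, trRk, ← Matroid.eRk_closure_eq _ Y]
  exact Matroid.eRk_mono _ h

/-- Submodularity of the transcendence rank, with any set `S` algebraic over both `X` and `Y` in
place of the intersection of their closures. -/
lemma trRk_union_add_le {X Y S : Set E}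
    (hX : S ⊆ (AlgebraicIndependent.matroid k E).closure X)
    (hY : S ⊆ (AlgebraicIndependent.matroid k E).closure Y) :
    trRk k S + trRk k (X ∪ Y) ≤ trRk k X + trRk k Y := by
  set M := AlgebraicIndependent.matroid k E
  have h := M.eRk_inter_add_eRk_union_le (M.closure X) (M.closure Y)
  simp only [Matroid.eRk_closure_eq, Matroid.eRk_union_closure_left_eq,
    Matroid.eRk_union_closure_right_eq] at h
  exact le_trans (add_le_add_left (M.eRk_mono (Set.subset_inter hX hY)) _) h

/-- Subadditivity of the rank along the tower `k ⊆ k(S)`. -/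
lemma trRk_le_add_adjoin (S X : Set E) :
    trRk k X ≤ trRk k S + trRk (IntermediateField.adjoin k S) X := by
  set F := IntermediateField.adjoin k S
  obtain ⟨T, hT⟩ := (AlgebraicIndependent.matroid F E).exists_isBasis X
  have h1 : trRk F X = T.encard := hT.encard_eq_eRk.symm
  rw [h1]
  have h2 : X ⊆ (AlgebraicIndependent.matroid k E).closure (S ∪ T) := by
    intro a ha
    have ha' := hT.subset_closure ha
    rw [mem_trClosure_iff] at ha' ⊢
    rw [← IntermediateField.adjoin_adjoin_left]
    exact ha'
  refine (trRk_le_of_subset_closure h2).trans ((trRk_union_le _ _).trans ?_)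
  gcongr
  exact Matroid.eRk_le_encard _ _

/-- A point of `A` has rank at most the transcendence degree of `A`, even over a larger base
field `k`. -/
lemma trRk_range_le {k₀ A : Type} [Field k₀] [CommRing A] [Algebra k₀ A]
    [Algebra k₀ k] [Algebra k₀ E] [IsScalarTower k₀ k E] (f : A →ₐ[k₀] E) :
    trRk k (Set.range f) ≤ Cardinal.toENat (Algebra.trdeg k₀ A) := by
  obtain ⟨T, hT⟩ := (AlgebraicIndependent.matroid k E).exists_isBasis (Set.range f)
  have h1 : trRk k (Set.range f) = T.encard := hT.encard_eq_eRk.symm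
  have hi : AlgebraicIndependent k ((↑) : T → E) := hT.indep
  have hi' : AlgebraicIndependent k₀ ((↑) : T → E) :=
    hi.restrictScalars (algebraMap k₀ k).injective
  have hs : ∀ t : T, ∃ a, f a = t := fun t => hT.subset t.2
  choose a ha using hs
  have : AlgebraicIndependent k₀ a := by
    refine AlgebraicIndependent.of_comp f ?_
    convert hi' using 1
    exact funext ha
  rw [h1, Set.encard, ENat.card]
  exact Cardinal.toENat.monotone' this.cardinalMk_le_trdeg

/-- A generic point of a domain `D` has rank at least the transcendence degree of `D`. -/
lemma le_trRk_range {D : Type} [CommRing D] [IsDomain D] [Algebra k D] (f : D →ₐ[k] E)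
    (hf : Function.Injective f) :
    Cardinal.toENat (Algebra.trdeg k D) ≤ trRk k (Set.range f) := by
  have : FaithfulSMul k D := (faithfulSMul_iff_algebraMap_injective _ _).2
    (algebraMap k D).injective
  obtain ⟨s, hs⟩ := exists_isTranscendenceBasis k D
  rw [← hs.cardinalMk_eq_trdeg]
  have h1 := hs.1.map' hf
  have h2 : (AlgebraicIndependent.matroid k E).Indep (Set.range (f ∘ ((↑) : s → D))) :=
    h1.to_subtype_range
  have h3 := h2.encard_le_eRk_of_subset (X := Set.range f) (by
    rintro _ ⟨x, rfl⟩; exact ⟨_, rfl⟩)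
  refine le_trans ?_ h3
  rw [Set.encard, ENat.card, ← Cardinal.mk_range_eq _ h1.injective]

lemma trRk_iUnion_le {ι : Type} [Fintype ι] (X : ι → Set E) :
    trRk k (⋃ i, X i) ≤ ∑ i, trRk k (X i) := by
  classical
  have : ∀ s : Finset ι, trRk k (⋃ i ∈ s, X i) ≤ ∑ i ∈ s, trRk k (X i) := by
    intro s
    induction s using Finset.induction_on with
    | empty => simp [trRk]
    | insert a s ha ih =>
      rw [Finset.set_biUnion_insert, Finset.sum_insert ha]
      exact (trRk_union_le _ _).trans (by gcongr)
  simpa using this Finset.univ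

end rank

end

/-! ### Independent copies over a subfield -/

section

open Cardinal

/-- A transcendence basis can be sent to any algebraically independent family in an algebraically
closed field by an embedding of the whole field. -/
lemma exists_extend_transcendenceBasis {F Ω M T : Type} [Field F] [Field Ω] [Field M]
    [IsAlgClosed M] [Algebra F Ω] [Algebra F M] {x : T → Ω} {y : T → M}
    (hx : IsTranscendenceBasis F x) (hy : AlgebraicIndependent F y) :
    ∃ σ : Ω →ₐ[F] M, ∀ j, σ (x j) = y j := by
  let R := Algebra.adjoin F (Set.range x)
  let e : MvPolynomial T F ≃ₐ[F] R := hx.1.aevalEquiv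
  let g : MvPolynomial T F →ₐ[F] M := MvPolynomial.aeval y
  let g' : R →ₐ[F] M := g.comp e.symm.toAlgHom
  let : Algebra R M := g'.toRingHom.toAlgebra
  have hg' : Function.Injective (algebraMap R M) :=
    (show Function.Injective g from hy).comp e.symm.injective
  have : IsScalarTower F R M := IsScalarTower.of_algebraMap_eq fun x => (g'.commutes x).symm
  have : FaithfulSMul R M := (faithfulSMul_iff_algebraMap_injective _ _).2 hg'
  have : Module.IsTorsionFree R M := inferInstance
  have : Algebra.IsAlgebraic R Ω := hx.isAlgebraic
  let σ : Ω →ₐ[R] M := IsAlgClosed.lift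
  refine ⟨σ.restrictScalars F, fun j => ?_⟩
  have h3 : algebraMap R Ω (e (MvPolynomial.X j)) = x j := by
    simp only [e]
    rw [hx.1.algebraMap_aevalEquiv]
    simp
  have h2 := σ.commutes (e (MvPolynomial.X j))
  rw [h3] at h2
  change σ (x j) = _
  rw [h2]
  change g (e.symm (e (MvPolynomial.X j))) = _
  simp [g]

/-- Two copies `i`, `σ` of a set `X` that agree on `S` and are independent over it, so that the
rank of their union is at least `2 * rank X - rank S`. The copy `σ` sends a transcendence basis of
`Ω` over `L(S)`, chosen to contain a basis of `X`, to variables that are new over `Ω`. -/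
lemma exists_independent_copy {L Ω : Type} [Field L] [Field Ω] [Algebra L Ω] (S X : Set Ω) :
    ∃ (Ω' : Type) (_ : Field Ω') (_ : Algebra L Ω') (i σ : Ω →ₐ[L] Ω'),
      (∀ s ∈ S, i s = σ s) ∧
      trRk L X + trRk L X ≤ trRk L S + trRk L (i '' X ∪ σ '' X) := by
  classical
  let F := IntermediateField.adjoin L S
  obtain ⟨T₀, hT₀⟩ := (AlgebraicIndependent.matroid F Ω).exists_isBasis X
  have hT₀i : AlgebraicIndepOn F id T₀ := hT₀.indep
  obtain ⟨T, hTT, hT⟩ := exists_isTranscendenceBasis_superset hT₀i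
  let P := MvPolynomial T Ω
  let Ω' := AlgebraicClosure (FractionRing P)
  have hinjP : Function.Injective (algebraMap P Ω') := by
    rw [IsScalarTower.algebraMap_eq P (FractionRing P) Ω']
    exact (algebraMap (FractionRing P) Ω').injective.comp (IsFractionRing.injective P _)
  have hindΩ : AlgebraicIndependent Ω (fun j : T => algebraMap P Ω' (MvPolynomial.X j)) :=
    (MvPolynomial.algebraicIndependent_X T Ω).map' (f := IsScalarTower.toAlgHom Ω P Ω') hinjP
  have hindF : AlgebraicIndependent F (fun j : T => algebraMap P Ω' (MvPolynomial.X j)) :=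
    hindΩ.restrictScalars (algebraMap F Ω).injective
  obtain ⟨σ, hσT⟩ := exists_extend_transcendenceBasis hT hindF
  have hσF : ∀ x : F, σ x = algebraMap F Ω' x := by
    intro x
    exact σ.commutes x
  let i : Ω →ₐ[L] Ω' := IsScalarTower.toAlgHom L Ω Ω'
  let σ' : Ω →ₐ[L] Ω' := σ.restrictScalars L
  refine ⟨Ω', inferInstance, inferInstance, i, σ', ?_, ?_⟩
  · intro s hs
    have := hσF ⟨s, IntermediateField.subset_adjoin L S hs⟩
    exact this.symm
  · obtain ⟨B, hB⟩ := (AlgebraicIndependent.matroid L Ω).exists_isBasis X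
    have hBi : AlgebraicIndependent L ((↑) : B → Ω) := hB.indep
    have hTi : AlgebraicIndependent Ω (fun j : T₀ => σ j) := by
      have := hindΩ.comp (fun j : T₀ => (⟨j, hTT j.2⟩ : T)) (by
        intro a b h; simpa [Subtype.ext_iff] using h)
      convert this using 1
      funext j
      exact hσT ⟨j, hTT j.2⟩
    have hsum := hBi.sumElim_comp hTi
    have hI : (AlgebraicIndependent.matroid L Ω').Indep _ := hsum.to_subtype_range
    have hle := hI.encard_le_eRk_of_subset (X := i '' X ∪ σ' '' X) (by
      rintro _ ⟨a | b, rfl⟩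
      · exact Or.inr ⟨a, hT₀.subset a.2, rfl⟩
      · exact Or.inl ⟨b, hB.subset b.2, rfl⟩)
    have hc : (Set.range (Sum.elim (fun j : T₀ => σ j)
        (algebraMap Ω Ω' ∘ ((↑) : B → Ω)))).encard = T₀.encard + B.encard := by
      rw [Set.encard, ENat.card_congr (Equiv.ofInjective _ hsum.injective).symm, ENat.card_sum]; rfl
    have h1 : trRk L X = B.encard := hB.encard_eq_eRk.symm
    have h2 : trRk F X = T₀.encard := hT₀.encard_eq_eRk.symm
    have h3 := trRk_le_add_adjoin (k := L) S X
    calc trRk L X + trRk L X ≤ (trRk L S + trRk F X) + trRk L X := by gcongr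
      _ = trRk L S + (T₀.encard + B.encard) := by rw [h2, h1, add_assoc]
      _ ≤ _ := by rw [← hc]; exact add_le_add_right hle _

end

/-! ### Points of words and the Cauchy–Schwarz inequality -/

section

open Cardinal

section words

variable {K L ι : Type} [Field K] [Field L] [Algebra K L] {n : ℕ}
  {A : ι → Type} [∀ i, CommRing (A i)] [∀ i, Algebra K (A i)]

/-- The sign of a letter as an integer: `true` is `1` and `false` is `-1`. -/
def wordSign (b : Bool) : ℤ := bif b then 1 else -1

/-- The letter with the same index and the opposite sign. -/
def flipLetter (l : ι × Bool) : ι × Bool := (l.1, !l.2)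

/-- `Attains K L φ w k` says that the word `w` has a point of rank at least `k` in a fibre over a
rational point: ring homomorphisms `x j` from the coordinate rings `A (w j).1` to an extension
field `Ω` of `L`, compatible with `K → L`, such that the signed sum of the `φ (x j)` is a vector `v`
with coordinates in `L`, and whose values generate a field of transcendence degree at least `k` over
`L`. In a letter `(i, b)`, the index `i` selects the map `φ i` and `b` is the sign,
`true` for `+`. -/
def Attains (K L : Type) {ι : Type} [Field K] [Field L] [Algebra K L] {n : ℕ}
    {A : ι → Type} [∀ i, CommRing (A i)] [∀ i, Algebra K (A i)]
    (φ : ∀ i, Fin n → A i) {J : Type} [Fintype J] (w : J → ι × Bool) (k : ℕ∞) : Prop :=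
  ∃ (Ω : Type) (_ : Field Ω) (_ : Algebra L Ω) (x : ∀ j, A (w j).1 →+* Ω) (v : Fin n → L),
    (∀ j a, x j (algebraMap K _ a) = algebraMap L Ω (algebraMap K L a)) ∧
    (∀ c, ∑ j, wordSign (w j).2 • x j (φ _ c) = algebraMap L Ω (v c)) ∧
    k ≤ trRk L (⋃ j, Set.range (x j))

variable {φ : ∀ i, Fin n → A i}

lemma Attains.reindex {J J' : Type} [Fintype J] [Fintype J'] {w : J → ι × Bool} {k : ℕ∞}
    (h : Attains K L φ w k) (e : J' ≃ J) : Attains K L φ (w ∘ e) k := by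
  obtain ⟨Ω, _, _, x, v, h1, h2, h3⟩ := h
  refine ⟨Ω, inferInstance, inferInstance, fun j => x (e j), v, fun j => h1 _, fun c => ?_, ?_⟩
  · rw [← h2 c]
    exact Equiv.sum_comp e (fun j => wordSign (w j).2 • x j (φ _ c))
  · refine h3.trans (trRk_mono ?_)
    have hx : ∀ j j', j' = j → Set.range (x j) ⊆ Set.range (x j') := by
      rintro j _ rfl
      exact subset_rfl
    exact Set.iUnion_subset fun j => Set.subset_iUnion_of_subset (e.symm j)
      (hx _ _ (e.apply_symm_apply j))

lemma Attains.le_sum {J : Type} [Fintype J] {w : J → ι × Bool} {k : ℕ∞}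
    (h : Attains K L φ w k) :
    k ≤ ∑ j, Cardinal.toENat (Algebra.trdeg K (A (w j).1)) := by
  obtain ⟨Ω, _, _, x, v, h1, h2, h3⟩ := h
  refine h3.trans ((trRk_iUnion_le _).trans (Finset.sum_le_sum fun j _ => ?_))
  let : Algebra K Ω := ((algebraMap L Ω).comp (algebraMap K L)).toAlgebra
  have : IsScalarTower K L Ω := IsScalarTower.of_algebraMap_eq' rfl
  let f : A (w j).1 →ₐ[K] Ω := { x j with commutes' := h1 j }
  exact trRk_range_le (k := L) f

lemma sum_mem_trClosure {L Ω J : Type} [Field L] [Field Ω] [Algebra L Ω] [Fintype J]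
    (X : Set Ω) (z : J → ℤ) (y : J → Ω) (hy : ∀ j, y j ∈ X) :
    ∑ j, z j • y j ∈ (AlgebraicIndependent.matroid L Ω).closure X := by
  apply adjoin_subset_trClosure
  exact sum_mem fun j _ => zsmul_mem (IntermediateField.subset_adjoin _ _ (hy j)) _

/-- Doubling a partial word `u`: from a point of `u` whose signed sum lies in `L(S)`, two copies of
it independent over `L(S)` form a point of `u` followed by `u` with reversed signs, in the fibre over
`0`. -/
lemma Attains.double {Ω : Type} [Field Ω] [Algebra L Ω] {J : Type} [Fintype J]
    {u : J → ι × Bool} (x : ∀ j, A (u j).1 →+* Ω)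
    (h1 : ∀ j a, x j (algebraMap K _ a) = algebraMap L Ω (algebraMap K L a))
    (S : Set Ω) (hS : ∀ c, ∑ j, wordSign (u j).2 • x j (φ _ c) ∈ IntermediateField.adjoin L S) :
    ∃ k₁, Attains K L φ (Sum.elim u (flipLetter ∘ u)) k₁ ∧
      trRk L (⋃ j, Set.range (x j)) + trRk L (⋃ j, Set.range (x j)) ≤ trRk L S + k₁ := by
  obtain ⟨Ω', _, _, i, σ, hS', hr⟩ := exists_independent_copy (L := L) S (⋃ j, Set.range (x j))
  refine ⟨_, ⟨Ω', inferInstance, inferInstance,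
    fun j => match j with
      | .inl j => (i : Ω →+* Ω').comp (x j)
      | .inr j => (σ : Ω →+* Ω').comp (x j), 0, ?_, ?_, le_rfl⟩, hr.trans ?_⟩
  · rintro (j | j) a
    · change i (x j (algebraMap K _ a)) = _
      rw [h1, i.commutes]
    · change σ (x j (algebraMap K _ a)) = _
      rw [h1, σ.commutes]
  · intro c
    have hm : ∀ y ∈ IntermediateField.adjoin L S, i y = σ y := by
      intro y hy
      have hle : IntermediateField.adjoin L S ≤
          (Subalgebra.toIntermediateField (AlgHom.equalizer i σ) (by
            intro y hy
            rw [AlgHom.mem_equalizer] at hy ⊢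
            rw [map_inv₀, map_inv₀, hy]) : IntermediateField L Ω) := by
        rw [IntermediateField.adjoin_le_iff]
        intro s hs
        exact hS' s hs
      exact hle hy
    have h := hm _ (hS c)
    simp only [map_sum, map_zsmul] at h
    simp only [Fintype.sum_sum_type, Pi.zero_apply, map_zero]
    have : ∀ b, wordSign (!b) = - wordSign b := by intro b; cases b <;> rfl
    change ∑ j, wordSign (u j).2 • i (x j (φ _ c)) +
      ∑ j, wordSign (!(u j).2) • σ (x j (φ _ c)) = 0
    rw [h]
    simp [this]
  · gcongr
    apply trRk_mono
    rintro _ (⟨y, hy, rfl⟩ | ⟨y, hy, rfl⟩)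
    · obtain ⟨j, a, rfl⟩ := Set.mem_iUnion.1 hy
      exact Set.mem_iUnion.2 ⟨.inl j, a, rfl⟩
    · obtain ⟨j, a, rfl⟩ := Set.mem_iUnion.1 hy
      exact Set.mem_iUnion.2 ⟨.inr j, a, rfl⟩

lemma trRk_range_fin_le {L Ω : Type} [Field L] [Field Ω] [Algebra L Ω] {n : ℕ} (s : Fin n → Ω) :
    trRk L (Set.range s) ≤ n := by
  refine (Matroid.eRk_le_encard _ _).trans ?_
  rw [← Set.image_univ]
  refine (Set.encard_image_le _ _).trans ?_
  simp [Set.encard_univ]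

/-- The arithmetic of `Attains.cauchySchwarz`, where the finite rank `s` of the partial sum is
cancelled in `ℕ∞`. -/
lemma two_halves {a b s x y : ℕ∞} {n : ℕ} (hs : s ≤ n) (h : s + a ≤ x + y)
    (hb : (x + y) + (x + y) ≤ s + s + b) : a + a ≤ b := by
  have hs' : s ≠ ⊤ := ne_top_of_le_ne_top (ENat.natCast_ne_top n) hs
  have hss : s + s ≠ ⊤ := by simp [hs']
  have : s + s + (a + a) ≤ s + s + b := by
    calc s + s + (a + a) = (s + a) + (s + a) := by abel
      _ ≤ (x + y) + (x + y) := add_le_add h h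
      _ ≤ _ := hb
  exact (ENat.add_le_add_iff_left hss).1 this

/-- Cauchy–Schwarz for words: a point of rank `k` of the concatenation of `u` and `u'` gives points of
the words obtained by doubling `u` and `u'`, with ranks averaging at least `k`. -/
lemma Attains.cauchySchwarz {J J' : Type} [Fintype J] [Fintype J']
    {u : J → ι × Bool} {u' : J' → ι × Bool} {k : ℕ∞} (h : Attains K L φ (Sum.elim u u') k) :
    ∃ k₁ k₂, Attains K L φ (Sum.elim u (flipLetter ∘ u)) k₁ ∧
      Attains K L φ (Sum.elim u' (flipLetter ∘ u')) k₂ ∧ k + k ≤ k₁ + k₂ := by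
  obtain ⟨Ω, _, _, x, v, h1, h2, h3⟩ := h
  let x₁ : ∀ j, A (u j).1 →+* Ω := fun j => x (.inl j)
  let x₂ : ∀ j, A (u' j).1 →+* Ω := fun j => x (.inr j)
  let s : Fin n → Ω := fun c => ∑ j, wordSign (u j).2 • x₁ j (φ _ c)
  have hs2 : ∀ c, ∑ j, wordSign (u' j).2 • x₂ j (φ _ c) = algebraMap L Ω (v c) - s c := by
    intro c
    have := h2 c
    rw [Fintype.sum_sum_type] at this
    rw [← this]
    exact (add_sub_cancel_left _ _).symm
  have hsm : ∀ c, s c ∈ IntermediateField.adjoin L (Set.range s) := fun c =>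
    IntermediateField.subset_adjoin _ _ ⟨c, rfl⟩
  obtain ⟨k₁, ha₁, hk₁⟩ := Attains.double x₁ (fun j a => h1 (.inl j) a) (Set.range s)
    (φ := φ) hsm
  obtain ⟨k₂, ha₂, hk₂⟩ := Attains.double x₂ (fun j a => h1 (.inr j) a) (Set.range s)
    (φ := φ) (fun c => by
      rw [hs2]; exact sub_mem (IntermediateField.algebraMap_mem _ _) (hsm c))
  refine ⟨k₁, k₂, ha₁, ha₂, ?_⟩
  have hsub := trRk_union_add_le (k := L) (S := Set.range s) (X := ⋃ j, Set.range (x₁ j))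
    (Y := ⋃ j, Set.range (x₂ j))
    (by
      rintro _ ⟨c, rfl⟩
      exact sum_mem_trClosure _ _ _ fun j => Set.mem_iUnion.2 ⟨j, _, rfl⟩)
    (by
      rintro _ ⟨c, rfl⟩
      apply adjoin_subset_trClosure
      have : s c = algebraMap L Ω (v c) - ∑ j, wordSign (u' j).2 • x₂ j (φ _ c) := by
        rw [hs2]; ring
      rw [this]
      refine sub_mem (IntermediateField.algebraMap_mem _ _) (sum_mem fun j _ => zsmul_mem ?_ _)
      exact IntermediateField.subset_adjoin _ _ (Set.mem_iUnion.2 ⟨j, _, rfl⟩))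
  have hk : k ≤ trRk L ((⋃ j, Set.range (x₁ j)) ∪ ⋃ j, Set.range (x₂ j)) := by
    refine h3.trans (trRk_mono ?_)
    rw [Set.iUnion_sum]
    exact subset_rfl
  refine (add_le_add hk hk).trans (two_halves (trRk_range_fin_le (L := L) s) hsub ?_)
  calc _ = (trRk L (⋃ j, Set.range (x₁ j)) + trRk L (⋃ j, Set.range (x₁ j))) +
        (trRk L (⋃ j, Set.range (x₂ j)) + trRk L (⋃ j, Set.range (x₂ j))) := by abel
    _ ≤ _ := add_le_add hk₁ hk₂
    _ = _ := by abel

/-- Every point `x` of the fibres of the `t`-fold self-convolution of `f` over a point `s` rational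
over an extension field `κ` of `K` has transcendence rank at most `t * d - n` over `κ`, written
without subtraction. For `d` the dimension of the source, this says that the fibres have at most the
expected dimension. -/
def FibreBound (K : Type) [Field K] {n : ℕ} {B : Type} [CommRing B] [Algebra K B]
    (f : Fin n → B) (t : ℕ) (d : ℕ∞) : Prop :=
  ∀ (κ Ω : Type) [Field κ] [Field Ω] [Algebra K κ] [Algebra κ Ω] (x : Fin t → B →+* Ω)
    (s : Fin n → κ), (∀ j a, x j (algebraMap K _ a) = algebraMap κ Ω (algebraMap K κ a)) →
    (∀ c, ∑ j, x j (f c) = algebraMap κ Ω (s c)) →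
    trRk κ (⋃ j, Set.range (x j)) + n ≤ t * d

/-- The bound for the word with `t` letters `(i, +)` and `t` letters `(i, -)`: each half is a point
of a fibre of the `t`-fold self-convolution over the field generated by the partial sum `s`, and the
two halves overlap at least in `s`. -/
lemma Attains.const_bound {t : ℕ} {i : ι} {d : ℕ} (hfb : FibreBound K (φ i) t d) {k : ℕ∞}
    (h : Attains K L φ (Sum.elim (fun _ : Fin t => (i, true)) (fun _ : Fin t => (i, false))) k) :
    k + n ≤ 2 * t * d := by
  obtain ⟨Ω, _, _, x, v, h1, h2, h3⟩ := h
  let x₁ : Fin t → A i →+* Ω := fun j => x (.inl j)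
  let x₂ : Fin t → A i →+* Ω := fun j => x (.inr j)
  let s : Fin n → Ω := fun c => ∑ j, x₁ j (φ _ c)
  have hs2 : ∀ c, ∑ j, x₂ j (φ _ c) = s c - algebraMap L Ω (v c) := by
    intro c
    have := h2 c
    rw [Fintype.sum_sum_type] at this
    have this' : ∑ j, (1 : ℤ) • x₁ j (φ i c) + ∑ j, (-1 : ℤ) • x₂ j (φ i c) =
      algebraMap L Ω (v c) := this
    simp only [one_smul, neg_smul, Finset.sum_neg_distrib] at this'
    rw [← this']
    ring
  have hsm : ∀ c, s c ∈ IntermediateField.adjoin L (Set.range s) := fun c =>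
    IntermediateField.subset_adjoin _ _ ⟨c, rfl⟩
  have hsub := trRk_union_add_le (k := L) (S := Set.range s) (X := ⋃ j, Set.range (x₁ j))
    (Y := ⋃ j, Set.range (x₂ j))
    (by
      rintro _ ⟨c, rfl⟩
      apply adjoin_subset_trClosure
      exact sum_mem fun j _ => IntermediateField.subset_adjoin _ _ (Set.mem_iUnion.2 ⟨j, _, rfl⟩))
    (by
      rintro _ ⟨c, rfl⟩
      apply adjoin_subset_trClosure
      have : s c = algebraMap L Ω (v c) + ∑ j, x₂ j (φ _ c) := by
        rw [hs2]; ring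
      rw [this]
      refine add_mem (IntermediateField.algebraMap_mem _ _) (sum_mem fun j _ => ?_)
      exact IntermediateField.subset_adjoin _ _ (Set.mem_iUnion.2 ⟨j, _, rfl⟩))
  have hk : k ≤ trRk L ((⋃ j, Set.range (x₁ j)) ∪ ⋃ j, Set.range (x₂ j)) := by
    refine h3.trans (trRk_mono ?_)
    rw [Set.iUnion_sum]
    exact subset_rfl
  let F := IntermediateField.adjoin L (Set.range s)
  let : Algebra K F := ((algebraMap L F).comp (algebraMap K L)).toAlgebra
  have b₁ := hfb F Ω x₁ (fun c => ⟨s c, hsm c⟩) (fun j a => h1 (.inl j) a) (fun c => rfl)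
  have b₂ := hfb F Ω x₂ (fun c => ⟨s c, hsm c⟩ - algebraMap L F (v c))
    (fun j a => h1 (.inr j) a) (fun c => by rw [hs2]; rfl)
  have c₁ := trRk_le_add_adjoin (k := L) (Set.range s) (⋃ j, Set.range (x₁ j))
  have c₂ := trRk_le_add_adjoin (k := L) (Set.range s) (⋃ j, Set.range (x₂ j))
  have hr := trRk_range_fin_le (L := L) s
  change trRk F _ + _ ≤ _ at b₁ b₂
  change _ ≤ _ + trRk F _ at c₁ c₂
  generalize trRk L (Set.range s) = r at *
  generalize trRk F (⋃ j, Set.range (x₁ j)) = r₁ at *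
  generalize trRk F (⋃ j, Set.range (x₂ j)) = r₂ at *
  generalize trRk L (⋃ j, Set.range (x₁ j)) = q₁ at *
  generalize trRk L (⋃ j, Set.range (x₂ j)) = q₂ at *
  generalize trRk L ((⋃ j, Set.range (x₁ j)) ∪ ⋃ j, Set.range (x₂ j)) = q at *
  -- With `r` the rank of the partial sum, submodularity and the two fibre bounds give
  -- `r + q + 2n ≤ 2r + 2td`, and `r ≤ n`.
  have e : r + ((n : ℕ∞) + (q + n)) ≤ r + (n + 2 * t * d) := by
    calc r + ((n : ℕ∞) + (q + n)) = (r + q) + n + n := by abel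
      _ ≤ ((r + r₁) + (r + r₂)) + n + n := by
          exact add_le_add_left (add_le_add_left (hsub.trans (add_le_add c₁ c₂)) _) _
      _ = (r + r) + ((r₁ + n) + (r₂ + n)) := by abel
      _ ≤ (r + n) + (t * d + t * d) := by gcongr
      _ = _ := by ring
  have hr' : r ≠ ⊤ := ne_top_of_le_ne_top (ENat.natCast_ne_top n) hr
  have e2 := (ENat.add_le_add_iff_left hr').1 e
  have e3 := (ENat.add_le_add_iff_left (ENat.natCast_ne_top n)).1 e2
  exact (add_le_add_left hk _).trans e3

end words

end

/-! ### The extremal argument -/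

section

/-- Any `t` of the `2t` positions can be moved to the first half by a permutation. -/
lemma exists_equiv_half {t : ℕ} (T : Finset (Fin t ⊕ Fin t)) (hT : T.card = t) :
    ∃ e : Fin t ⊕ Fin t ≃ Fin t ⊕ Fin t,
      ∀ p : Fin t ⊕ Fin t → Prop, ∀ [DecidablePred p],
        (Finset.univ.filter fun j : Fin t => p (e (.inl j))).card = (T.filter p).card := by
  classical
  have h1 : Fintype.card {j // j ∈ T} = Fintype.card (Fin t) := by simp [hT]
  have h2 : Fintype.card {j // j ∉ T} = Fintype.card (Fin t) := by
    rw [Fintype.card_subtype_compl]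
    simp [hT]
  let e₁ : Fin t ≃ {j // j ∈ T} := (Fintype.equivOfCardEq h1).symm
  let e₂ : Fin t ≃ {j // j ∉ T} := (Fintype.equivOfCardEq h2).symm
  refine ⟨(Equiv.sumCongr e₁ e₂).trans (Equiv.sumCompl (· ∈ T)), fun p _ => ?_⟩
  refine Finset.card_bij (fun j _ => (e₁ j : Fin t ⊕ Fin t)) ?_ ?_ ?_
  · intro j hj
    simp only [Finset.mem_filter, Finset.mem_univ, true_and] at hj ⊢
    exact ⟨(e₁ j).2, hj⟩
  · intro a _ b _ h
    exact e₁.injective (Subtype.ext h)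
  · intro b hb
    rw [Finset.mem_filter] at hb
    refine ⟨e₁.symm ⟨b, hb.1⟩, ?_, by simp⟩
    simp only [Finset.mem_filter, Finset.mem_univ, true_and]
    simpa using hb.2

section extremal

variable {K L ι : Type} [Field K] [Field L] [Algebra K L] {n : ℕ}
  {A : ι → Type} [∀ i, CommRing (A i)] [∀ i, Algebra K (A i)]
  {φ : ∀ i, Fin n → A i}

/-- `z` is the excess of some lower bound `r` on the rank of a point of the word `w`: the difference
between `r` and the sum of the dimensions `d i` of the letters of `w`. -/
def HasExcess (K L : Type) {ι : Type} [Field K] [Field L] [Algebra K L] {n : ℕ}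
    {A : ι → Type} [∀ i, CommRing (A i)] [∀ i, Algebra K (A i)]
    (φ : ∀ i, Fin n → A i) (d : ι → ℕ) {J : Type} [Fintype J] (w : J → ι × Bool) (z : ℤ) : Prop :=
  ∃ r : ℕ, Attains K L φ w r ∧ z = r - ∑ j, (d (w j).1 : ℤ)

lemma HasExcess.reindex {d : ι → ℕ} {J J' : Type} [Fintype J] [Fintype J'] {w : J → ι × Bool}
    {z : ℤ} (h : HasExcess K L φ d w z) (e : J' ≃ J) : HasExcess K L φ d (w ∘ e) z := by
  obtain ⟨r, h, rfl⟩ := h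
  refine ⟨r, h.reindex e, ?_⟩
  rw [← Equiv.sum_comp e]
  rfl

lemma Attains.exists_nat {d : ι → ℕ}
    (hd : ∀ i, Cardinal.toENat (Algebra.trdeg K (A i)) = d i)
    {J : Type} [Fintype J] {w : J → ι × Bool} {k : ℕ∞}
    (h : Attains K L φ w k) : ∃ r : ℕ, k = r ∧ r ≤ ∑ j, d (w j).1 := by
  have := h.le_sum
  simp only [hd] at this
  rw [← Nat.cast_sum] at this
  obtain ⟨r, rfl⟩ := ENat.ne_top_iff_exists.1 (ne_top_of_le_ne_top (ENat.natCast_ne_top _) this)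
  exact ⟨r, rfl, by exact_mod_cast this⟩

lemma HasExcess.nonpos {d : ι → ℕ}
    (hd : ∀ i, Cardinal.toENat (Algebra.trdeg K (A i)) = d i)
    {J : Type} [Fintype J] {w : J → ι × Bool}
    {z : ℤ} (h : HasExcess K L φ d w z) : z ≤ 0 := by
  obtain ⟨r, h, rfl⟩ := h
  obtain ⟨r', h1, h2⟩ := h.exists_nat hd
  have : r = r' := by exact_mod_cast h1
  subst this
  rw [sub_nonpos]
  exact_mod_cast h2

/-- Doubling one half of a word of maximal excess again gives a word of maximal excess, because the
excesses of the two doubled halves average at least the excess of the word. -/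
lemma HasExcess.double_of_max {d : ι → ℕ}
    (hd : ∀ i, Cardinal.toENat (Algebra.trdeg K (A i)) = d i)
    {t : ℕ} {M : ℤ}
    (hM : ∀ (w : Fin t ⊕ Fin t → ι × Bool) z, HasExcess K L φ d w z → z ≤ M)
    {w : Fin t ⊕ Fin t → ι × Bool} (h : HasExcess K L φ d w M)
    (e : Fin t ⊕ Fin t ≃ Fin t ⊕ Fin t) :
    HasExcess K L φ d (Sum.elim (fun j => w (e (.inl j)))
      (flipLetter ∘ fun j => w (e (.inl j)))) M := by
  obtain ⟨r, hr, hz⟩ := h.reindex e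
  have hr' : Attains K L φ
      (Sum.elim (fun j => w (e (.inl j))) (fun j => w (e (.inr j)))) r := by
    convert hr using 1
    funext j
    rcases j with j | j <;> rfl
  obtain ⟨k₁, k₂, h₁, h₂, hk⟩ := hr'.cauchySchwarz
  obtain ⟨r₁, rfl, -⟩ := h₁.exists_nat hd
  obtain ⟨r₂, rfl, -⟩ := h₂.exists_nat hd
  have hk' : r + r ≤ r₁ + r₂ := by exact_mod_cast hk
  have m₁ := hM _ _ ⟨r₁, h₁, rfl⟩
  have m₂ := hM _ _ ⟨r₂, h₂, rfl⟩
  refine ⟨r₁, h₁, ?_⟩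
  simp only [Fintype.sum_sum_type, Sum.elim_inl, Sum.elim_inr, Function.comp_apply,
    flipLetter] at m₁ m₂ hz ⊢
  omega

/-- If the `t`-fold self-convolutions satisfy the fibre bound, then points of any word of length `2t`
have rank at most the sum of the dimensions minus `n`. -/
theorem Attains.target_bound {d : ι → ℕ}
    (hd : ∀ i, Cardinal.toENat (Algebra.trdeg K (A i)) = d i)
    {t : ℕ} (ht : 1 ≤ t)
    (hfb : ∀ i, FibreBound K (φ i) t (d i))
    {w : Fin t ⊕ Fin t → ι × Bool} {r : ℕ} (hw : Attains K L φ w r) :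
    r + n ≤ ∑ j, d (w j).1 := by
  classical
  by_contra! hcon
  -- `M` is the maximal excess over all words of length `2t`.
  obtain ⟨M, ⟨w₀, hw₀⟩, hM⟩ := Int.exists_greatest_of_bdd
    (P := fun z => ∃ w : Fin t ⊕ Fin t → ι × Bool, HasExcess K L φ d w z)
    ⟨0, fun z ⟨w, h⟩ => h.nonpos hd⟩ ⟨_, w, r, hw, rfl⟩
  have hMn : -(n : ℤ) < M := by
    have h0 := hM _ ⟨w, r, hw, rfl⟩
    have h1 : ((∑ j, d (w j).1 : ℕ) : ℤ) < r + n := by exact_mod_cast hcon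
    push_cast at h1
    omega
  replace hM : ∀ (w : Fin t ⊕ Fin t → ι × Bool) z, HasExcess K L φ d w z → z ≤ M :=
    fun w z h => hM z ⟨w, h⟩
  let cnt (w : Fin t ⊕ Fin t → ι × Bool) (i : ι) : ℕ :=
    (Finset.univ.filter fun j => (w j).1 = i).card
  have hcnt : ∀ w i, cnt w i ≤ 2 * t := by
    intro w i
    refine (Finset.card_le_univ _).trans ?_
    simp [two_mul]
  -- `m` is the maximal multiplicity of an index in a word of excess `M`.
  obtain ⟨m, ⟨w₁, i, hw₁, hm⟩, hmax⟩ := Int.exists_greatest_of_bdd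
    (P := fun z : ℤ => ∃ (w : Fin t ⊕ Fin t → ι × Bool) (i : ι),
      HasExcess K L φ d w M ∧ (cnt w i : ℤ) = z)
    ⟨2 * t, by rintro z ⟨w, i, -, rfl⟩; exact_mod_cast hcnt w i⟩
    ⟨_, w₀, (w₀ (.inl ⟨0, ht⟩)).1, hw₀, rfl⟩
  have hmpos : 1 ≤ m := by
    have h1 := hmax _ ⟨w₀, (w₀ (.inl ⟨0, ht⟩)).1, hw₀, rfl⟩
    have h2 : 0 < cnt w₀ (w₀ (.inl ⟨0, ht⟩)).1 :=
      Finset.card_pos.2 ⟨.inl ⟨0, ht⟩, by simp⟩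
    omega
  -- Doubling a half `T` with `min t m` occurrences of `i` gives multiplicity `2 * min t m`, which is
  -- at most `m` only if `m = 2t`.
  have hall : ∀ j, (w₁ j).1 = i := by
    let P := Finset.univ.filter fun j => (w₁ j).1 = i
    obtain ⟨T, hT, hTP⟩ : ∃ T : Finset (Fin t ⊕ Fin t), T.card = t ∧
        min t P.card ≤ (T.filter fun j => (w₁ j).1 = i).card := by
      rcases le_total t P.card with h | h
      · obtain ⟨T, hTP, hT⟩ := Finset.exists_subset_card_eq h
        refine ⟨T, hT, ?_⟩
        rw [Finset.filter_true_of_mem (fun j hj => (Finset.mem_filter.1 (hTP hj)).2), hT]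
        exact min_le_left _ _
      · obtain ⟨T, hPT, -, hT⟩ := Finset.exists_subsuperset_card_eq (Finset.subset_univ P) h
          (by simp)
        refine ⟨T, hT, (min_le_right _ _).trans (Finset.card_le_card ?_)⟩
        intro j hj
        exact Finset.mem_filter.2 ⟨hPT hj, (Finset.mem_filter.1 hj).2⟩
    obtain ⟨e, he⟩ := exists_equiv_half T hT
    have h1 := HasExcess.double_of_max hd hM hw₁ e
    have h2 := hmax _ ⟨_, i, h1, rfl⟩
    have h3 : cnt (Sum.elim (fun j => w₁ (e (.inl j)))
        (flipLetter ∘ fun j => w₁ (e (.inl j)))) i =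
        2 * (T.filter fun j => (w₁ j).1 = i).card := by
      rw [← he]
      simp only [cnt]
      rw [Finset.card_filter (s := (Finset.univ : Finset (Fin t ⊕ Fin t))), Finset.card_filter (s := (Finset.univ : Finset (Fin t))), Fintype.sum_sum_type]
      simp only [Sum.elim_inl, Sum.elim_inr, Function.comp_apply, flipLetter, two_mul]
      congr!
    have h4 : (cnt w₁ i : ℤ) = P.card := rfl
    have h5 : P.card = 2 * t := by
      have := hcnt w₁ i
      rcases le_total t P.card with h | h
      · rw [min_eq_left h] at hTP; omega
      · rw [min_eq_right h] at hTP; omega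
    have h6 : P = Finset.univ := by
      rw [← Finset.card_eq_iff_eq_univ, h5]
      simp [two_mul]
    intro j
    exact (Finset.mem_filter.1 (h6 ▸ Finset.mem_univ j : j ∈ P)).2
  obtain ⟨r₁, hr₁, hz⟩ := HasExcess.double_of_max hd hM hw₁ (Equiv.refl _)
  -- After one more doubling, position `j` carries opposite signs in the two halves; the involution `f`
  -- exchanges the two where needed, so that all positive letters come first.
  let b : Fin t → Bool := fun j => (w₁ (.inl j)).2
  let f : Fin t ⊕ Fin t → Fin t ⊕ Fin t :=
    Sum.elim (fun j => bif b j then .inl j else .inr j) (fun j => bif b j then .inr j else .inl j)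
  have hf : Function.Involutive f := by
    rintro (j | j) <;> cases h : b j <;> simp [f, h]
  have hr₂ := hr₁.reindex (hf.toPerm f)
  have hwd : (Sum.elim (fun j => w₁ ((Equiv.refl _) (.inl j)))
      (flipLetter ∘ fun j => w₁ ((Equiv.refl _) (.inl j)))) ∘ (hf.toPerm f) =
      Sum.elim (fun _ : Fin t => (i, true)) (fun _ : Fin t => (i, false)) := by
    funext j
    rcases j with j | j
    · cases h : b j <;> simp [f, h, flipLetter, Prod.ext_iff, hall] <;> simpa [b] using h
    · cases h : b j <;> simp [f, h, flipLetter, Prod.ext_iff, hall] <;> simpa [b] using h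
  rw [hwd] at hr₂
  have hfin : r₁ + n ≤ 2 * t * d i := by exact_mod_cast hr₂.const_bound (hfb i)
  simp only [Fintype.sum_sum_type, Sum.elim_inl, Sum.elim_inr, Function.comp_apply,
    flipLetter, Equiv.refl_apply, hall, Finset.sum_const, Finset.card_univ, Fintype.card_fin,
    nsmul_eq_mul] at hz
  have : (r₁ : ℤ) + n ≤ 2 * t * d i := by exact_mod_cast hfin
  linarith

end extremal

end

/-! ### Points of larger rank off a regular sequence -/

section

open RingTheory.Sequence Cardinal

/-- If a regular sequence of length `n` vanishes on an irreducible closed subset (given by the domain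
quotient `D`), then some irreducible closed subset of `Spec C` has dimension larger by at least `n`:
a regular element avoids the minimal primes, so removing one equation raises the dimension. -/
theorem exists_prime_trdeg_of_isWeaklyRegular {κ : Type} [Field κ] (n : ℕ) :
    ∀ (C : Type) [CommRing C] [Algebra κ C] [Algebra.FiniteType κ C] (rs : List C)
      (_ : rs.length = n) (_ : IsWeaklyRegular C rs)
      (D : Type) [CommRing D] [IsDomain D] [Algebra κ D] (q : C →ₐ[κ] D)
      (_ : Function.Surjective q) (_ : ∀ r ∈ rs, q r = 0),
      ∃ P : Ideal C, P.IsPrime ∧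
        Algebra.trdeg κ D + n ≤ Algebra.trdeg κ (C ⧸ P) := by
  induction n with
  | zero =>
    intro C _ _ _ rs _ _ D _ _ _ q hq _
    refine ⟨RingHom.ker q, RingHom.ker_isPrime _, ?_⟩
    simpa using trdeg_le_of_surjective (Ideal.quotientKerAlgEquivOfSurjective hq).toAlgHom
      (Ideal.quotientKerAlgEquivOfSurjective hq).surjective
  | succ n ih =>
    intro C _ _ _ rs hlen hreg D _ _ _ q hq hqr
    obtain _ | ⟨r, rs⟩ := rs
    · simp at hlen
    have hr : q r = 0 := hqr r (by simp)
    let q' : (C ⧸ Ideal.span {r}) →ₐ[κ] D := Ideal.Quotient.liftₐ _ q (by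
      intro a ha
      obtain ⟨b, rfl⟩ := Ideal.mem_span_singleton'.1 ha
      simp [hr])
    have hq'mk : ∀ a, q' (Ideal.Quotient.mk _ a) = q a := fun a => rfl
    obtain ⟨P', hP', hle⟩ := ih (C ⧸ Ideal.span {r}) (rs.map (algebraMap C _))
      (by simpa using hlen) (isWeaklyRegular_quotient_span_singleton hreg) D q'
      (fun d => by
        obtain ⟨a, rfl⟩ := hq d
        exact ⟨Ideal.Quotient.mk _ a, rfl⟩)
      (by
        intro y hy
        obtain ⟨a, ha, rfl⟩ := List.mem_map.1 hy
        exact hqr a (by simp [ha]))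
    let p : C →ₐ[κ] ((C ⧸ Ideal.span {r}) ⧸ P') :=
      (Ideal.Quotient.mkₐ κ P').comp (Ideal.Quotient.mkₐ κ (Ideal.span {r}))
    have hp : Function.Surjective p :=
      (Ideal.Quotient.mkₐ_surjective κ P').comp (Ideal.Quotient.mkₐ_surjective κ _)
    have hpr : p r = 0 := by
      have : Ideal.Quotient.mkₐ κ (Ideal.span {r}) r = 0 :=
        Ideal.Quotient.eq_zero_iff_mem.2 (Ideal.mem_span_singleton_self r)
      change Ideal.Quotient.mkₐ κ P' (Ideal.Quotient.mkₐ κ (Ideal.span {r}) r) = 0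
      rw [this, map_zero]
    have : (RingHom.ker p).IsPrime := RingHom.ker_isPrime _
    obtain ⟨P0, hP0, hP0le⟩ := Ideal.exists_minimalPrimes_le (bot_le : ⊥ ≤ RingHom.ker p)
    have hP0min : P0 ∈ minimalPrimes C := hP0
    have : P0.IsPrime := hP0.1.1
    have hrP0 : r ∉ P0 := by
      intro h
      refine Set.disjoint_left.1 (Ideal.disjoint_nonZeroDivisors_of_mem_minimalPrimes hP0min) h ?_
      have h1 := ((isWeaklyRegular_cons_iff C r rs).1 hreg).1
      rw [SetLike.mem_coe, mem_nonZeroDivisors_iff_right]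
      intro z hz
      exact h1 (by simpa [mul_comm] using hz)
    let f : (C ⧸ P0) →ₐ[κ] ((C ⧸ Ideal.span {r}) ⧸ P') :=
      Ideal.Quotient.liftₐ P0 p (fun a ha => hP0le ha)
    have hf : Function.Surjective f := fun d => by
      obtain ⟨a, rfl⟩ := hp d
      exact ⟨Ideal.Quotient.mk _ a, rfl⟩
    have hQ : RingHom.ker f ≠ ⊥ := by
      intro h
      have h1 : Ideal.Quotient.mk P0 r ∈ RingHom.ker f := hpr
      rw [h] at h1
      exact hrP0 (Ideal.Quotient.eq_zero_iff_mem.1 h1)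
    have : (RingHom.ker f).IsPrime := RingHom.ker_isPrime _
    have hfin : Algebra.trdeg κ (C ⧸ P0) < ℵ₀ := trdeg_lt_aleph0_of_finiteType
    refine ⟨P0, inferInstance, ?_⟩
    have h1 := trdeg_quotient_add_one_le hfin (RingHom.ker f) hQ
    have h2 := trdeg_le_of_surjective (Ideal.quotientKerAlgEquivOfSurjective hf).toAlgHom
      (Ideal.quotientKerAlgEquivOfSurjective hf).surjective
    calc Algebra.trdeg κ D + (n + 1 : ℕ) = (Algebra.trdeg κ D + n) + 1 := by push_cast; ring
      _ ≤ Algebra.trdeg κ ((C ⧸ Ideal.span {r}) ⧸ P') + 1 := by gcongr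
      _ ≤ _ := by gcongr
      _ ≤ _ := h1

/-- If a regular sequence vanishes at a field-valued point `q` of `C`, then `C` has a field-valued
point whose rank is larger by at least the length of the sequence. -/
theorem exists_field_trRk_of_isWeaklyRegular {κ C Ω : Type} [Field κ] [CommRing C] [Algebra κ C]
    [Algebra.FiniteType κ C] (rs : List C) (hreg : IsWeaklyRegular C rs)
    [Field Ω] [Algebra κ Ω] (q : C →ₐ[κ] Ω) (hq : ∀ r ∈ rs, q r = 0) :
    ∃ (E : Type) (_ : Field E) (_ : Algebra κ E) (p : C →ₐ[κ] E),
      trRk κ (Set.range q) + rs.length ≤ trRk κ (Set.range p) := by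
  obtain ⟨P, hP, hle⟩ := exists_prime_trdeg_of_isWeaklyRegular rs.length C rs rfl hreg q.range
    q.rangeRestrict q.rangeRestrict_surjective (fun r hr => Subtype.ext (hq r hr))
  let E := FractionRing (C ⧸ P)
  let g : (C ⧸ P) →ₐ[κ] E := IsScalarTower.toAlgHom κ (C ⧸ P) E
  have hg : Function.Injective g := IsFractionRing.injective (C ⧸ P) E
  refine ⟨E, inferInstance, inferInstance, g.comp (Ideal.Quotient.mkₐ κ P), ?_⟩
  have h1 : trRk κ (Set.range q) ≤ Cardinal.toENat (Algebra.trdeg κ q.range) := by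
    have h5 := trRk_range_le (k := κ) q.range.val
    have h6 : Set.range q.range.val = Set.range q := Subtype.range_coe
    rwa [h6] at h5
  have h2 := le_trRk_range g hg
  have h3 : Set.range (g.comp (Ideal.Quotient.mkₐ κ P)) = Set.range g := by
    rw [AlgHom.coe_comp, Set.range_comp, (Ideal.Quotient.mkₐ_surjective κ P).range_eq,
      Set.image_univ]
  rw [h3]
  refine le_trans ?_ h2
  have h4 := Cardinal.toENat.monotone' hle
  refine le_trans (add_le_add_left h1 _) ?_
  simpa using h4

end

/-! ### The coordinates of a point form a regular sequence -/

section

open RingTheory.Sequence Pointwise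

/-- The functions `X c - s c` form a regular sequence in the polynomial ring. -/
theorem isWeaklyRegular_X_sub_C {κ : Type} [Field κ] {n : ℕ} (s : Fin n → κ) :
    IsWeaklyRegular (MvPolynomial (Fin n) κ)
      (List.ofFn fun c => (MvPolynomial.X c - MvPolynomial.C (s c) : MvPolynomial (Fin n) κ)) := by
  classical
  rw [isWeaklyRegular_iff_Fin]
  rintro ⟨i, hi⟩
  simp only [List.length_ofFn] at hi
  set J : Ideal (MvPolynomial (Fin n) κ) := Ideal.ofList
    ((List.ofFn fun c => (MvPolynomial.X c - MvPolynomial.C (s c) : MvPolynomial (Fin n) κ)).take i)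
    with hJ
  -- Substituting `s c` for the first `i` variables has kernel `J`, and its image is a domain.
  set e : MvPolynomial (Fin n) κ →ₐ[κ] MvPolynomial (Fin n) κ :=
    MvPolynomial.aeval (fun c : Fin n => if c.1 < i then MvPolynomial.C (s c) else MvPolynomial.X c)
    with he
  have hmem : ∀ c : Fin n, c.1 < i →
      (MvPolynomial.X c - MvPolynomial.C (s c) : MvPolynomial (Fin n) κ) ∈ J := by
    intro c hc
    refine Ideal.subset_span ?_
    simp only [Set.mem_ofPred_eq]
    rw [List.mem_iff_getElem]
    exact ⟨c.1, by simpa using hc, by simp⟩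
  have hJe : ∀ g ∈ J, e g = 0 := by
    intro g hg
    have : J ≤ RingHom.ker e.toRingHom := by
      rw [hJ, Ideal.ofList, Ideal.span_le]
      intro r hr
      simp only [Set.mem_ofPred_eq] at hr
      rw [List.mem_iff_getElem] at hr
      obtain ⟨a, ha, rfl⟩ := hr
      simp only [List.length_take, List.length_ofFn, lt_min_iff] at ha
      simp [RingHom.mem_ker, he, ha.1]
    exact this hg
  have heJ : ∀ g, g - e g ∈ J := by
    intro g
    have h2 : (Ideal.Quotient.mkₐ κ J).comp e = Ideal.Quotient.mkₐ κ J := by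
      ext c
      simp only [AlgHom.coe_comp, Function.comp_apply, he, MvPolynomial.aeval_X]
      split_ifs with hc
      · exact (Ideal.Quotient.eq.2 (hmem c hc)).symm
      · rfl
    have := DFunLike.congr_fun h2 g
    exact Ideal.Quotient.eq.1 this.symm
  have key : ∀ g : MvPolynomial (Fin n) κ,
      (MvPolynomial.X ⟨i, hi⟩ - MvPolynomial.C (s ⟨i, hi⟩)) * g ∈ J → g ∈ J := by
    intro g hg
    have h1 := hJe _ hg
    rw [map_mul] at h1
    have h3 : e (MvPolynomial.X ⟨i, hi⟩ - MvPolynomial.C (s ⟨i, hi⟩)) ≠ 0 := by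
      have : e (MvPolynomial.X ⟨i, hi⟩ - MvPolynomial.C (s ⟨i, hi⟩)) =
        MvPolynomial.X ⟨i, hi⟩ - MvPolynomial.C (s ⟨i, hi⟩) := by
        simp [he]
      rw [this]
      intro h0
      have := congrArg (MvPolynomial.eval (fun c => s c + 1)) h0
      simp at this
    have h4 := (mul_eq_zero.1 h1).resolve_left h3
    simpa [h4] using heJ g
  have hJ2 : (J • ⊤ : Submodule (MvPolynomial (Fin n) κ) (MvPolynomial (Fin n) κ)) = J := by
    simp
  intro x y hxy
  obtain ⟨x, rfl⟩ := Submodule.Quotient.mk_surjective _ x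
  obtain ⟨y, rfl⟩ := Submodule.Quotient.mk_surjective _ y
  have hxy : Submodule.Quotient.mk (p := J • (⊤ : Submodule (MvPolynomial (Fin n) κ) _)) ((List.ofFn fun c => (MvPolynomial.X c - MvPolynomial.C (s c) : MvPolynomial (Fin n) κ))[i]'(by simpa) • x) = Submodule.Quotient.mk ((List.ofFn fun c => (MvPolynomial.X c - MvPolynomial.C (s c) : MvPolynomial (Fin n) κ))[i]'(by simpa) • y) := hxy
  rw [Submodule.Quotient.eq, hJ2] at hxy ⊢
  apply key
  simpa [mul_sub] using hxy

end

/-! ### Fibre bounds from flatness -/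

section

open RingTheory.Sequence Cardinal TensorProduct

/-- Let `R` be flat over `Sk`, and let `rs` be a regular sequence in another `Sk`-algebra `S`. A
field-valued point of `S ⊗ R`, given by the pair `(σ, h)`, at which `rs` vanishes can be replaced by
a point `(p, u)` whose rank over `κ` exceeds that of `h` by at least the length of `rs`, because `rs`
stays regular in `S ⊗ R`. -/
theorem exists_field_trRk_of_flat {Sk S R κ Ω : Type} [CommRing Sk] [CommRing S] [CommRing R]
    [Field κ] [Field Ω] [Algebra Sk S] [Algebra Sk R] [Algebra κ S] [Algebra κ Ω]
    [Module.Flat Sk R] [Algebra.FiniteType κ S] [Algebra.FiniteType Sk R]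
    (σ : S →ₐ[κ] Ω) (h : R →+* Ω)
    (hσ : σ.toRingHom.comp (algebraMap Sk S) = h.comp (algebraMap Sk R))
    (rs : List S) (hreg : IsWeaklyRegular S rs) (hrs : ∀ r ∈ rs, σ r = 0) :
    ∃ (E : Type) (_ : Field E) (_ : Algebra κ E) (p : S →ₐ[κ] E) (u : R →+* E),
      p.toRingHom.comp (algebraMap Sk S) = u.comp (algebraMap Sk R) ∧
      trRk κ (Set.range h) + rs.length ≤ trRk κ (Set.range p ∪ Set.range u) := by
  have : SMulCommClass Sk κ S := ⟨fun a b c => by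
    simp only [Algebra.smul_def]; ring⟩
  let : Algebra S Ω := σ.toRingHom.toAlgebra
  let : Algebra Sk Ω := (h.comp (algebraMap Sk R)).toAlgebra
  have : IsScalarTower Sk S Ω := IsScalarTower.of_algebraMap_eq fun a =>
    (DFunLike.congr_fun hσ a).symm
  have : IsScalarTower κ S Ω := IsScalarTower.of_algebraMap_eq fun a => (σ.commutes a).symm
  let q0 : S ⊗[Sk] R →ₐ[S] Ω := Algebra.TensorProduct.lift (Algebra.ofId S Ω)
    ({ h with commutes' := fun a => rfl } : R →ₐ[Sk] Ω) (fun _ _ => Commute.all _ _)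
  let q : S ⊗[Sk] R →ₐ[κ] Ω := q0.restrictScalars κ
  have hq1 : ∀ a : S, q (algebraMap S _ a) = σ a := fun a => q0.commutes a
  have hq2 : ∀ b : R, q (1 ⊗ₜ b) = h b := fun b => by
    change q0 (1 ⊗ₜ b) = h b
    simp [q0]
  have : Algebra.FiniteType κ (S ⊗[Sk] R) := Algebra.FiniteType.trans (S := S) inferInstance
    inferInstance
  obtain ⟨E, _, _, p, hp⟩ := exists_field_trRk_of_isWeaklyRegular (κ := κ)
    (rs.map (algebraMap S (S ⊗[Sk] R))) (IsWeaklyRegular.of_flat hreg) q (by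
      intro y hy
      obtain ⟨r, hr, rfl⟩ := List.mem_map.1 hy
      rw [hq1, hrs r hr])
  let pS : S →ₐ[κ] E := p.comp (IsScalarTower.toAlgHom κ S (S ⊗[Sk] R))
  let u : R →+* E := p.toRingHom.comp
    (Algebra.TensorProduct.includeRight : R →ₐ[Sk] S ⊗[Sk] R).toRingHom
  refine ⟨E, inferInstance, inferInstance, pS, u, ?_, ?_⟩
  · ext a
    change p (algebraMap S (S ⊗[Sk] R) (algebraMap Sk S a)) =
      p ((Algebra.TensorProduct.includeRight : R →ₐ[Sk] S ⊗[Sk] R) (algebraMap Sk R a))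
    rw [AlgHom.commutes, ← IsScalarTower.algebraMap_apply]
  · calc trRk κ (Set.range h) + rs.length ≤ trRk κ (Set.range q) + rs.length := by
          gcongr
          refine trRk_mono ?_
          rintro _ ⟨b, rfl⟩
          exact ⟨_, hq2 b⟩
      _ ≤ trRk κ (Set.range p) := by simpa using hp
      _ ≤ _ := by
        refine trRk_le_of_subset_closure
          (Set.Subset.trans ?_ (adjoin_subset_trClosure _))
        rintro _ ⟨z, rfl⟩
        induction z using TensorProduct.induction_on with
        | zero => simp
        | add a b ha hb => rw [map_add]; exact add_mem ha hb
        | tmul a b =>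
          have : a ⊗ₜ[Sk] b = algebraMap S _ a * (1 ⊗ₜ b) := by
            simp [Algebra.TensorProduct.algebraMap_apply]
          rw [this, map_mul]
          exact mul_mem (IntermediateField.subset_adjoin _ _ (Or.inl ⟨a, rfl⟩))
            (IntermediateField.subset_adjoin _ _ (Or.inr ⟨b, rfl⟩))

/-- Flatness of the `t`-fold self-convolution of `f` implies the fibre bound. The algebra `R` is the
`t`-fold tensor power of `A` over `K`, given through its generation by the factors and the existence
of maps out of it. -/
theorem fibreBound_of_flat {K A R : Type} [Field K] [CommRing A] [Algebra K A] [CommRing R]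
    [Algebra K R] [Algebra.FiniteType K R] {t n : ℕ} (ι : Fin t → A →ₐ[K] R)
    (hgen : Algebra.adjoin K (⋃ j, Set.range (ι j)) = ⊤)
    (huniv : ∀ (Ω : Type) [Field Ω] [Algebra K Ω] (x : Fin t → A →ₐ[K] Ω),
      ∃ h : R →ₐ[K] Ω, ∀ j, h.comp (ι j) = x j)
    (f : Fin n → A)
    (hflat : (MvPolynomial.aeval (R := K) (fun c => ∑ j, ι j (f c))).toRingHom.Flat) :
    FibreBound K f t (Cardinal.toENat (Algebra.trdeg K A)) := by
  intro κ Ω _ _ _ _ x s hxK hxs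
  let : Algebra K Ω := ((algebraMap κ Ω).comp (algebraMap K κ)).toAlgebra
  let x' : Fin t → A →ₐ[K] Ω := fun j => { x j with commutes' := hxK j }
  obtain ⟨h, hh⟩ := huniv Ω x'
  have hh' : ∀ j a, h (ι j a) = x j a := fun j a => DFunLike.congr_fun (hh j) a
  set ψ : MvPolynomial (Fin n) K →ₐ[K] R := MvPolynomial.aeval (fun c => ∑ j, ι j (f c)) with hψ
  let : Algebra (MvPolynomial (Fin n) K) R := ψ.toRingHom.toAlgebra
  let : Algebra (MvPolynomial (Fin n) K) (MvPolynomial (Fin n) κ) :=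
    (MvPolynomial.map (algebraMap K κ)).toAlgebra
  have : Module.Flat (MvPolynomial (Fin n) K) R := hflat
  have : IsScalarTower K (MvPolynomial (Fin n) K) R :=
    IsScalarTower.of_algebraMap_eq fun a => (ψ.commutes a).symm
  have : Algebra.FiniteType (MvPolynomial (Fin n) K) R :=
    Algebra.FiniteType.of_restrictScalars_finiteType K _ _
  obtain ⟨E, _, _, p, u, hpu, hle⟩ := exists_field_trRk_of_flat (κ := κ) (Sk := MvPolynomial (Fin n) K)
    (S := MvPolynomial (Fin n) κ) (R := R) (Ω := Ω)
    (MvPolynomial.aeval (fun c => algebraMap κ Ω (s c))) h.toRingHom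
    (by
      refine MvPolynomial.ringHom_ext (fun a => ?_) (fun c => ?_)
      · change MvPolynomial.aeval _ (MvPolynomial.map (algebraMap K κ) (MvPolynomial.C a)) =
          h (ψ (MvPolynomial.C a))
        have e1 : ψ (MvPolynomial.C a) = algebraMap K R a := ψ.commutes a
        rw [e1, h.commutes, MvPolynomial.map_C, MvPolynomial.aeval_C]
        rfl
      · change MvPolynomial.aeval _ (MvPolynomial.map (algebraMap K κ) (MvPolynomial.X c)) =
          h (ψ (MvPolynomial.X c))
        rw [hψ, MvPolynomial.map_X, MvPolynomial.aeval_X, MvPolynomial.aeval_X, map_sum, ← hxs]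
        exact Finset.sum_congr rfl fun j _ => (hh' j _).symm)
    _ (isWeaklyRegular_X_sub_C s) (by
      intro r hr
      obtain ⟨c, rfl⟩ := (List.mem_ofFn' _ _).1 hr
      simp)
  have huK : ∀ a, u (algebraMap K R a) = algebraMap κ E (algebraMap K κ a) := by
    intro a
    have h1 := DFunLike.congr_fun hpu (MvPolynomial.C a)
    have h2 : p (MvPolynomial.map (algebraMap K κ) (MvPolynomial.C a)) = u (ψ (MvPolynomial.C a)) := h1
    have e1 : ψ (MvPolynomial.C a) = algebraMap K R a := ψ.commutes a
    rw [e1, MvPolynomial.map_C] at h2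
    rw [← h2]
    exact p.commutes _
  let : Algebra K E := ((algebraMap κ E).comp (algebraMap K κ)).toAlgebra
  have : IsScalarTower K κ E := IsScalarTower.of_algebraMap_eq fun a => rfl
  let u' : R →ₐ[K] E := { u with commutes' := huK }
  set T : Set E := ⋃ j, Set.range (u'.comp (ι j)) with hT
  have hu : ∀ b : R, u b ∈ IntermediateField.adjoin κ T := by
    intro b
    have hb : b ∈ Algebra.adjoin K (⋃ j, Set.range (ι j)) := hgen ▸ Algebra.mem_top
    induction hb using Algebra.adjoin_induction with
    | mem b hb =>
      obtain ⟨j, a, rfl⟩ := Set.mem_iUnion.1 hb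
      exact IntermediateField.subset_adjoin _ _ (Set.mem_iUnion.2 ⟨j, a, rfl⟩)
    | algebraMap a => rw [huK]; exact IntermediateField.algebraMap_mem _ _
    | add a b _ _ ha hb => rw [map_add]; exact add_mem ha hb
    | mul a b _ _ ha hb => rw [map_mul]; exact mul_mem ha hb
  have hp : ∀ b, p b ∈ IntermediateField.adjoin κ T := by
    intro b
    induction b using MvPolynomial.induction_on with
    | C a =>
      have : p (MvPolynomial.C a) = algebraMap κ E a := p.commutes a
      rw [this]; exact IntermediateField.algebraMap_mem _ _
    | add a b ha hb => rw [map_add]; exact add_mem ha hb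
    | mul_X b c hb =>
      rw [map_mul]
      refine mul_mem hb ?_
      have h1 : p (MvPolynomial.map (algebraMap K κ) (MvPolynomial.X c)) = u (ψ (MvPolynomial.X c)) :=
        DFunLike.congr_fun hpu (MvPolynomial.X c)
      rw [MvPolynomial.map_X] at h1
      rw [h1]
      exact hu _
  have hfin : trRk κ (Set.range p ∪ Set.range u) ≤
      t * Cardinal.toENat (Algebra.trdeg K A) :=
    calc _ ≤ trRk κ T := by
            refine trRk_le_of_subset_closure
              (Set.Subset.trans ?_ (adjoin_subset_trClosure _))
            rintro _ (⟨b, rfl⟩ | ⟨b, rfl⟩)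
            exacts [hp b, hu b]
      _ ≤ ∑ j, trRk κ (Set.range (u'.comp (ι j))) := trRk_iUnion_le _
      _ ≤ ∑ _j : Fin t, Cardinal.toENat (Algebra.trdeg K A) :=
        Finset.sum_le_sum fun j _ => trRk_range_le _
      _ = _ := by simp
  refine le_trans ?_ (hle.trans hfin)
  rw [List.length_ofFn]
  gcongr
  refine trRk_mono ?_
  rintro y hy
  obtain ⟨j, a, rfl⟩ := Set.mem_iUnion.1 hy
  exact ⟨ι j a, hh' j a⟩

end

/-! ### Étale charts of smooth algebras -/

section

open Cardinal

/-- A domain `B` étale over `d`-dimensional affine space has dimension at most `d`; hence so has any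
subalgebra `A`. -/
theorem toENat_trdeg_le_of_etale {K A B : Type} [Field K] [CommRing A] [Algebra K A]
    [CommRing B] [IsDomain B] [Algebra K B] {d : ℕ} (i : A →ₐ[K] B) (hi : Function.Injective i)
    (e : MvPolynomial (Fin d) K →ₐ[K] B) (he : e.toRingHom.Etale) :
    Cardinal.toENat (Algebra.trdeg K A) ≤ d := by
  let : Algebra (MvPolynomial (Fin d) K) B := e.toRingHom.toAlgebra
  have : IsScalarTower K (MvPolynomial (Fin d) K) B :=
    IsScalarTower.of_algebraMap_eq fun a => (e.commutes a).symm
  have : Algebra.Etale (MvPolynomial (Fin d) K) B := he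
  have hinj : Function.Injective (algebraMap (MvPolynomial (Fin d) K) B) := by
    have : Module.Flat (MvPolynomial (Fin d) K) B := inferInstance
    exact FaithfulSMul.algebraMap_injective _ _
  let E := FractionRing B
  let P := MvPolynomial (Fin d) K
  have hinjE : Function.Injective (algebraMap P E) := by
    rw [IsScalarTower.algebraMap_eq P B E]
    exact (IsFractionRing.injective B E).comp hinj
  have : FaithfulSMul P E := (faithfulSMul_iff_algebraMap_injective _ _).2 hinjE
  let : Algebra (FractionRing P) E := FractionRing.liftAlgebra P E
  have : IsScalarTower P (FractionRing P) E := FractionRing.isScalarTower_liftAlgebra P E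
  have : Algebra.FormallyUnramified B E :=
    Algebra.FormallyUnramified.of_isLocalization (nonZeroDivisors B)
  have : Algebra.FormallyUnramified P E := Algebra.FormallyUnramified.comp P B E
  have : Algebra.FormallyUnramified (FractionRing P) E :=
    Algebra.FormallyUnramified.of_restrictScalars P _ _
  have : Algebra.EssFiniteType B E := Algebra.EssFiniteType.of_isLocalization _ (nonZeroDivisors B)
  have : Algebra.EssFiniteType P E := Algebra.EssFiniteType.comp P B E
  have : Algebra.EssFiniteType (FractionRing P) E := Algebra.EssFiniteType.of_comp P _ E
  have : Algebra.IsSeparable (FractionRing P) E := Algebra.FormallyUnramified.isSeparable _ _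
  have h1 : Algebra.IsAlgebraic (FractionRing P) E := inferInstance
  have h2 : Algebra.IsAlgebraic P E := (IsFractionRing.comap_isAlgebraic_iff).2 h1
  have hAE : Algebra.trdeg K A ≤ Algebra.trdeg K E :=
    trdeg_le_of_injective ((IsScalarTower.toAlgHom K B E).comp i)
      ((IsFractionRing.injective B E).comp hi)
  have h3 := trdeg_add_eq (R := K) (S := P) (A := E)
  have h4 : Algebra.trdeg P E = 0 := trdeg_eq_zero_iff.2 h2
  rw [h4, add_zero, MvPolynomial.trdeg_of_isDomain] at h3
  rw [← h3] at hAE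
  simpa using Cardinal.toENat.monotone' hAE

/-- A smooth domain is, near any prime, étale over an affine space of dimension at least its own. -/
theorem exists_etale_chart {K A : Type} [Field K] [CommRing A] [IsDomain A] [Algebra K A]
    [Algebra.Smooth K A] (p : Ideal A) [p.IsPrime] :
    ∃ g ∉ p, ∃ (d : ℕ) (e : MvPolynomial (Fin d) K →ₐ[K] Localization.Away g),
      e.toRingHom.Etale ∧ Cardinal.toENat (Algebra.trdeg K A) ≤ d := by
  have : Algebra.FinitePresentation K A := inferInstance
  have : Algebra.IsSmoothAt K p := inferInstance
  obtain ⟨g, hg, hsm⟩ := Algebra.IsSmoothAt.exists_notMem_isStandardSmooth K p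
  have hsm' : (algebraMap K (Localization.Away g)).IsStandardSmooth := by
    rwa [RingHom.isStandardSmooth_algebraMap]
  obtain ⟨d, e, he, het⟩ := hsm'.exists_etale_mvPolynomial
  have hg0 : g ≠ 0 := fun h => hg (h ▸ p.zero_mem)
  have : IsDomain (Localization.Away g) :=
    IsLocalization.isDomain_localization (powers_le_nonZeroDivisors_of_noZeroDivisors hg0)
  let e' : MvPolynomial (Fin d) K →ₐ[K] Localization.Away g :=
    { e with commutes' := fun a => DFunLike.congr_fun he a }
  exact ⟨g, hg, d, e', het, toENat_trdeg_le_of_etale (IsScalarTower.toAlgHom K A _)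
    (IsLocalization.injective _ (powers_le_nonZeroDivisors_of_noZeroDivisors hg0)) e' het⟩

end

/-! ### Products of étale maps -/

section

/-- The infinitesimal lifting property of étale maps, in terms of ring homomorphisms. -/
theorem etale_existsUnique_lift {P B T : Type} [CommRing P] [CommRing B] [CommRing T]
    {e : P →+* B} (he : e.Etale) {I : Ideal T} (hI : I ^ 2 = ⊥) (τ : P →+* T) (f : B →+* T ⧸ I)
    (hf : f.comp e = (Ideal.Quotient.mk I).comp τ) :
    ∃! x : B →+* T, x.comp e = τ ∧ (Ideal.Quotient.mk I).comp x = f := by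
  let : Algebra P B := e.toAlgebra
  let : Algebra P T := τ.toAlgebra
  have : Algebra.Etale P B := he
  let f' : B →ₐ[P] T ⧸ I := { f with commutes' := fun a => DFunLike.congr_fun hf a }
  obtain ⟨hinj, hsurj⟩ := Algebra.FormallyEtale.comp_bijective P B I hI
  obtain ⟨x, hx⟩ := hsurj f'
  refine ⟨x.toRingHom, ⟨RingHom.ext fun a => x.commutes a,
    RingHom.ext fun a => DFunLike.congr_fun hx a⟩, ?_⟩
  rintro y ⟨hy1, hy2⟩
  let y' : B →ₐ[P] T := { y with commutes' := fun a => DFunLike.congr_fun hy1 a }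
  have : y' = x := hinj (by
    rw [hx]
    ext a
    exact DFunLike.congr_fun hy2 a)
  ext a
  exact DFunLike.congr_fun this a

/-- A finitely presented map with the infinitesimal lifting property is étale, hence flat. -/
theorem flat_of_existsUnique_lift {P C : Type} [CommRing P] [CommRing C] (e : P →+* C)
    (hfp : e.FinitePresentation)
    (H : ∀ (T : Type) [CommRing T] (I : Ideal T), I ^ 2 = ⊥ → ∀ (τ : P →+* T) (f : C →+* T ⧸ I),
      f.comp e = (Ideal.Quotient.mk I).comp τ →
      ∃! x : C →+* T, x.comp e = τ ∧ (Ideal.Quotient.mk I).comp x = f) : e.Flat := by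
  let : Algebra P C := e.toAlgebra
  have : Algebra.FormallyEtale P C := by
    refine Algebra.FormallyEtale.iff_comp_bijective.2 fun T _ _ I hI => ⟨?_, ?_⟩
    · intro x y hxy
      obtain ⟨z, -, hz⟩ := H T I hI (algebraMap P T)
        ((Ideal.Quotient.mkₐ P I).comp x).toRingHom
        (RingHom.ext fun a => ((Ideal.Quotient.mkₐ P I).comp x).commutes a)
      have h1 := hz x.toRingHom ⟨RingHom.ext fun a => x.commutes a, rfl⟩
      have h2 := hz y.toRingHom ⟨RingHom.ext fun a => y.commutes a,
        RingHom.ext fun a => (DFunLike.congr_fun hxy a).symm⟩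
      ext a
      exact DFunLike.congr_fun (h1.trans h2.symm) a
    · intro f
      obtain ⟨z, ⟨hz1, hz2⟩, -⟩ := H T I hI (algebraMap P T) f.toRingHom
        (RingHom.ext fun a => f.commutes a)
      exact ⟨{ z with commutes' := fun a => DFunLike.congr_fun hz1 a },
        AlgHom.ext fun a => DFunLike.congr_fun hz2 a⟩
  have : Algebra.FinitePresentation P C := hfp
  have : Algebra.Etale P C := { }
  have : Module.Flat P C := inferInstance
  exact this

/-- The product over `L` of étale maps `e i` to affine spaces over `K` is flat. The algebra `C` is the
tensor product over `L` of the base changes of the `B i`, given through its universal property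
(`hext`, `huniv`); `σ` enumerates all the coordinates. -/
theorem flat_of_etale_family {K L C ι : Type} [Field K] [Field L] [Algebra K L] [CommRing C]
    [Algebra L C] [Algebra.FiniteType L C] {B : ι → Type} [∀ i, CommRing (B i)]
    [∀ i, Algebra K (B i)] {d : ι → ℕ} (e : ∀ i, MvPolynomial (Fin (d i)) K →ₐ[K] B i)
    (he : ∀ i, (e i).toRingHom.Etale) (β : ∀ i, B i →+* C)
    (hβ : ∀ i a, β i (algebraMap K _ a) = algebraMap L C (algebraMap K L a))
    (hext : ∀ (T : Type) [CommRing T] (h h' : C →+* T),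
      h.comp (algebraMap L C) = h'.comp (algebraMap L C) →
      (∀ i b, h (β i b) = h' (β i b)) → h = h')
    (huniv : ∀ (T : Type) [CommRing T] (l : L →+* T) (x : ∀ i, B i →+* T),
      (∀ i a, x i (algebraMap K _ a) = l (algebraMap K L a)) →
      ∃ h : C →+* T, h.comp (algebraMap L C) = l ∧ ∀ i b, h (β i b) = x i b)
    {D : ℕ} (σ : Fin D ≃ Σ i, Fin (d i)) :
    (MvPolynomial.aeval (R := L)
      (fun k => β (σ k).1 (e (σ k).1 (MvPolynomial.X (σ k).2)))).toRingHom.Flat := by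
  set ε : MvPolynomial (Fin D) L →ₐ[L] C := MvPolynomial.aeval (R := L)
      (fun k => β (σ k).1 (e (σ k).1 (MvPolynomial.X (σ k).2))) with hε
  have hεX : ∀ i (k : Fin (d i)), ε (MvPolynomial.X (σ.symm ⟨i, k⟩)) =
      β i (e i (MvPolynomial.X k)) := by
    intro i k
    rw [hε, MvPolynomial.aeval_X]
    exact congrArg (fun s : (Σ i, Fin (d i)) => β s.1 (e s.1 (MvPolynomial.X s.2)))
      (σ.apply_symm_apply ⟨i, k⟩)
  have hεC : ∀ a, ε (MvPolynomial.C a) = algebraMap L C a := fun a => ε.commutes a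
  have heC : ∀ i a, e i (MvPolynomial.C a) = algebraMap K (B i) a := fun i a => (e i).commutes a
  have hfp : ε.toRingHom.FinitePresentation := by
    refine RingHom.FinitePresentation.of_finiteType.1 ?_
    refine RingHom.FiniteType.of_comp_finiteType (f := algebraMap L _) ?_
    have : ε.toRingHom.comp (algebraMap L _) = algebraMap L C := RingHom.ext fun a => ε.commutes a
    rw [this]
    exact RingHom.finiteType_algebraMap.2 inferInstance
  refine flat_of_existsUnique_lift _ hfp fun T _ I hI τ f hf => ?_
  -- the induced structure maps on the factors
  let l : L →+* T := τ.comp MvPolynomial.C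
  let τi : ∀ i, MvPolynomial (Fin (d i)) K →+* T := fun i =>
    MvPolynomial.eval₂Hom (l.comp (algebraMap K L)) fun k => τ (MvPolynomial.X (σ.symm ⟨i, k⟩))
  have hτC : ∀ i a, τi i (MvPolynomial.C a) = l (algebraMap K L a) := by
    intro i a; simp [τi]
  have hτX : ∀ i k, τi i (MvPolynomial.X k) = τ (MvPolynomial.X (σ.symm ⟨i, k⟩)) := by
    intro i k; simp [τi]
  have hf' : ∀ p, f (ε p) = Ideal.Quotient.mk I (τ p) := fun p => DFunLike.congr_fun hf p
  have hfi : ∀ i, (f.comp (β i)).comp (e i).toRingHom = (Ideal.Quotient.mk I).comp (τi i) := by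
    intro i
    refine MvPolynomial.ringHom_ext (fun a => ?_) (fun k => ?_)
    · change f (β i (e i (MvPolynomial.C a))) = Ideal.Quotient.mk I (τi i (MvPolynomial.C a))
      rw [heC, hβ, ← hεC, hf', hτC]; rfl
    · change f (β i (e i (MvPolynomial.X k))) = Ideal.Quotient.mk I (τi i (MvPolynomial.X k))
      rw [← hεX, hf', hτX]
  have hcomp : ∀ h : C →+* T, h.comp ε.toRingHom = τ ↔
      h.comp (algebraMap L C) = l ∧ ∀ i, (h.comp (β i)).comp (e i).toRingHom = τi i := by
    intro h
    constructor
    · intro hh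
      have hh' : ∀ p, h (ε p) = τ p := fun p => DFunLike.congr_fun hh p
      refine ⟨RingHom.ext fun a => ?_, fun i =>
        MvPolynomial.ringHom_ext (fun a => ?_) (fun k => ?_)⟩
      · change h (algebraMap L C a) = τ (MvPolynomial.C a)
        rw [← hεC, hh']
      · change h (β i (e i (MvPolynomial.C a))) = τi i (MvPolynomial.C a)
        rw [heC, hβ, ← hεC, hh', hτC]; rfl
      · change h (β i (e i (MvPolynomial.X k))) = τi i (MvPolynomial.X k)
        rw [← hεX, hh', hτX]
    · rintro ⟨h1, h2⟩
      refine MvPolynomial.ringHom_ext (fun a => ?_) (fun k => ?_)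
      · change h (ε (MvPolynomial.C a)) = _
        rw [hεC]
        exact DFunLike.congr_fun h1 a
      · change h (ε (MvPolynomial.X k)) = _
        obtain ⟨⟨i, k⟩, rfl⟩ := σ.symm.surjective k
        rw [hεX, ← hτX]
        exact DFunLike.congr_fun (h2 i) (MvPolynomial.X k)
  choose x hx hxu using fun i => etale_existsUnique_lift (he i) hI (τi i) (f.comp (β i)) (hfi i)
  obtain ⟨h, hl, hh⟩ := huniv T l x (fun i a => by
    have := DFunLike.congr_fun (hx i).1 (MvPolynomial.C a)
    change x i (e i (MvPolynomial.C a)) = τi i (MvPolynomial.C a) at this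
    rwa [heC, hτC] at this)
  have hhβ : ∀ i, h.comp (β i) = x i := fun i => RingHom.ext fun b => hh i b
  refine ⟨h, ⟨(hcomp h).2 ⟨hl, fun i => by rw [hhβ]; exact (hx i).1⟩, ?_⟩, ?_⟩
  · refine hext _ _ _ (RingHom.ext fun a => ?_) (fun i b => ?_)
    · change Ideal.Quotient.mk I (h (algebraMap L C a)) = f (algebraMap L C a)
      rw [← hεC, hf', hεC]
      exact congrArg _ (DFunLike.congr_fun hl a)
    · change Ideal.Quotient.mk I (h (β i b)) = f (β i b)
      rw [hh]
      exact DFunLike.congr_fun (hx i).2 b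
  · rintro y ⟨hy1, hy2⟩
    obtain ⟨hyl, hyi⟩ := (hcomp y).1 hy1
    refine hext _ _ _ (hyl.trans hl.symm) fun i b => ?_
    have := hxu i (y.comp (β i)) ⟨hyi i, by rw [← RingHom.comp_assoc, hy2]⟩
    rw [hh]
    exact DFunLike.congr_fun this b

end

/-! ### Regular sequences in the local rings of a product -/

section

open RingTheory.Sequence IsLocalRing

/-- Étale charts of the factors `A i` give a flat chart of an open subset of their product over `L`,
where the product `R` is given by its universal property. -/
theorem flat_of_etale_charts {K L R ι : Type} [Field K] [Field L] [Algebra K L] [CommRing R]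
    [Algebra L R] [Algebra.FiniteType L R] [Fintype ι] {A : ι → Type} [∀ i, CommRing (A i)]
    [∀ i, Algebra K (A i)] (j : ∀ i, A i →+* R)
    (hj : ∀ i a, j i (algebraMap K _ a) = algebraMap L R (algebraMap K L a))
    (hext : ∀ (T : Type) [CommRing T] (h h' : R →+* T),
      h.comp (algebraMap L R) = h'.comp (algebraMap L R) →
      (∀ i b, h (j i b) = h' (j i b)) → h = h')
    (huniv : ∀ (T : Type) [CommRing T] (l : L →+* T) (x : ∀ i, A i →+* T),
      (∀ i a, x i (algebraMap K _ a) = l (algebraMap K L a)) →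
      ∃ h : R →+* T, h.comp (algebraMap L R) = l ∧ ∀ i b, h (j i b) = x i b)
    (g : ∀ i, A i) {d : ι → ℕ}
    (e : ∀ i, MvPolynomial (Fin (d i)) K →ₐ[K] Localization.Away (g i))
    (he : ∀ i, (e i).toRingHom.Etale) (D : ℕ) (hD : D = ∑ i, d i) :
    ∃ ε : MvPolynomial (Fin D) L →ₐ[L] Localization.Away (∏ i, j i (g i)),
      ε.toRingHom.Flat := by
  classical
  set G : R := ∏ i, j i (g i) with hG
  have hunit : ∀ i, IsUnit (((algebraMap R (Localization.Away G)).comp (j i)) (g i)) := by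
    intro i
    refine isUnit_of_dvd_unit ?_ (IsLocalization.Away.algebraMap_isUnit (S := Localization.Away G) G)
    exact map_dvd _ (Finset.dvd_prod_of_mem _ (Finset.mem_univ i))
  let β : ∀ i, Localization.Away (g i) →+* Localization.Away G := fun i =>
    IsLocalization.Away.lift (g i) (hunit i)
  have hβ : ∀ i b, β i (algebraMap (A i) _ b) = algebraMap R _ (j i b) := fun i b =>
    IsLocalization.Away.lift_eq (g i) (hunit i) b
  have : Algebra.FiniteType R (Localization.Away G) :=
    IsLocalization.finiteType_of_monoid_fg (Submonoid.powers G) _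
  have : Algebra.FiniteType L (Localization.Away G) := Algebra.FiniteType.trans (S := R)
    inferInstance inferInstance
  let σ : Fin D ≃ Σ i, Fin (d i) := (Fintype.equivFinOfCardEq (by simp [hD])).symm
  refine ⟨_, flat_of_etale_family e he β ?_ ?_ ?_ σ⟩
  · intro i a
    rw [IsScalarTower.algebraMap_apply K (A i) (Localization.Away (g i)), hβ, hj,
      ← IsScalarTower.algebraMap_apply]
  · intro T _ h h' hL hh
    refine IsLocalization.ringHom_ext (Submonoid.powers G) (hext T _ _ ?_ fun i b => ?_)
    · rwa [RingHom.comp_assoc, RingHom.comp_assoc, ← IsScalarTower.algebraMap_eq]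
    · have := hh i (algebraMap _ _ b)
      rwa [hβ] at this
  · intro T _ l x hx
    obtain ⟨h, hl, hh⟩ := huniv T l (fun i => (x i).comp (algebraMap (A i) _)) (fun i a => by
      rw [← hx, IsScalarTower.algebraMap_apply K (A i) (Localization.Away (g i))]; rfl)
    have hu : IsUnit (h G) := by
      rw [hG, map_prod, IsUnit.prod_univ_iff]
      intro i
      rw [hh]
      exact (IsLocalization.Away.algebraMap_isUnit (g i)).map (x i)
    refine ⟨IsLocalization.Away.lift G hu, ?_, fun i b => ?_⟩
    · rw [IsScalarTower.algebraMap_eq L R (Localization.Away G), ← RingHom.comp_assoc,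
        IsLocalization.Away.lift_comp, hl]
    · have : (IsLocalization.Away.lift G hu).comp (β i) = x i := by
        refine IsLocalization.ringHom_ext (Submonoid.powers (g i)) (RingHom.ext fun b => ?_)
        change IsLocalization.Away.lift G hu (β i (algebraMap _ _ b)) = _
        rw [hβ, IsLocalization.Away.lift_eq, hh]
      exact DFunLike.congr_fun this b

/-- At a rational point, the local ring of a product of smooth varieties has a regular sequence of
length at least the sum of their dimensions, pulled back from affine space along a flat chart. -/
theorem exists_isWeaklyRegular_atPrime {K L R ι : Type} [Field K] [Field L] [Algebra K L]
    [CommRing R]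
    [Algebra L R] [Algebra.FiniteType L R] [Fintype ι] {A : ι → Type} [∀ i, CommRing (A i)]
    [∀ i, IsDomain (A i)]
    [∀ i, Algebra K (A i)] [∀ i, Algebra.Smooth K (A i)] (j : ∀ i, A i →+* R)
    (hj : ∀ i a, j i (algebraMap K _ a) = algebraMap L R (algebraMap K L a))
    (hext : ∀ (T : Type) [CommRing T] (h h' : R →+* T),
      h.comp (algebraMap L R) = h'.comp (algebraMap L R) →
      (∀ i b, h (j i b) = h' (j i b)) → h = h')
    (huniv : ∀ (T : Type) [CommRing T] (l : L →+* T) (x : ∀ i, A i →+* T),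
      (∀ i a, x i (algebraMap K _ a) = l (algebraMap K L a)) →
      ∃ h : R →+* T, h.comp (algebraMap L R) = l ∧ ∀ i b, h (j i b) = x i b)
    (m : Ideal R) [m.IsPrime] (π : R →ₐ[L] L) (hπ : RingHom.ker π = m) :
    ∃ rs : List (Localization.AtPrime m), (∀ r ∈ rs, r ∈ maximalIdeal (Localization.AtPrime m)) ∧
      IsWeaklyRegular (Localization.AtPrime m) rs ∧
      ∑ i, Cardinal.toENat (Algebra.trdeg K (A i)) ≤ rs.length := by
  have hp : ∀ i, (RingHom.ker (π.toRingHom.comp (j i))).IsPrime := fun i => RingHom.ker_isPrime _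
  choose g hg d e he hd using fun i =>
    exists_etale_chart (K := K) (RingHom.ker (π.toRingHom.comp (j i)))
  have hchart := flat_of_etale_charts j hj hext huniv g e he (∑ i, d i) rfl
  obtain ⟨G, hG⟩ : ∃ G : R, G = ∏ i, j i (g i) := ⟨_, rfl⟩
  rw [← hG] at hchart
  obtain ⟨ε, hε⟩ := hchart
  have hGm : G ∉ m := by
    rw [← hπ, RingHom.mem_ker, hG, map_prod, Finset.prod_eq_zero_iff]
    rintro ⟨i, -, h⟩
    exact hg i h
  let Rl := Localization.AtPrime m
  have hGu : IsUnit (algebraMap R Rl G) := IsLocalization.map_units Rl (⟨G, hGm⟩ : m.primeCompl)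
  let : Algebra (Localization.Away G) Rl :=
    (IsLocalization.Away.lift (S := Localization.Away G) G hGu).toAlgebra
  have : IsScalarTower R (Localization.Away G) Rl := IsScalarTower.of_algebraMap_eq fun a =>
    (IsLocalization.Away.lift_eq G hGu a).symm
  have hle : Submonoid.powers G ≤ m.primeCompl := Submonoid.powers_le.2 hGm
  have hloc := IsLocalization.isLocalization_of_submonoid_le (Localization.Away G) Rl
    (Submonoid.powers G) m.primeCompl hle
  have hflat1 : Module.Flat (Localization.Away G) Rl := IsLocalization.flat _
    (Submonoid.map (algebraMap R (Localization.Away G)) m.primeCompl)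
  let P := MvPolynomial (Fin (∑ i, d i)) L
  let : Algebra P (Localization.Away G) := ε.toRingHom.toAlgebra
  let : Algebra P Rl := ((algebraMap (Localization.Away G) Rl).comp ε.toRingHom).toAlgebra
  have : IsScalarTower P (Localization.Away G) Rl := IsScalarTower.of_algebraMap_eq fun a => rfl
  have : Module.Flat P (Localization.Away G) := hε
  have hflat : Module.Flat P Rl := Module.Flat.trans P (Localization.Away G) Rl
  have hcompl : ∀ y : m.primeCompl, IsUnit (π.toRingHom y) := fun y =>
    isUnit_iff_ne_zero.2 fun h => y.2 (hπ ▸ h)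
  let πl : Rl →+* L := IsLocalization.lift hcompl
  have hπl : ∀ a, πl (algebraMap L Rl a) = a := by
    intro a
    rw [IsScalarTower.algebraMap_apply L R Rl, IsLocalization.lift_eq]
    exact π.commutes a
  have hPL : ∀ a, algebraMap P Rl (MvPolynomial.C a) = algebraMap L Rl a := by
    intro a
    have h1 : ε (MvPolynomial.C a) = algebraMap L _ a := ε.commutes a
    change algebraMap (Localization.Away G) Rl (ε (MvPolynomial.C a)) = _
    rw [h1, IsScalarTower.algebraMap_apply L R (Localization.Away G),
      ← IsScalarTower.algebraMap_apply R, ← IsScalarTower.algebraMap_apply]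
  have hreg := IsWeaklyRegular.of_flat (S := Rl)
    (isWeaklyRegular_X_sub_C fun k => πl (algebraMap P Rl (MvPolynomial.X k)))
  refine ⟨_, ?_, hreg, ?_⟩
  · intro r hr
    obtain ⟨q, hq, rfl⟩ := List.mem_map.1 hr
    obtain ⟨c, rfl⟩ := (List.mem_ofFn' _ _).1 hq
    rw [mem_maximalIdeal, mem_nonunits_iff]
    intro hu
    have := hu.map πl
    rw [map_sub, map_sub, hPL, hπl, sub_self] at this
    exact not_isUnit_zero this
  · rw [List.length_map, List.length_ofFn]
    push_cast
    exact Finset.sum_le_sum fun i _ => hd i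

end

/-! ### Flatness from a bound on the fibres -/

section

open RingTheory.Sequence IsLocalRing

/-- The length of a chain of primes is at most the transcendence degree of the quotient by its smallest
member. -/
theorem natCast_le_trdeg_quotient {L R : Type} [Field L] [CommRing R] [Algebra L R]
    [Algebra.FiniteType L R] (n : ℕ) :
    ∀ P : Fin (n + 1) → PrimeSpectrum R, StrictMono P →
      (n : Cardinal) ≤ Algebra.trdeg L (R ⧸ (P 0).asIdeal) := by
  induction n with
  | zero => intro P _; simp
  | succ n ih =>
    intro P hP
    have h1 := ih (fun i => P i.succ) (hP.comp (Fin.strictMono_succ))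
    have hlt : P 0 < P (Fin.succ 0) := hP (Fin.succ_pos 0)
    obtain ⟨p, hp⟩ : ∃ p, p = P 0 := ⟨_, rfl⟩
    obtain ⟨q, hq⟩ : ∃ q, q = P (Fin.succ 0) := ⟨_, rfl⟩
    rw [← hp, ← hq] at hlt
    rw [← hp]
    rw [← hq] at h1
    have hle : p.asIdeal ≤ q.asIdeal := hlt.le
    let f : (R ⧸ p.asIdeal) →ₐ[L] (R ⧸ q.asIdeal) := Ideal.Quotient.factorₐ L hle
    have hf : Function.Surjective f := Ideal.Quotient.factor_surjective hle
    have hQ : RingHom.ker f ≠ ⊥ := by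
      intro h
      refine hlt.not_ge fun a ha => ?_
      have h2 : Ideal.Quotient.mk p.asIdeal a ∈ RingHom.ker f := by
        rw [RingHom.mem_ker]
        exact Ideal.Quotient.eq_zero_iff_mem.2 ha
      rw [h] at h2
      exact Ideal.Quotient.eq_zero_iff_mem.1 h2
    have : (RingHom.ker f).IsPrime := RingHom.ker_isPrime _
    have hfin : Algebra.trdeg L (R ⧸ p.asIdeal) < Cardinal.aleph0 := trdeg_lt_aleph0_of_finiteType
    have h3 := trdeg_quotient_add_one_le hfin (RingHom.ker f) hQ
    have h2 := trdeg_le_of_surjective (Ideal.quotientKerAlgEquivOfSurjective hf).toAlgHom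
      (Ideal.quotientKerAlgEquivOfSurjective hf).surjective
    push_cast
    exact (add_le_add_left (h1.trans h2) 1).trans h3

theorem ringKrullDim_add_le_of_forall_lTSeries {Z : Type} [CommRing Z] {n D : ℕ}
    (h : ∀ p : LTSeries (PrimeSpectrum Z), p.length + n ≤ D) : ringKrullDim Z + n ≤ D := by
  rcases subsingleton_or_nontrivial Z with hZ | hZ
  · rw [ringKrullDim_eq_bot_of_subsingleton]; simp
  · obtain ⟨r, rfl⟩ : ∃ r, D = r + n := ⟨D - n, by
      have := h (RelSeries.singleton _ (Classical.arbitrary _))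
      omega⟩
    have : ringKrullDim Z ≤ r := iSup_le fun p => by
      have := h p
      exact_mod_cast (by omega : p.length ≤ r)
    push_cast
    gcongr

/-- The ideal of a rational point of affine space is maximal. -/
theorem isMaximal_ofList_X_sub_C {κ : Type} [Field κ] {n : ℕ} (s : Fin n → κ) :
    (Ideal.ofList (List.ofFn fun c =>
      (MvPolynomial.X c - MvPolynomial.C (s c) : MvPolynomial (Fin n) κ))).IsMaximal := by
  set J := Ideal.ofList (List.ofFn fun c =>
      (MvPolynomial.X c - MvPolynomial.C (s c) : MvPolynomial (Fin n) κ)) with hJ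
  have hmem : ∀ c, (MvPolynomial.X c - MvPolynomial.C (s c) : MvPolynomial (Fin n) κ) ∈ J :=
    fun c => Ideal.subset_span (by
      rw [Set.mem_ofPred_eq]
      exact (List.mem_ofFn' _ _).2 ⟨c, rfl⟩)
  have hker : J = RingHom.ker (MvPolynomial.eval s) := by
    apply le_antisymm
    · rw [hJ, Ideal.ofList, Ideal.span_le]
      intro r hr
      rw [Set.mem_ofPred_eq] at hr
      obtain ⟨c, rfl⟩ := (List.mem_ofFn' _ _).1 hr
      simp [RingHom.mem_ker]
    · intro p hp
      have h2 : (Ideal.Quotient.mk J).comp (MvPolynomial.C.comp (MvPolynomial.eval s)) =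
          Ideal.Quotient.mk J := by
        refine MvPolynomial.ringHom_ext (fun a => by simp) fun c => ?_
        simpa using (Ideal.Quotient.eq.2 (hmem c)).symm
      have h3 := DFunLike.congr_fun h2 p
      rw [RingHom.mem_ker] at hp
      refine Ideal.Quotient.eq_zero_iff_mem.1 (h3.symm.trans ?_)
      simp [hp]
  rw [hker]
  exact RingHom.ker_isMaximal_of_surjective _ fun a => ⟨MvPolynomial.C a, by simp⟩

/-- Let `R` be the coordinate ring of the product over the algebraically closed field `L` of smooth
varieties. If the points of the fibres of the convolution over `L`-points have rank at most the sum
of the dimensions minus `n`, then the convolution is flat. -/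
theorem flat_of_point_bound {K L R ι : Type} [Field K] [Field L] [IsAlgClosed L] [Algebra K L]
    [CommRing R]
    [Algebra L R] [Algebra.FiniteType L R] [Fintype ι] {A : ι → Type} [∀ i, CommRing (A i)]
    [∀ i, IsDomain (A i)]
    [∀ i, Algebra K (A i)] [∀ i, Algebra.Smooth K (A i)] (j : ∀ i, A i →+* R)
    (hj : ∀ i a, j i (algebraMap K _ a) = algebraMap L R (algebraMap K L a))
    (hext : ∀ (T : Type) [CommRing T] (h h' : R →+* T),
      h.comp (algebraMap L R) = h'.comp (algebraMap L R) →
      (∀ i b, h (j i b) = h' (j i b)) → h = h')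
    (huniv : ∀ (T : Type) [CommRing T] (l : L →+* T) (x : ∀ i, A i →+* T),
      (∀ i a, x i (algebraMap K _ a) = l (algebraMap K L a)) →
      ∃ h : R →+* T, h.comp (algebraMap L R) = l ∧ ∀ i b, h (j i b) = x i b)
    {n : ℕ} (f : ∀ i, Fin n → A i)
    (hbound : ∀ (Ω : Type) [Field Ω] [Algebra L Ω] (x : ∀ i, A i →+* Ω) (v : Fin n → L) (k : ℕ),
      (∀ i a, x i (algebraMap K _ a) = algebraMap L Ω (algebraMap K L a)) →
      (∀ c, ∑ i, x i (f i c) = algebraMap L Ω (v c)) →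
      (k : ℕ∞) ≤ trRk L (⋃ i, Set.range (x i)) →
      (k : ℕ∞) + n ≤ ∑ i, Cardinal.toENat (Algebra.trdeg K (A i))) :
    (MvPolynomial.aeval (R := L) (fun c => ∑ i, j i (f i c))).toRingHom.Flat := by
  -- `R` is generated over `L` by the factors
  have hgen : Algebra.adjoin L (⋃ i, Set.range (j i)) = ⊤ := by
    set R' := Algebra.adjoin L (⋃ i, Set.range (j i)) with hR'
    obtain ⟨h, hl, hh⟩ := huniv R' (algebraMap L R')
      (fun i => (j i).codRestrict R' fun b =>
        Algebra.subset_adjoin (Set.mem_iUnion.2 ⟨i, b, rfl⟩))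
      (fun i a => Subtype.ext (hj i a))
    have := hext R (R'.val.toRingHom.comp h) (RingHom.id R) (by
        rw [RingHom.comp_assoc, hl]; rfl) (fun i b => by
        change R'.val (h (j i b)) = _
        rw [hh]; rfl)
    rw [eq_top_iff]
    intro a _
    have h1 : ((h a : R') : R) = a := DFunLike.congr_fun this a
    exact h1 ▸ (h a).2
  set ψ : MvPolynomial (Fin n) L →ₐ[L] R :=
    MvPolynomial.aeval (R := L) (fun c => ∑ i, j i (f i c)) with hψ
  let S := MvPolynomial (Fin n) L
  let : Algebra S R := ψ.toRingHom.toAlgebra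
  have : IsNoetherianRing R := Algebra.FiniteType.isNoetherianRing L R
  have : IsScalarTower L S R := IsScalarTower.of_algebraMap_eq fun a => (ψ.commutes a).symm
  change Module.Flat S R
  -- Flatness is checked at the maximal ideals, each of which is the kernel of an `L`-point `π`.
  refine Module.flat_of_isLocalized_maximal (R := S) R R (fun m hm => Localization.AtPrime m)
    (fun m hm => Algebra.linearMap R (Localization.AtPrime m)) fun m hm => ?_
  obtain ⟨π, hπ⟩ : ∃ π : R →ₐ[L] L, RingHom.ker π = m := by
    let : Field (R ⧸ m) := Ideal.Quotient.field m
    have : Module.Finite L (R ⧸ m) := finite_of_finite_type_of_isJacobsonRing L (R ⧸ m)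
    have hb : Function.Bijective (algebraMap L (R ⧸ m)) :=
      IsAlgClosed.algebraMap_bijective_of_isIntegral
    let E := AlgEquiv.ofBijective (Algebra.ofId L (R ⧸ m)) hb
    refine ⟨E.symm.toAlgHom.comp (Ideal.Quotient.mkₐ L m), ?_⟩
    ext a
    rw [RingHom.mem_ker]
    change E.symm (Ideal.Quotient.mk m a) = 0 ↔ _
    rw [map_eq_zero_iff E.symm E.symm.injective, Ideal.Quotient.eq_zero_iff_mem]
  let Rl := Localization.AtPrime m
  have : IsNoetherianRing Rl := IsLocalization.isNoetherianRing m.primeCompl Rl inferInstance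
  obtain ⟨rs, hrsm, hrs, hlen⟩ := exists_isWeaklyRegular_atPrime j hj hext huniv m π hπ
  -- `v` is the image of the point in the base, and `ys` generates its maximal ideal.
  let v : Fin n → L := fun c => π (∑ i, j i (f i c))
  let ys : List S := List.ofFn fun c => (MvPolynomial.X c - MvPolynomial.C (v c))
  have hys : ∀ y ∈ ys, ∃ c, algebraMap S R y = ∑ i, j i (f i c) - algebraMap L R (v c) := by
    intro y hy
    obtain ⟨c, rfl⟩ := (List.mem_ofFn' _ _).1 hy
    refine ⟨c, ?_⟩
    change ψ _ = _
    rw [map_sub, hψ, MvPolynomial.aeval_X, MvPolynomial.aeval_C]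
  have hysm : ∀ y ∈ ys, algebraMap S R y ∈ m := by
    intro y hy
    obtain ⟨c, hc⟩ := hys y hy
    rw [hc, ← hπ, RingHom.mem_ker, map_sub, AlgHom.commutes]
    exact sub_self _
  have hysl : ∀ r ∈ ys.map (algebraMap S Rl), r ∈ maximalIdeal Rl := by
    intro r hr
    obtain ⟨y, hy, rfl⟩ := List.mem_map.1 hr
    rw [IsScalarTower.algebraMap_apply S R Rl]
    exact (IsLocalization.AtPrime.to_map_mem_maximal_iff Rl m _).2 (hysm y hy)
  have hylen : ys.length = n := List.length_ofFn
  refine flat_of_isWeaklyRegular n S Rl ys hylen ?_ ?_ (isMaximal_ofList_X_sub_C v)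
  · intro y hy
    rw [IsLocalRing.jacobson_eq_maximalIdeal _ bot_ne_top]
    exact hysl _ (List.mem_map_of_mem hy)
  · refine isWeaklyRegular_of_ringKrullDim_le _ rs hysl hrsm hrs ?_
    rw [List.length_map, hylen]
    refine ringKrullDim_add_le_of_forall_lTSeries fun p => ?_
    -- pull a chain of primes of the local fibre back to `R`
    let J : Ideal Rl := Ideal.ofList (ys.map (algebraMap S Rl))
    let F : R →+* Rl ⧸ J := (Ideal.Quotient.mk J).comp (algebraMap R Rl)
    have hFinj : Function.Injective (PrimeSpectrum.comap F) := by
      have : PrimeSpectrum.comap F =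
          PrimeSpectrum.comap (algebraMap R Rl) ∘ PrimeSpectrum.comap (Ideal.Quotient.mk J) := rfl
      rw [this]
      exact (PrimeSpectrum.localization_comap_injective Rl m.primeCompl).comp
        (PrimeSpectrum.comap_injective_of_surjective _ Ideal.Quotient.mk_surjective)
    have hFmono : Monotone (PrimeSpectrum.comap F) := fun a b hab x hx => hab hx
    have hchain := natCast_le_trdeg_quotient (L := L) p.length
      (fun i => PrimeSpectrum.comap F (p i)) ((hFmono.strictMono_of_injective hFinj).comp p.strictMono)
    obtain ⟨P, hP⟩ : ∃ P, P = PrimeSpectrum.comap F (p 0) := ⟨_, rfl⟩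
    rw [← hP] at hchain
    have hyP : ∀ y ∈ ys, algebraMap S R y ∈ P.asIdeal := by
      intro y hy
      rw [hP]
      change F _ ∈ (p 0).asIdeal
      have : F (algebraMap S R y) = 0 := by
        refine Ideal.Quotient.eq_zero_iff_mem.2 ?_
        rw [← IsScalarTower.algebraMap_apply]
        refine Ideal.subset_span ?_
        rw [Set.mem_ofPred_eq]
        exact List.mem_map_of_mem hy
      rw [this]
      exact Ideal.zero_mem _
    let E := FractionRing (R ⧸ P.asIdeal)
    let g : (R ⧸ P.asIdeal) →ₐ[L] E := IsScalarTower.toAlgHom L _ E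
    have hg : Function.Injective g := IsFractionRing.injective _ E
    let G : R →ₐ[L] E := g.comp (Ideal.Quotient.mkₐ L P.asIdeal)
    have hG : ∀ a ∈ P.asIdeal, G a = 0 := by
      intro a ha
      have : Ideal.Quotient.mkₐ L P.asIdeal a = 0 := Ideal.Quotient.eq_zero_iff_mem.2 ha
      change g (Ideal.Quotient.mkₐ L P.asIdeal a) = 0
      rw [this, map_zero]
    have hrk : (p.length : ℕ∞) ≤ trRk L (⋃ i, Set.range (G.toRingHom.comp (j i))) := by
      have h1 := Cardinal.toENat.monotone' hchain
      refine le_trans (by simpa using h1) ((le_trRk_range g hg).trans ?_)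
      refine trRk_le_of_subset_closure (Set.Subset.trans ?_ (adjoin_subset_trClosure _))
      rintro _ ⟨b, rfl⟩
      obtain ⟨b, rfl⟩ := Ideal.Quotient.mkₐ_surjective L P.asIdeal b
      change G b ∈ IntermediateField.adjoin _ _
      have hb : b ∈ Algebra.adjoin L (⋃ i, Set.range (j i)) := hgen ▸ Algebra.mem_top
      induction hb using Algebra.adjoin_induction with
      | mem b hb =>
        obtain ⟨i, a, rfl⟩ := Set.mem_iUnion.1 hb
        exact IntermediateField.subset_adjoin _ _ (Set.mem_iUnion.2 ⟨i, a, rfl⟩)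
      | algebraMap a => rw [G.commutes]; exact IntermediateField.algebraMap_mem _ _
      | add a b _ _ ha hb => rw [map_add]; exact add_mem ha hb
      | mul a b _ _ ha hb => rw [map_mul]; exact mul_mem ha hb
    have hfin := hbound E (fun i => G.toRingHom.comp (j i)) v p.length
      (fun i a => by
        change G (j i (algebraMap K _ a)) = _
        rw [hj, G.commutes])
      (fun c => by
        have h1 := hG _ (hyP _ ((List.mem_ofFn' _ _).2 ⟨c, rfl⟩))
        change G (ψ _) = 0 at h1
        rw [map_sub, hψ, MvPolynomial.aeval_X, MvPolynomial.aeval_C, map_sub, G.commutes,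
          sub_eq_zero, map_sum] at h1
        exact h1) hrk
    have := hfin.trans hlen
    exact_mod_cast this

end

/-! ### Descent from the algebraic closure, and products of presented varieties -/

section

open TensorProduct

/-- The descent to `K` of `flat_of_point_bound`: the polynomial ring over `L` is faithfully flat over
the polynomial ring over `K`, and the base change of `R` satisfies the universal property of the
product over `L`. -/
theorem flat_aeval_of_point_bound {K L R ι : Type} [Field K] [Field L] [IsAlgClosed L]
    [Algebra K L] [CommRing R] [Algebra K R] [Algebra.FiniteType K R] [Fintype ι]
    {A : ι → Type} [∀ i, CommRing (A i)] [∀ i, IsDomain (A i)] [∀ i, Algebra K (A i)]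
    [∀ i, Algebra.Smooth K (A i)] (j : ∀ i, A i →ₐ[K] R)
    (hgen : Algebra.adjoin K (⋃ i, Set.range (j i)) = ⊤)
    (huniv : ∀ (T : Type) [CommRing T] [Algebra K T] (x : ∀ i, A i →ₐ[K] T),
      ∃ h : R →ₐ[K] T, ∀ i, h.comp (j i) = x i)
    {n : ℕ} (f : ∀ i, Fin n → A i)
    (hbound : ∀ (Ω : Type) [Field Ω] [Algebra L Ω] (x : ∀ i, A i →+* Ω) (v : Fin n → L) (k : ℕ),
      (∀ i a, x i (algebraMap K _ a) = algebraMap L Ω (algebraMap K L a)) →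
      (∀ c, ∑ i, x i (f i c) = algebraMap L Ω (v c)) →
      (k : ℕ∞) ≤ trRk L (⋃ i, Set.range (x i)) →
      (k : ℕ∞) + n ≤ ∑ i, Cardinal.toENat (Algebra.trdeg K (A i))) :
    (MvPolynomial.aeval (R := K) (fun c => ∑ i, j i (f i c))).toRingHom.Flat := by
  set ψ : MvPolynomial (Fin n) K →ₐ[K] R := MvPolynomial.aeval (fun c => ∑ i, j i (f i c)) with hψ
  let : Algebra (MvPolynomial (Fin n) K) R := ψ.toRingHom.toAlgebra
  let : Algebra (MvPolynomial (Fin n) K) (MvPolynomial (Fin n) L) :=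
    MvPolynomial.algebraMvPolynomial
  have : IsScalarTower K (MvPolynomial (Fin n) K) R :=
    IsScalarTower.of_algebraMap_eq fun a => (ψ.commutes a).symm
  have : Algebra.FiniteType (MvPolynomial (Fin n) K) R :=
    Algebra.FiniteType.of_restrictScalars_finiteType K _ _
  have : SMulCommClass (MvPolynomial (Fin n) K) L (MvPolynomial (Fin n) L) := ⟨fun a b c => by
    simp only [Algebra.smul_def]; ring⟩
  have : Module.FaithfullyFlat (MvPolynomial (Fin n) K) (MvPolynomial (Fin n) L) :=
    Module.FaithfullyFlat.of_linearEquiv _ _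
      (Algebra.IsPushout.equiv K (MvPolynomial (Fin n) K) L (MvPolynomial (Fin n) L)).symm.toLinearEquiv
  let RL := MvPolynomial (Fin n) L ⊗[MvPolynomial (Fin n) K] R
  have : Algebra.FiniteType L RL :=
    Algebra.FiniteType.trans (S := MvPolynomial (Fin n) L) inferInstance inferInstance
  let inc : R →ₐ[MvPolynomial (Fin n) K] RL := Algebra.TensorProduct.includeRight
  have hinc : ∀ p, inc (ψ p) = algebraMap (MvPolynomial (Fin n) L) RL
      (MvPolynomial.map (algebraMap K L) p) := fun p => inc.commutes p
  have hincK : ∀ a : K, inc (algebraMap K R a) = algebraMap L RL (algebraMap K L a) := by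
    intro a
    rw [← ψ.commutes a, hinc]
    change algebraMap (MvPolynomial (Fin n) L) RL (MvPolynomial.map _ (MvPolynomial.C a)) = _
    rw [MvPolynomial.map_C]
    rfl
  have hψX : ∀ c, ψ (MvPolynomial.X c) = ∑ i, j i (f i c) := fun c => by
    rw [hψ, MvPolynomial.aeval_X]
  have key := flat_of_point_bound (K := K) (L := L) (R := RL)
    (fun i => inc.toRingHom.comp (j i).toRingHom)
    (fun i a => by
      change inc (j i (algebraMap K _ a)) = _
      rw [(j i).commutes, hincK])
    (by
      intro T _ h h' hL hj
      have hR : ∀ b : R, h (inc b) = h' (inc b) := by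
        intro b
        have hb : b ∈ Algebra.adjoin K (⋃ i, Set.range (j i)) := hgen ▸ Algebra.mem_top
        induction hb using Algebra.adjoin_induction with
        | mem b hb =>
          obtain ⟨i, a, rfl⟩ := Set.mem_iUnion.1 hb
          exact hj i a
        | algebraMap a => rw [hincK]; exact DFunLike.congr_fun hL _
        | add a b _ _ ha hb => rw [map_add, map_add, map_add, ha, hb]
        | mul a b _ _ ha hb => rw [map_mul, map_mul, map_mul, ha, hb]
      have hS : h.comp (algebraMap (MvPolynomial (Fin n) L) RL) =
          h'.comp (algebraMap (MvPolynomial (Fin n) L) RL) := by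
        refine MvPolynomial.ringHom_ext (fun a => DFunLike.congr_fun hL a) (fun c => ?_)
        have h1 := hinc (MvPolynomial.X c)
        rw [MvPolynomial.map_X] at h1
        rw [RingHom.comp_apply, RingHom.comp_apply, ← h1, hR]
      refine RingHom.ext fun z => ?_
      induction z using TensorProduct.induction_on with
      | zero => simp
      | add a b ha hb => rw [map_add, map_add, ha, hb]
      | tmul a b =>
        have : a ⊗ₜ[MvPolynomial (Fin n) K] b = algebraMap (MvPolynomial (Fin n) L) RL a * inc b := by
          simp [Algebra.TensorProduct.algebraMap_apply, RL, inc]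
        rw [this, map_mul, map_mul, hR]
        congr 1
        exact DFunLike.congr_fun hS a)
    (by
      intro T _ l x hx
      let : Algebra L T := l.toAlgebra
      let : Algebra K T := (l.comp (algebraMap K L)).toAlgebra
      obtain ⟨h, hh⟩ := huniv T (fun i => { x i with commutes' := hx i })
      have hh' : ∀ i a, h (j i a) = x i a := fun i a => DFunLike.congr_fun (hh i) a
      let σ : MvPolynomial (Fin n) L →ₐ[L] T :=
        MvPolynomial.aeval (fun c => h (ψ (MvPolynomial.X c)))
      let : Algebra (MvPolynomial (Fin n) L) T := σ.toRingHom.toAlgebra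
      let : Algebra (MvPolynomial (Fin n) K) T := (h.toRingHom.comp ψ.toRingHom).toAlgebra
      have hσ : σ.toRingHom.comp (MvPolynomial.map (algebraMap K L)) =
          h.toRingHom.comp ψ.toRingHom := by
        refine MvPolynomial.ringHom_ext (fun a => ?_) (fun c => ?_)
        · change σ (MvPolynomial.map _ (MvPolynomial.C a)) = h (ψ (algebraMap K _ a))
          rw [ψ.commutes, h.commutes, MvPolynomial.map_C]
          exact σ.commutes _
        · change σ (MvPolynomial.map _ (MvPolynomial.X c)) = h (ψ (MvPolynomial.X c))
          rw [MvPolynomial.map_X]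
          exact MvPolynomial.aeval_X _ _
      have : IsScalarTower (MvPolynomial (Fin n) K) (MvPolynomial (Fin n) L) T :=
        IsScalarTower.of_algebraMap_eq fun a => (DFunLike.congr_fun hσ a).symm
      let q : RL →ₐ[MvPolynomial (Fin n) L] T := Algebra.TensorProduct.lift (Algebra.ofId _ T)
        ({ h.toRingHom with commutes' := fun a => rfl } : R →ₐ[MvPolynomial (Fin n) K] T)
        (fun _ _ => Commute.all _ _)
      refine ⟨q.toRingHom, ?_, fun i b => ?_⟩
      · ext a
        change q (algebraMap (MvPolynomial (Fin n) L) RL (MvPolynomial.C a)) = l a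
        rw [q.commutes]
        exact σ.commutes a
      · change q (1 ⊗ₜ (j i b)) = x i b
        rw [← hh']
        exact (Algebra.TensorProduct.lift_tmul _ _ _ _ _).trans ((congrArg (· * _) (map_one _)).trans
          (one_mul _)))
    f hbound
  have e : (MvPolynomial.aeval (R := L)
      (fun c => ∑ i, (inc.toRingHom.comp (j i).toRingHom) (f i c))).toRingHom =
      algebraMap (MvPolynomial (Fin n) L) RL := by
    refine MvPolynomial.ringHom_ext (fun a => ?_) (fun c => ?_)
    · exact MvPolynomial.aeval_C _ _
    · have h1 := hinc (MvPolynomial.X c)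
      rw [MvPolynomial.map_X, hψX, map_sum] at h1
      rw [← h1]
      exact MvPolynomial.aeval_X _ _
  rw [e, RingHom.flat_algebraMap_iff] at key
  exact Module.Flat.of_flat_tensorProduct _ _ (MvPolynomial (Fin n) L)

section quot

variable {K J τ : Type} [Field K] {s : J → Type} (e : ∀ j, s j → τ)
  (I : ∀ j, Ideal (MvPolynomial (s j) K))

/-- The comorphism of the projection of a product, presented by the ideal generated by the
`I j` in separate variables, onto its `j`-th factor. -/
noncomputable def factorHom (j : J) : (MvPolynomial (s j) K ⧸ I j) →ₐ[K]
    (MvPolynomial τ K ⧸ Ideal.span (⋃ j, MvPolynomial.rename (e j) '' (I j : Set (MvPolynomial (s j) K)))) :=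
  Ideal.Quotient.liftₐ (I j)
    ((Ideal.Quotient.mkₐ K _).comp (MvPolynomial.rename (e j)))
    (fun a ha => Ideal.Quotient.eq_zero_iff_mem.2
      (Ideal.subset_span (Set.mem_iUnion.2 ⟨j, a, ha, rfl⟩)))

lemma factorHom_mk (j : J) (p : MvPolynomial (s j) K) :
    factorHom e I j (Ideal.Quotient.mk (I j) p) = Ideal.Quotient.mk _ (MvPolynomial.rename (e j) p) :=
  rfl

lemma adjoin_range_factorHom (he : ∀ x, ∃ j y, e j y = x) :
    Algebra.adjoin K (⋃ j, Set.range (factorHom e I j)) = ⊤ := by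
  rw [eq_top_iff]
  rintro b -
  obtain ⟨p, rfl⟩ := Ideal.Quotient.mk_surjective b
  induction p using MvPolynomial.induction_on with
  | C a => exact Subalgebra.algebraMap_mem _ a
  | add p q hp hq => rw [map_add]; exact add_mem hp hq
  | mul_X p x hp =>
    rw [map_mul]
    refine mul_mem hp ?_
    obtain ⟨j, y, rfl⟩ := he x
    refine Algebra.subset_adjoin (Set.mem_iUnion.2 ⟨j, Ideal.Quotient.mk _ (MvPolynomial.X y), ?_⟩)
    rw [factorHom_mk, MvPolynomial.rename_X]

/-- Any family of homomorphisms out of the coordinate rings of the factors extends to the coordinate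
ring of the product. The hypothesis on `e` says that the variables of distinct factors are
disjoint. -/
lemma exists_comp_factorHom
    (he : ∀ (T : Type) (y : ∀ j, s j → T), ∃ z : τ → T, ∀ j a, z (e j a) = y j a)
    (T : Type) [CommRing T] [Algebra K T] (x : ∀ j, (MvPolynomial (s j) K ⧸ I j) →ₐ[K] T) :
    ∃ h : (MvPolynomial τ K ⧸ Ideal.span (⋃ j, MvPolynomial.rename (e j) '' (I j : Set (MvPolynomial (s j) K)))) →ₐ[K] T,
      ∀ j, h.comp (factorHom e I j) = x j := by
  obtain ⟨z, hz⟩ := he T (fun j a => x j (Ideal.Quotient.mk _ (MvPolynomial.X a)))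
  have hx : ∀ j p, MvPolynomial.aeval z (MvPolynomial.rename (e j) p) =
      x j (Ideal.Quotient.mk _ p) := by
    intro j p
    rw [MvPolynomial.aeval_rename]
    have : MvPolynomial.aeval (z ∘ e j) = (x j).comp (Ideal.Quotient.mkₐ K (I j)) := by
      refine MvPolynomial.algHom_ext fun a => ?_
      rw [MvPolynomial.aeval_X, Function.comp_apply, hz]
      rfl
    rw [this]
    rfl
  refine ⟨Ideal.Quotient.liftₐ _ (MvPolynomial.aeval z) ?_, fun j => ?_⟩
  · intro a ha
    have hle : Ideal.span (⋃ j, MvPolynomial.rename (e j) '' (I j : Set (MvPolynomial (s j) K))) ≤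
        RingHom.ker (MvPolynomial.aeval (R := K) z) := by
      refine Ideal.span_le.2 (Set.iUnion_subset fun j => ?_)
      rintro _ ⟨p, hp, rfl⟩
      rw [SetLike.mem_coe, RingHom.mem_ker, hx, Ideal.Quotient.eq_zero_iff_mem.2 hp, map_zero]
    exact hle ha
  · refine AlgHom.ext fun b => ?_
    obtain ⟨p, rfl⟩ := Ideal.Quotient.mk_surjective b
    exact hx j p

end quot

/-- A radical ideal is prime if its extension to a larger field has prime radical: it is the
contraction of that radical, by faithful flatness. -/
lemma isPrime_of_isPrime_radical_map {K L σ : Type} [Field K] [Field L] [Algebra K L]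
    {I : Ideal (MvPolynomial σ K)} (hI : I.IsRadical)
    (h : (I.map (MvPolynomial.map (algebraMap K L))).radical.IsPrime) : I.IsPrime := by
  let : Algebra (MvPolynomial σ K) (MvPolynomial σ L) := MvPolynomial.algebraMvPolynomial
  have : Module.FaithfullyFlat (MvPolynomial σ K) (MvPolynomial σ L) :=
    Module.FaithfullyFlat.of_linearEquiv _ _
      (Algebra.IsPushout.equiv K (MvPolynomial σ K) L (MvPolynomial σ L)).symm.toLinearEquiv
  have h1 := Ideal.comap_map_eq_self_of_faithfullyFlat (B := MvPolynomial σ L) I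
  have h2 : (I.map (algebraMap _ (MvPolynomial σ L))).radical.comap
      (algebraMap (MvPolynomial σ K) _) = I := by
    rw [Ideal.comap_radical, h1, hI.radical]
  rw [← h2]
  have : (I.map (algebraMap _ (MvPolynomial σ L))).radical.IsPrime := h
  exact Ideal.IsPrime.comap _

end

/-! ### Flatness of the convolution -/

theorem convolution_flat_of_self_convolutions_flat :
    ∀ (K : Type) [Field K] [CharZero K]
      (nV t : ℕ), 1 ≤ t →
      ∀ (N : Fin (2 * t) → ℕ) (I : ∀ i, Ideal (MvPolynomial (Fin (N i)) K)),
        -- the `X_i` are reduced (varieties), smooth, and geometrically irreducible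
        (∀ i, (I i).IsRadical) →
        (∀ i, Algebra.Smooth K (MvPolynomial (Fin (N i)) K ⧸ I i)) →
        (∀ i, ((I i).map (MvPolynomial.map
            (algebraMap K (AlgebraicClosure K)))).radical.IsPrime) →
      ∀ (g : ∀ i, Fin nV → MvPolynomial (Fin (N i)) K),
        -- each `t`-fold self-convolution `φ_i^{*t}` is flat
        (∀ i, RingHom.Flat (MvPolynomial.aeval (R := K) (fun j : Fin nV =>
          Ideal.Quotient.mk (selfProdIdeal t (I i))
            (∑ a : Fin t, MvPolynomial.rename (Prod.mk a) (g i j)))).toRingHom) →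
        -- then the convolution `φ_1 * ⋯ * φ_{2t}` is flat
        RingHom.Flat (MvPolynomial.aeval (R := K) (fun j : Fin nV =>
          Ideal.Quotient.mk (prodIdeal I)
            (∑ i : Fin (2 * t), MvPolynomial.rename (Sigma.mk i) (g i j)))).toRingHom := by
  intro K _ _ nV t ht N I hrad hsm hirr g hflat
  let A : Fin (2 * t) → Type := fun i => MvPolynomial (Fin (N i)) K ⧸ I i
  have hprime : ∀ i, (I i).IsPrime := fun i => isPrime_of_isPrime_radical_map (hrad i) (hirr i)
  let f : ∀ i, Fin nV → A i := fun i c => Ideal.Quotient.mk (I i) (g i c)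
  have hfinite : ∀ i, ∃ d : ℕ, Cardinal.toENat (Algebra.trdeg K (A i)) = d := fun i => by
    obtain ⟨d, hd⟩ := Cardinal.lt_aleph0.1
      (trdeg_lt_aleph0_of_finiteType : Algebra.trdeg K (A i) < Cardinal.aleph0)
    exact ⟨d, by rw [hd, Cardinal.toENat_nat]⟩
  choose d hd using hfinite
  -- Self-convolutions: all factors equal, with variables indexed by `Fin t × Fin (N i)`.
  have hfb : ∀ i, FibreBound K (f i) t (d i) := by
    intro i
    have hsplit : ∀ (T : Type) (y : Fin t → Fin (N i) → T),
        ∃ z : Fin t × Fin (N i) → T, ∀ a b, z (a, b) = y a b :=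
      fun T y => ⟨fun p => y p.1 p.2, fun _ _ => rfl⟩
    have h := fibreBound_of_flat (K := K) (factorHom (fun a : Fin t => Prod.mk a) fun _ => I i)
      (adjoin_range_factorHom _ _ fun x => ⟨x.1, x.2, rfl⟩)
      (fun Ω _ _ x => exists_comp_factorHom _ _ hsplit Ω x) (f i) (by
        have := hflat i
        simp only [map_sum] at this
        exact this)
    rwa [hd] at h
  -- Words are indexed by `Fin t ⊕ Fin t`, so that a word has two halves.
  let e : Fin t ⊕ Fin t ≃ Fin (2 * t) := finSumFinEquiv.trans (finCongr (two_mul t).symm)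
  have hsplit : ∀ (T : Type) (y : ∀ i, Fin (N i) → T),
      ∃ z : (Σ i : Fin (2 * t), Fin (N i)) → T, ∀ a b, z ⟨a, b⟩ = y a b :=
    fun T y => ⟨fun p => y p.1 p.2, fun _ _ => rfl⟩
  have key := flat_aeval_of_point_bound (K := K) (L := AlgebraicClosure K) (A := A)
    (factorHom (fun i : Fin (2 * t) => Sigma.mk i) I)
    (adjoin_range_factorHom _ _ fun x => ⟨x.1, x.2, rfl⟩)
    (fun T _ _ x => exists_comp_factorHom _ _ hsplit T x) f (by
      intro Ω _ _ x v k hx hv hk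
      have hatt : Attains K (AlgebraicClosure K) f (fun j => (e j, true)) k := by
        refine Attains.reindex (J := Fin (2 * t)) (w := fun i => (i, true)) ?_ e
        exact ⟨Ω, inferInstance, inferInstance, x, v, hx, fun c => by
          simpa [wordSign] using hv c, hk⟩
      have h := hatt.target_bound hd ht hfb
      have h' : k + nV ≤ ∑ i, d i := by rwa [← Equiv.sum_comp e d]
      calc (k : ℕ∞) + nV ≤ ((∑ i, d i : ℕ) : ℕ∞) := by exact_mod_cast h'
        _ = ∑ i, Cardinal.toENat (Algebra.trdeg K (A i)) := by
          rw [Nat.cast_sum]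
          exact Finset.sum_congr rfl fun i _ => (hd i).symm)
  simp only [map_sum]
  exact key
end

section
/- Let K be a field of characteristic 0, let X_1 and X_2 be smooth, geometrically irreducible K-varieties, and let φ_1 : X_1 → 𝔸^n and φ_2 : X_2 → 𝔸^n be dominant morphisms such that φ_1 is flat. Then the convolution φ_1 * φ_2 : X_1 × X_2 → 𝔸^n, (x_1,x_2) ↦ φ_1(x_1) + φ_2(x_2), is flat, and every scheme-theoretic fiber of φ_1 * φ_2 is a reduced scheme. -/
/-!
Write `S = K[t]` for the coordinate ring of `𝔸^n`, and `A₁`, `A₂` for those of `X₁`, `X₂`, so that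
the product has coordinate ring `A₂ ⊗[K] A₁` (`prodEquiv`).

*Flatness.* The convolution is the composite of `id × φ₁ : X₂ × X₁ → X₂ × 𝔸^n`, which is flat, of the
automorphism `(x, t) ↦ (x, t + φ₂ x)`, and of the projection to `𝔸^n` (`flat_aeval_add`).

*Reduced fibers.* The fiber over a point `y` with residue field `κ` is the fiber product over `𝔸^n` of
`φ₁` and of `y - φ₂ : X₂ × Spec κ → 𝔸^n` (`exists_fiber_injective`). Since `A₁` is flat over `S`, the
domain `A₂` may be enlarged to its fraction field `Q`. As `φ₂` is dominant, `S` embeds in `Q` by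
`-φ₂`, so `Q` is flat over `S`; by the flatness statement for convolutions again, so is `Q ⊗[K] κ`
with the structure map `y - φ₂`. It remains to see that the tensor product over `S` of two flat
reduced algebras is reduced (`isReduced_tensor_of_flat`). It embeds in its base change to `Frac S`,
and over a field of characteristic zero tensor products of reduced algebras are reduced
(`isReduced_tensor`); the latter reduces to field extensions, and then to algebraic ones.

That `A₂` is a domain follows from geometric irreducibility and reducedness by faithfully flat descent
(`isPrime_of_radical_map_isPrime`).
-/

/-!
Statement 15: (Proposition 3.8(1) of Glazer–Hendel.) Let `X_1, X_2` be smooth, geometrically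
irreducible `K`-varieties (char K = 0) and `φ_1 : X_1 → 𝔸^n`, `φ_2 : X_2 → 𝔸^n` dominant
morphisms with `φ_1` flat.  Then the convolution `φ_1 * φ_2 : X_1 × X_2 → 𝔸^n` is flat and
all its scheme-theoretic fibers are reduced.

The varieties are presented affinely: `X_i = Spec (K[x_1,…,x_{N_i}] ⧸ I_i)` with `I_i`
radical (reducedness), smooth over `K`, and geometrically irreducible (the radical of the
extension of `I_i` to an algebraic closure is prime).  A morphism to `𝔸^n` is given by `n`
polynomials; dominance is injectivity of the comorphism; flatness of a morphism is flatness
of its comorphism; and the scheme-theoretic fiber over a point `p` of `𝔸^n`, with residue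
field `κ(p) = Frac(K[𝔸^n]/p)`, is `Spec (κ(p) ⊗ (coordinate ring of the source))`.
-/

open scoped TensorProduct

/-- All scheme-theoretic fibers of the morphism with comorphism `Ψ : S → T` are reduced:
for every prime `p` of `S` with residue field `κ(p) = Frac(S/p)`, the fiber ring
`κ(p) ⊗_S T` is reduced. -/
def FibersReduced {S T : Type} [CommRing S] [CommRing T] (Ψ : S →+* T) : Prop :=
  ∀ (p : Ideal S) (hp : p.IsPrime),
    haveI : p.IsPrime := hp
    letI : Algebra S T := Ψ.toAlgebra
    IsReduced ((FractionRing (S ⧸ p)) ⊗[S] T)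

/-- The ideal of the product `X_1 × X_2 ⊆ 𝔸^{N_1 + N_2}` of `X_i = V(I_i) ⊆ 𝔸^{N_i}`. -/
noncomputable def prodIdeal₂ {K : Type} [CommRing K] {N₁ N₂ : ℕ}
    (I₁ : Ideal (MvPolynomial (Fin N₁) K)) (I₂ : Ideal (MvPolynomial (Fin N₂) K)) :
    Ideal (MvPolynomial (Fin N₁ ⊕ Fin N₂) K) :=
  Ideal.span ((MvPolynomial.rename Sum.inl) '' (I₁ : Set (MvPolynomial (Fin N₁) K)) ∪
    (MvPolynomial.rename Sum.inr) '' (I₂ : Set (MvPolynomial (Fin N₂) K)))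

/-! ### Reducedness of tensor products in characteristic zero -/

/-- By flatness one may replace `L` by its finitely generated, hence finite separable, subextensions
`B`; then `M ⊗ B` is unramified over the field `M`, so it is reduced. -/
lemma isReduced_tensor_of_isAlgebraic (E M L : Type*) [Field E] [CharZero E] [Field M] [Field L]
    [Algebra E M] [Algebra E L] [Algebra.IsAlgebraic E L] : IsReduced (M ⊗[E] L) := by
  apply IsReduced.tensorProduct_of_flat_of_forall_fg
  intro B hB
  have : Algebra.IsAlgebraic E B := Algebra.IsAlgebraic.of_injective B.val Subtype.val_injective
  let : Field B := (Subalgebra.isField_of_algebraic B).toField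
  have : Algebra.FiniteType E B := (Subalgebra.fg_iff_finiteType B).mp hB
  have : Algebra.IsSeparable E B := inferInstance
  have : Algebra.FormallyUnramified E B := Algebra.FormallyUnramified.of_isSeparable E B
  exact Algebra.FormallyUnramified.isReduced_of_field M (M ⊗[E] B)

/-- `A ⊗[S] B` and `A ⊗[E] B` coincide when `E` is the fraction field of `S`. -/
lemma isReduced_tensor_of_isLocalization (S E A B : Type*) [CommRing S] [IsDomain S] [Field E]
    [Algebra S E] [IsFractionRing S E] [CommRing A] [CommRing B] [Algebra S A] [Algebra S B]
    [Algebra E A] [Algebra E B] [IsScalarTower S E A] [IsScalarTower S E B]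
    [IsReduced (A ⊗[E] B)] : IsReduced (A ⊗[S] B) :=
  have := IsLocalization.tensorProduct_compatibleSMul (nonZeroDivisors S) E A B
  isReduced_of_injective (Algebra.TensorProduct.equivOfCompatibleSMul S E S A B).symm
    (Algebra.TensorProduct.equivOfCompatibleSMul S E S A B).symm.injective

attribute [local instance] MvPolynomial.algebraMvPolynomial in
lemma isDomain_mvPolynomial_tensor (k F σ : Type*) [Field k] [Field F] [Algebra k F] :
    IsDomain (MvPolynomial σ k ⊗[k] F) :=
  (Algebra.IsPushout.equiv k (MvPolynomial σ k) F (MvPolynomial σ F)).toMulEquiv.isDomain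

/-- For fields `F` and `L` over `k`, choose a transcendence basis of `L`, with polynomial ring `P` and
`E = Frac P`. Then `L ⊗[k] F = L ⊗[P] (P ⊗[k] F)` embeds in `L ⊗[E] M`, where `M` is the fraction
field of the domain `P ⊗[k] F` and `L` is algebraic over `E`. -/
lemma isReduced_tensor_of_field (k F L : Type*) [Field k] [CharZero k] [Field F] [Field L]
    [Algebra k F] [Algebra k L] : IsReduced (L ⊗[k] F) := by
  obtain ⟨s, hs⟩ := exists_isTranscendenceBasis k L
  let P := MvPolynomial s k
  let : Algebra P L := (MvPolynomial.aeval (R := k) ((↑) : s → L)).toAlgebra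
  have : IsScalarTower k P L := .of_algHom (MvPolynomial.aeval (R := k) ((↑) : s → L))
  have hinj : Function.Injective (algebraMap P L) := hs.1
  have : FaithfulSMul P L := (faithfulSMul_iff_algebraMap_injective P L).mpr hinj
  let E := FractionRing P
  let : Algebra E L := FractionRing.liftAlgebra P L
  have : CharZero E := charZero_of_injective_algebraMap (IsFractionRing.injective P E)
  have : Algebra.IsAlgebraic P L := by
    have h := hs.isAlgebraic
    let e : P ≃ₐ[k] Algebra.adjoin k (Set.range ((↑) : s → L)) := hs.1.aevalEquiv
    refine ⟨fun x ↦ ?_⟩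
    obtain ⟨p, hp, hpx⟩ := h.isAlgebraic x
    refine ⟨p.map e.symm.toRingHom, (Polynomial.map_ne_zero_iff e.symm.injective).mpr hp, ?_⟩
    rw [Polynomial.aeval_def] at hpx
    rw [Polynomial.aeval_def, Polynomial.eval₂_map]
    convert! hpx
    ext y
    obtain ⟨y, rfl⟩ := e.surjective y
    simp only [RingHom.comp_apply]
    exact (congrArg _ (e.symm_apply_apply y)).trans (hs.1.algebraMap_aevalEquiv y).symm
  have : Algebra.IsAlgebraic E L := (IsFractionRing.comap_isAlgebraic_iff (A := P) (K := E)).mp this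
  let D := P ⊗[k] F
  have : IsDomain D := isDomain_mvPolynomial_tensor k F s
  have hD : Function.Injective (algebraMap P D) :=
    Algebra.TensorProduct.includeLeft_injective (S := P) (algebraMap k F).injective
  let M := FractionRing D
  have : FaithfulSMul P D := (faithfulSMul_iff_algebraMap_injective P D).mpr hD
  have : FaithfulSMul D M :=
    (faithfulSMul_iff_algebraMap_injective D M).mpr (IsFractionRing.injective D M)
  have : FaithfulSMul P M := .trans P D M
  let : Algebra E M := FractionRing.liftAlgebra P M
  have : IsReduced (L ⊗[E] M) :=
    have := isReduced_tensor_of_isAlgebraic E M L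
    isReduced_of_injective (Algebra.TensorProduct.comm E L M) (AlgEquiv.injective _)
  have := isReduced_tensor_of_isLocalization P E L M
  have : Module.Flat P E := IsLocalization.flat E (nonZeroDivisors P)
  have : Module.Flat P L := .trans P E L
  have h1 : Function.Injective (Algebra.TensorProduct.map (AlgHom.id P L) (Algebra.algHom P D M)) :=
    Module.Flat.lTensor_preserves_injective_linearMap (M := L)
      (Algebra.algHom P D M).toLinearMap (IsFractionRing.injective D M)
  have : IsReduced (L ⊗[P] D) := isReduced_of_injective _ h1
  exact isReduced_of_injective (Algebra.TensorProduct.cancelBaseChange k P L L F).symm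
    (AlgEquiv.injective _)

/-- Reducedness of `B ⊗[k] A` can be checked over the residue fields of `B`: in a `k`-basis of `A`,
a nilpotent element has coordinates lying in every prime of the reduced ring `B`. -/
lemma isReduced_tensor_of_residueField (k A B : Type*) [Field k] [CommRing A] [CommRing B]
    [Algebra k A] [Algebra k B] [IsReduced B]
    (h : ∀ (p : Ideal B) [p.IsPrime], IsReduced (p.ResidueField ⊗[k] A)) :
    IsReduced (B ⊗[k] A) := by
  constructor
  intro x hx
  let b := Module.Basis.ofVectorSpace k A
  by_contra hx0
  obtain ⟨i, hi⟩ : ∃ i, (b.baseChange B).repr x i ≠ 0 := by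
    by_contra! hc
    exact hx0 ((b.baseChange B).repr.injective (by ext i; simp [hc]))
  have : ¬ IsNilpotent ((b.baseChange B).repr x i) := fun h => hi h.eq_zero
  rw [← mem_nilradical, nilradical_eq_sInf, Ideal.mem_sInf] at this
  push Not at this
  obtain ⟨p, hp, hpi⟩ := this
  have : p.IsPrime := hp
  have := h p
  let f := Algebra.TensorProduct.map (Algebra.algHom k B p.ResidueField) (AlgHom.id k A)
  have hfx : f x = 0 := (hx.map f).eq_zero
  have key : ∀ y, (b.baseChange p.ResidueField).repr (f y) i =
      algebraMap B p.ResidueField ((b.baseChange B).repr y i) := by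
    intro y
    induction y with
    | zero => simp
    | add y z hy hz => simp [hy, hz]
    | tmul u v =>
      have : (Algebra.algHom k B p.ResidueField) u = algebraMap B p.ResidueField u := rfl
      simp [f, Algebra.smul_def, IsScalarTower.algebraMap_apply k B p.ResidueField, this]
  have := key x
  rw [hfx] at this
  simp only [map_zero, Finsupp.coe_zero, Pi.zero_apply] at this
  exact hpi (by simpa using this.symm)

/-- Over a field of characteristic zero, the tensor product of reduced algebras is reduced. -/
theorem isReduced_tensor (k A B : Type*) [Field k] [CharZero k] [CommRing A] [CommRing B]
    [Algebra k A] [Algebra k B] [IsReduced A] [IsReduced B] : IsReduced (B ⊗[k] A) := by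
  apply isReduced_tensor_of_residueField
  intro p _
  have : IsReduced (A ⊗[k] p.ResidueField) := by
    apply isReduced_tensor_of_residueField
    intro q _
    exact isReduced_tensor_of_field k _ _
  exact isReduced_of_injective (Algebra.TensorProduct.comm k _ _) (AlgEquiv.injective _)

universe u

lemma isReduced_fractionRing_tensor (S C : Type u) [CommRing S] [CommRing C] [Algebra S C]
    [IsReduced C] : IsReduced (FractionRing S ⊗[S] C) := by
  have : IsReduced (C ⊗[S] FractionRing S) :=
    isReduced_localizationPreserves (R := C)
      (Algebra.algebraMapSubmonoid C (nonZeroDivisors S)) (C ⊗[S] FractionRing S) ‹_›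
  exact isReduced_of_injective (Algebra.TensorProduct.comm S _ _) (AlgEquiv.injective _)

/-- Over a domain `S` of characteristic zero, the tensor product of flat reduced algebras is reduced:
by flatness it embeds in its base change to the fraction field of `S`. -/
theorem isReduced_tensor_of_flat (S A B : Type u) [CommRing S] [IsDomain S] [CharZero S]
    [CommRing A] [CommRing B] [Algebra S A] [Algebra S B] [IsReduced A] [IsReduced B]
    [Module.Flat S A] [Module.Flat S B] : IsReduced (A ⊗[S] B) := by
  let E := FractionRing S
  have hE : Function.Injective (algebraMap S E) := IsFractionRing.injective S E
  have : CharZero E := charZero_of_injective_algebraMap hE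
  have : IsReduced (E ⊗[S] A) := isReduced_fractionRing_tensor S A
  have : IsReduced (E ⊗[S] B) := isReduced_fractionRing_tensor S B
  have := isReduced_tensor E (E ⊗[S] B) (E ⊗[S] A)
  have := isReduced_tensor_of_isLocalization S E (E ⊗[S] A) (E ⊗[S] B)
  have : Module.Flat S E := IsLocalization.flat E (nonZeroDivisors S)
  have hA : Function.Injective (Algebra.TensorProduct.includeRight : A →ₐ[S] E ⊗[S] A) :=
    Algebra.TensorProduct.includeRight_injective hE
  have hB : Function.Injective (Algebra.TensorProduct.includeRight : B →ₐ[S] E ⊗[S] B) :=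
    Algebra.TensorProduct.includeRight_injective hE
  let f := Algebra.TensorProduct.map (Algebra.TensorProduct.includeRight : A →ₐ[S] E ⊗[S] A)
    (Algebra.TensorProduct.includeRight : B →ₐ[S] E ⊗[S] B)
  exact isReduced_of_injective f (TensorProduct.map_injective_of_flat_flat _ _ hA hB)


/-! ### Flatness of the convolution -/

/-- A field containing the domain `S` is free over the localization `Frac S`, hence flat over `S`. -/
lemma flat_of_injective_of_field {S Q : Type*} [CommRing S] [IsDomain S] [Field Q]
    (f : S →+* Q) (hf : Function.Injective f) : f.Flat := by
  algebraize [f]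
  have : FaithfulSMul S Q := (faithfulSMul_iff_algebraMap_injective S Q).mpr hf
  let : Algebra (FractionRing S) Q := FractionRing.liftAlgebra S Q
  have : Module.Flat S (FractionRing S) := IsLocalization.flat _ (nonZeroDivisors S)
  exact Module.Flat.trans S (FractionRing S) Q

/-- The translation `(x, t) ↦ (x, t + r x)` of `Spec R × 𝔸^σ`, on coordinate rings: the `R`-algebra
endomorphism of `R ⊗ K[t]` with `t_j ↦ t_j + r_j`. -/
noncomputable def shift {K R σ : Type*} [CommRing K] [CommRing R] [Algebra K R] (r : σ → R) :
    R ⊗[K] MvPolynomial σ K →ₐ[K] R ⊗[K] MvPolynomial σ K :=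
  Algebra.TensorProduct.lift Algebra.TensorProduct.includeLeft
    (MvPolynomial.aeval fun j ↦ r j ⊗ₜ 1 + 1 ⊗ₜ MvPolynomial.X j) fun _ _ ↦ .all _ _

lemma shift_comp_shift_neg {K R σ : Type*} [CommRing K] [CommRing R] [Algebra K R] (r : σ → R) :
    (shift (K := K) r).comp (shift (-r)) = AlgHom.id K _ := by
  ext <;> simp [shift, TensorProduct.neg_tmul, ← Algebra.TensorProduct.one_def]

lemma shift_bijective {K R σ : Type*} [CommRing K] [CommRing R] [Algebra K R] (r : σ → R) :
    Function.Bijective (shift (K := K) r) := by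
  refine Function.bijective_iff_has_inverse.mpr ⟨shift (K := K) (-r), fun x ↦ ?_, fun x ↦ ?_⟩
  · simpa using congr($(shift_comp_shift_neg (K := K) (-r)) x)
  · exact congr($(shift_comp_shift_neg (K := K) r) x)

/-- Convolution with a flat morphism `f` is flat, for any `r : Spec R → 𝔸^σ`: it is the composite of
`id × f`, of a translation of `Spec R × 𝔸^σ`, and of the projection to `𝔸^σ`. -/
lemma flat_aeval_add {K R A σ : Type*} [Field K] [CommRing R] [CommRing A] [Algebra K R]
    [Algebra K A] (r : σ → R) (f : σ → A) (hf : (MvPolynomial.aeval (R := K) f).toRingHom.Flat) :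
    (MvPolynomial.aeval (R := K) fun j ↦ (r j ⊗ₜ[K] 1 + 1 ⊗ₜ[K] f j : R ⊗[K] A)).toRingHom.Flat := by
  have h1 : (Algebra.TensorProduct.includeRight :
      MvPolynomial σ K →ₐ[K] R ⊗[K] MvPolynomial σ K).toRingHom.Flat := by
    have : (Algebra.TensorProduct.includeRight :
      MvPolynomial σ K →ₐ[K] R ⊗[K] MvPolynomial σ K).toRingHom =
      (Algebra.TensorProduct.comm K _ R).toRingEquiv.toRingHom.comp
        (algebraMap (MvPolynomial σ K) (MvPolynomial σ K ⊗[K] R)) := by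
      ext <;> simp
    rw [this]
    refine .comp ?_ (.of_bijective (AlgEquiv.bijective _))
    rw [RingHom.flat_algebraMap_iff]
    infer_instance
  have h2 : (shift (K := K) r).toRingHom.Flat := .of_bijective (shift_bijective r)
  have h3 : (Algebra.TensorProduct.map (AlgHom.id K R) (MvPolynomial.aeval (R := K) f)).Flat :=
    RingHom.Flat.tensorProductMap (S := K) (f := AlgHom.id K R) (RingHom.Flat.id R) hf
  have h := (h1.comp h2).comp h3
  convert! h
  ext <;> simp [shift, ← Algebra.TensorProduct.one_def]

/-! ### Fibers of the convolution -/

/-- Two ring homomorphisms agreeing on `S` induce one on the tensor product over `S`, with no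
`S`-algebra structure required on the target. -/
lemma exists_tensor_ringHom {S A B W : Type*} [CommRing S] [CommRing A] [CommRing B] [CommRing W]
    [Algebra S A] [Algebra S B] (a : A →+* W) (b : B →+* W)
    (h : a.comp (algebraMap S A) = b.comp (algebraMap S B)) :
    ∃ φ : A ⊗[S] B →+* W, ∀ x y, φ (x ⊗ₜ y) = a x * b y := by
  let : Algebra S W := (a.comp (algebraMap S A)).toAlgebra
  let a' : A →ₐ[S] W := { a with commutes' _ := rfl }
  let b' : B →ₐ[S] W := { b with commutes' x := congr($h x).symm }
  exact ⟨(Algebra.TensorProduct.lift a' b' fun _ _ ↦ .all _ _).toRingHom, fun x y ↦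
    Algebra.TensorProduct.lift_tmul _ _ _ x y⟩

/-- The fiber of `φ₁ * φ₂` over a point `y` with values in `κ` is the fiber product, over `𝔸^σ`, of
`φ₁ : X₁ → 𝔸^σ` and of `y - φ₂ : X₂ × Spec κ → 𝔸^σ`, because `φ₁ x₁ + φ₂ x₂ = y` if and only if
`φ₁ x₁ = y - φ₂ x₂`. Only the injectivity of one of the two mutually inverse maps is recorded. -/
lemma exists_fiber_injective {K κ A₁ A₂ σ : Type*} [Field K] [CommRing κ] [CommRing A₁]
    [CommRing A₂] [Algebra K κ] [Algebra K A₁] [Algebra K A₂]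
    [Algebra (MvPolynomial σ K) κ] [IsScalarTower K (MvPolynomial σ K) κ]
    [Algebra (MvPolynomial σ K) A₁] [IsScalarTower K (MvPolynomial σ K) A₁]
    [Algebra (MvPolynomial σ K) (A₂ ⊗[K] A₁)] [IsScalarTower K (MvPolynomial σ K) (A₂ ⊗[K] A₁)]
    [Algebra (MvPolynomial σ K) (A₂ ⊗[K] κ)] [IsScalarTower K (MvPolynomial σ K) (A₂ ⊗[K] κ)]
    (f₂ : σ → A₂)
    (hT : ∀ j, algebraMap (MvPolynomial σ K) (A₂ ⊗[K] A₁) (.X j) =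
      f₂ j ⊗ₜ 1 + 1 ⊗ₜ algebraMap (MvPolynomial σ K) A₁ (.X j))
    (hC : ∀ j, algebraMap (MvPolynomial σ K) (A₂ ⊗[K] κ) (.X j) =
      1 ⊗ₜ algebraMap (MvPolynomial σ K) κ (.X j) - f₂ j ⊗ₜ 1) :
    ∃ φ : κ ⊗[MvPolynomial σ K] (A₂ ⊗[K] A₁) →+* A₁ ⊗[MvPolynomial σ K] (A₂ ⊗[K] κ),
      Function.Injective φ := by
  let S := MvPolynomial σ K
  let T := A₂ ⊗[K] A₁
  let C := A₂ ⊗[K] κ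
  let iC : C →ₐ[K] A₁ ⊗[S] C :=
    (Algebra.TensorProduct.includeRight : C →ₐ[S] A₁ ⊗[S] C).restrictScalars K
  let iA : A₁ →ₐ[K] A₁ ⊗[S] C := Algebra.TensorProduct.includeLeft
  let a : κ →ₐ[K] A₁ ⊗[S] C := iC.comp Algebra.TensorProduct.includeRight
  let b : T →ₐ[K] A₁ ⊗[S] C := Algebra.TensorProduct.lift
    (iC.comp Algebra.TensorProduct.includeLeft) iA fun _ _ ↦ .all _ _
  let iT : T →ₐ[K] κ ⊗[S] T :=
    (Algebra.TensorProduct.includeRight : T →ₐ[S] κ ⊗[S] T).restrictScalars K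
  let iκ : κ →ₐ[K] κ ⊗[S] T := Algebra.TensorProduct.includeLeft
  let c : A₁ →ₐ[K] κ ⊗[S] T := iT.comp Algebra.TensorProduct.includeRight
  let d : C →ₐ[K] κ ⊗[S] T := Algebra.TensorProduct.lift
    (iT.comp Algebra.TensorProduct.includeLeft) iκ fun _ _ ↦ .all _ _
  have ha : ∀ y, a y = iC (1 ⊗ₜ y) := fun _ ↦ rfl
  have hb : ∀ u v, b (u ⊗ₜ v) = iC (u ⊗ₜ 1) * iA v :=
    fun u v ↦ Algebra.TensorProduct.lift_tmul _ _ _ u v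
  have hc : ∀ y, c y = iT (1 ⊗ₜ y) := fun _ ↦ rfl
  have hd : ∀ u y, d (u ⊗ₜ y) = iT (u ⊗ₜ 1) * iκ y :=
    fun u y ↦ Algebra.TensorProduct.lift_tmul _ _ _ u y
  have hab : a.comp (IsScalarTower.toAlgHom K S κ) = b.comp (IsScalarTower.toAlgHom K S T) := by
    apply MvPolynomial.algHom_ext
    intro j
    have h1 : iA (algebraMap S A₁ (.X j)) = iC (algebraMap S C (.X j)) :=
      (Algebra.TensorProduct.tmul_one_eq_one_tmul (A := A₁) (B := C) (MvPolynomial.X j : S))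
    rw [show algebraMap S C (.X j) = _ from hC j, map_sub] at h1
    change a (algebraMap S κ (.X j)) = b (algebraMap S T (.X j))
    rw [show algebraMap S T (.X j) = _ from hT j, map_add, hb, hb, ha, map_one iA, h1,
      show iC (1 ⊗ₜ 1) = 1 from map_one iC]
    ring
  have hcd : c.comp (IsScalarTower.toAlgHom K S A₁) = d.comp (IsScalarTower.toAlgHom K S C) := by
    apply MvPolynomial.algHom_ext
    intro j
    have h1 : iκ (algebraMap S κ (.X j)) = iT (algebraMap S T (.X j)) :=
      (Algebra.TensorProduct.tmul_one_eq_one_tmul (A := κ) (B := T) (MvPolynomial.X j : S))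
    rw [show algebraMap S T (.X j) = _ from hT j, map_add] at h1
    change c (algebraMap S A₁ (.X j)) = d (algebraMap S C (.X j))
    rw [show algebraMap S C (.X j) = _ from hC j, map_sub, hd, hd, hc, map_one iκ, h1,
      show iT (1 ⊗ₜ 1) = 1 from map_one iT]
    ring
  obtain ⟨φ, hφ⟩ := exists_tensor_ringHom (S := S) a.toRingHom b.toRingHom
    (congrArg AlgHom.toRingHom hab)
  obtain ⟨ψ, hψ⟩ := exists_tensor_ringHom (S := S) c.toRingHom d.toRingHom
    (congrArg AlgHom.toRingHom hcd)
  refine ⟨φ, Function.LeftInverse.injective (g := ψ) fun x ↦ ?_⟩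
  induction x with
  | zero => simp
  | add x y hx hy => rw [map_add, map_add, hx, hy]
  | tmul y t =>
    induction t using TensorProduct.induction_on with
    | zero => simp
    | add x y hx hy => rw [TensorProduct.tmul_add, map_add, map_add, hx, hy]
    | tmul u v =>
      have e1 : φ (y ⊗ₜ (u ⊗ₜ v)) = v ⊗ₜ (u ⊗ₜ y) := by
        rw [hφ]
        change a y * b (u ⊗ₜ v) = _
        rw [ha, hb, ← mul_assoc, ← map_mul, mul_comm]
        change (v ⊗ₜ[S] _) * (1 ⊗ₜ[S] (1 ⊗ₜ[K] y * u ⊗ₜ[K] 1)) = _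
        rw [Algebra.TensorProduct.tmul_mul_tmul, Algebra.TensorProduct.tmul_mul_tmul]
        simp
      rw [e1, hψ]
      change c v * d (u ⊗ₜ y) = _
      rw [hc, hd, ← mul_assoc, ← map_mul]
      change (1 ⊗ₜ[S] (1 ⊗ₜ[K] v * u ⊗ₜ[K] 1)) * (y ⊗ₜ[S] _) = _
      rw [Algebra.TensorProduct.tmul_mul_tmul, Algebra.TensorProduct.tmul_mul_tmul]
      simp

/-- Dominance of `f` implies dominance of `-f`. -/
lemma injective_aeval_neg {K A σ : Type*} [CommRing K] [CommRing A] [Algebra K A] {f : σ → A}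
    (hf : Function.Injective (MvPolynomial.aeval (R := K) f)) :
    Function.Injective (MvPolynomial.aeval (R := K) fun j ↦ -f j) := by
  let ν : MvPolynomial σ K →ₐ[K] MvPolynomial σ K := MvPolynomial.aeval fun j ↦ -.X j
  have hν : ν.comp ν = AlgHom.id K _ := MvPolynomial.algHom_ext fun j ↦ by simp [ν]
  have hν' : Function.Injective ν :=
    Function.LeftInverse.injective (g := ν) fun x ↦ congr($hν x)
  have : (MvPolynomial.aeval (R := K) fun j ↦ -f j) = (MvPolynomial.aeval f).comp ν :=
    MvPolynomial.algHom_ext fun j ↦ by simp [ν]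
  rw [this]
  exact hf.comp hν'

/-- Fibers of the convolution are reduced. By `exists_fiber_injective` the fiber ring embeds in
`A₁ ⊗[S] (A₂ ⊗[K] κ)` for the map `y - φ₂`; since `A₁` is flat over `S`, this embeds in
`A₁ ⊗[S] (Q ⊗[K] κ)` with `Q = Frac A₂`. The algebra `Q ⊗[K] κ` is flat over `S`, because `S → Q`
given by `-φ₂` is injective, hence flat, and adding the constants `y` preserves flatness. So
`isReduced_tensor_of_flat` applies. -/
theorem isReduced_fiber {K κ A₁ A₂ σ : Type} [Field K] [CharZero K] [Field κ] [CommRing A₁]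
    [CommRing A₂] [IsDomain A₂] [IsReduced A₁] [Algebra K κ] [Algebra K A₁] [Algebra K A₂]
    [Algebra (MvPolynomial σ K) κ] [IsScalarTower K (MvPolynomial σ K) κ]
    [Algebra (MvPolynomial σ K) (A₂ ⊗[K] A₁)] [IsScalarTower K (MvPolynomial σ K) (A₂ ⊗[K] A₁)]
    (f₁ : σ → A₁) (f₂ : σ → A₂)
    (hf₁ : (MvPolynomial.aeval (R := K) f₁).toRingHom.Flat)
    (hf₂ : Function.Injective (MvPolynomial.aeval (R := K) f₂))
    (hT : ∀ j, algebraMap (MvPolynomial σ K) (A₂ ⊗[K] A₁) (.X j) = f₂ j ⊗ₜ 1 + 1 ⊗ₜ f₁ j) :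
    IsReduced (κ ⊗[MvPolynomial σ K] (A₂ ⊗[K] A₁)) := by
  let S := MvPolynomial σ K
  let Q := FractionRing A₂
  let C := A₂ ⊗[K] κ
  let D := Q ⊗[K] κ
  let y : σ → κ := fun j ↦ algebraMap S κ (.X j)
  let ρ₁ : S →ₐ[K] A₁ := MvPolynomial.aeval f₁
  let ρC : S →ₐ[K] C := MvPolynomial.aeval fun j ↦ 1 ⊗ₜ y j - f₂ j ⊗ₜ 1
  let ι : C →ₐ[K] D := Algebra.TensorProduct.map (Algebra.algHom K A₂ Q) (.id K κ)
  have hι : Function.Injective ι :=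
    Module.Flat.rTensor_preserves_injective_linearMap (M := κ)
      (Algebra.algHom K A₂ Q).toLinearMap (IsFractionRing.injective A₂ Q)
  let : Algebra S A₁ := ρ₁.toAlgebra
  let : Algebra S C := ρC.toAlgebra
  let : Algebra S D := (ι.comp ρC).toAlgebra
  have : IsScalarTower K S A₁ := .of_algHom ρ₁
  have : IsScalarTower K S C := .of_algHom ρC
  have : IsScalarTower K S D := .of_algHom (ι.comp ρC)
  have : Module.Flat S A₁ := hf₁
  have hneg : Function.Injective
      (MvPolynomial.aeval (R := K) fun j ↦ -algebraMap A₂ Q (f₂ j)) := by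
    refine injective_aeval_neg ?_
    have : (MvPolynomial.aeval (R := K) fun j ↦ algebraMap A₂ Q (f₂ j)) =
        (Algebra.algHom K A₂ Q).comp (MvPolynomial.aeval f₂) :=
      MvPolynomial.algHom_ext fun j ↦ by
        rw [AlgHom.comp_apply, MvPolynomial.aeval_X, MvPolynomial.aeval_X]; rfl
    rw [this]
    exact (IsFractionRing.injective A₂ Q).comp hf₂
  have : Module.Flat S D := by
    have h := (flat_aeval_add (K := K) y (fun j ↦ -algebraMap A₂ Q (f₂ j))
      (flat_of_injective_of_field _ hneg)).comp
        (.of_bijective (AlgEquiv.bijective (Algebra.TensorProduct.comm K κ Q)) :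
          (Algebra.TensorProduct.comm K κ Q).toRingEquiv.toRingHom.Flat)
    have e : ι.comp ρC = (Algebra.TensorProduct.comm K κ Q).toAlgHom.comp
        (MvPolynomial.aeval fun j ↦ y j ⊗ₜ 1 + 1 ⊗ₜ (-algebraMap A₂ Q (f₂ j))) := by
      refine MvPolynomial.algHom_ext fun j ↦ ?_
      rw [AlgHom.comp_apply, AlgHom.comp_apply, MvPolynomial.aeval_X, MvPolynomial.aeval_X,
        map_sub, map_add, Algebra.TensorProduct.map_tmul, Algebra.TensorProduct.map_tmul]
      simp only [map_one, AlgHom.id_apply, sub_eq_add_neg]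
      rfl
    change (ι.comp ρC).toRingHom.Flat
    rw [e]
    exact h
  have : IsReduced D := isReduced_tensor K κ Q
  have hAD : IsReduced (A₁ ⊗[S] D) := isReduced_tensor_of_flat S A₁ D
  let ι' : C →ₐ[S] D := { ι with commutes' _ := rfl }
  have : IsReduced (A₁ ⊗[S] C) :=
    isReduced_of_injective (Algebra.TensorProduct.map (AlgHom.id S A₁) ι')
      (Module.Flat.lTensor_preserves_injective_linearMap (M := A₁) ι'.toLinearMap hι)
  obtain ⟨φ, hφ⟩ := exists_fiber_injective (κ := κ) (A₁ := A₁) f₂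
    (fun j ↦ (hT j).trans (by congr 2; exact (MvPolynomial.aeval_X f₁ j).symm))
    (fun j ↦ MvPolynomial.aeval_X (R := K) (fun j ↦ (1 ⊗ₜ y j - f₂ j ⊗ₜ 1 : C)) j)
  exact isReduced_of_injective φ hφ


/-! ### Coordinate rings of varieties and of their product -/

attribute [local instance] MvPolynomial.algebraMvPolynomial in
/-- A radical ideal whose extension to a larger field has prime radical is itself prime, by faithfully
flat descent: it is the contraction of the radical of its extension. -/
lemma isPrime_of_radical_map_isPrime {K L σ : Type*} [Field K] [Field L] [Algebra K L]
    {I : Ideal (MvPolynomial σ K)} (hI : I.IsRadical)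
    (h : (I.map (MvPolynomial.map (σ := σ) (algebraMap K L))).radical.IsPrime) : I.IsPrime := by
  have hflat : Module.FaithfullyFlat (MvPolynomial σ K) (MvPolynomial σ L) :=
    .of_linearEquiv _ (MvPolynomial σ K ⊗[K] L)
      (Algebra.IsPushout.equiv K (MvPolynomial σ K) L (MvPolynomial σ L)).symm.toLinearEquiv
  have hcomap : (I.map (MvPolynomial.map (σ := σ) (algebraMap K L))).comap
      (MvPolynomial.map (algebraMap K L)) = I :=
    Ideal.comap_map_eq_self_of_faithfullyFlat (B := MvPolynomial σ L) I
  have : I = (I.map (MvPolynomial.map (σ := σ) (algebraMap K L))).radical.comap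
      (MvPolynomial.map (algebraMap K L)) := by
    rw [Ideal.comap_radical, hcomap, hI.radical]
  rw [this]
  exact Ideal.comap_isPrime _ _

/-- The coordinates of `X₁ × X₂`, viewed in the tensor product of the two coordinate rings. The factor
of `X₂` is placed first, to match the convention of `flat_aeval_add`. -/
noncomputable def prodCoord {K : Type} [Field K] {N₁ N₂ : ℕ}
    (I₁ : Ideal (MvPolynomial (Fin N₁) K)) (I₂ : Ideal (MvPolynomial (Fin N₂) K)) :
    MvPolynomial (Fin N₁ ⊕ Fin N₂) K →ₐ[K]
      (MvPolynomial (Fin N₂) K ⧸ I₂) ⊗[K] (MvPolynomial (Fin N₁) K ⧸ I₁) :=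
  MvPolynomial.aeval (Sum.elim (fun i ↦ 1 ⊗ₜ[K] Ideal.Quotient.mk I₁ (.X i))
    (fun i ↦ Ideal.Quotient.mk I₂ (.X i) ⊗ₜ[K] 1))

lemma prodCoord_inl {K : Type} [Field K] {N₁ N₂ : ℕ}
    (I₁ : Ideal (MvPolynomial (Fin N₁) K)) (I₂ : Ideal (MvPolynomial (Fin N₂) K))
    (p : MvPolynomial (Fin N₁) K) :
    prodCoord I₁ I₂ (MvPolynomial.rename Sum.inl p) = 1 ⊗ₜ Ideal.Quotient.mk I₁ p := by
  have : (prodCoord I₁ I₂).comp (MvPolynomial.rename Sum.inl) =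
      Algebra.TensorProduct.includeRight.comp (Ideal.Quotient.mkₐ K I₁) :=
    MvPolynomial.algHom_ext fun i ↦ by simp [prodCoord]
  exact congr($this p)

lemma prodCoord_inr {K : Type} [Field K] {N₁ N₂ : ℕ}
    (I₁ : Ideal (MvPolynomial (Fin N₁) K)) (I₂ : Ideal (MvPolynomial (Fin N₂) K))
    (p : MvPolynomial (Fin N₂) K) :
    prodCoord I₁ I₂ (MvPolynomial.rename Sum.inr p) = Ideal.Quotient.mk I₂ p ⊗ₜ 1 := by
  have : (prodCoord I₁ I₂).comp (MvPolynomial.rename Sum.inr) =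
      Algebra.TensorProduct.includeLeft.comp (Ideal.Quotient.mkₐ K I₂) :=
    MvPolynomial.algHom_ext fun i ↦ by simp [prodCoord]
  exact congr($this p)

lemma prodIdeal_le_ker {K : Type} [Field K] {N₁ N₂ : ℕ}
    (I₁ : Ideal (MvPolynomial (Fin N₁) K)) (I₂ : Ideal (MvPolynomial (Fin N₂) K)) :
    prodIdeal₂ I₁ I₂ ≤ RingHom.ker (prodCoord I₁ I₂) := by
  refine Ideal.span_le.mpr ?_
  rintro _ (⟨p, hp, rfl⟩ | ⟨p, hp, rfl⟩)
  · rw [SetLike.mem_coe, RingHom.mem_ker, prodCoord_inl, Ideal.Quotient.eq_zero_iff_mem.mpr hp,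
      TensorProduct.tmul_zero]
  · rw [SetLike.mem_coe, RingHom.mem_ker, prodCoord_inr, Ideal.Quotient.eq_zero_iff_mem.mpr hp,
      TensorProduct.zero_tmul]

/-- The map from the tensor product of the coordinate rings to the coordinate ring of `X₁ × X₂`
induced by the two projections. -/
noncomputable def prodInv {K : Type} [Field K] {N₁ N₂ : ℕ}
    (I₁ : Ideal (MvPolynomial (Fin N₁) K)) (I₂ : Ideal (MvPolynomial (Fin N₂) K)) :
    (MvPolynomial (Fin N₂) K ⧸ I₂) ⊗[K] (MvPolynomial (Fin N₁) K ⧸ I₁) →ₐ[K]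
      (MvPolynomial (Fin N₁ ⊕ Fin N₂) K ⧸ prodIdeal₂ I₁ I₂) :=
  Algebra.TensorProduct.lift
    (Ideal.Quotient.liftₐ I₂ ((Ideal.Quotient.mkₐ K _).comp (MvPolynomial.rename Sum.inr))
      fun p hp ↦ Ideal.Quotient.eq_zero_iff_mem.mpr
        (Ideal.subset_span (Or.inr ⟨p, hp, rfl⟩)))
    (Ideal.Quotient.liftₐ I₁ ((Ideal.Quotient.mkₐ K _).comp (MvPolynomial.rename Sum.inl))
      fun p hp ↦ Ideal.Quotient.eq_zero_iff_mem.mpr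
        (Ideal.subset_span (Or.inl ⟨p, hp, rfl⟩)))
    fun _ _ ↦ .all _ _

lemma prodInv_tmul {K : Type} [Field K] {N₁ N₂ : ℕ}
    (I₁ : Ideal (MvPolynomial (Fin N₁) K)) (I₂ : Ideal (MvPolynomial (Fin N₂) K))
    (p : MvPolynomial (Fin N₂) K) (q : MvPolynomial (Fin N₁) K) :
    prodInv I₁ I₂ (Ideal.Quotient.mk I₂ p ⊗ₜ Ideal.Quotient.mk I₁ q) =
      Ideal.Quotient.mk _ (MvPolynomial.rename Sum.inr p) *
        Ideal.Quotient.mk _ (MvPolynomial.rename Sum.inl q) :=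
  Algebra.TensorProduct.lift_tmul _ _ _ _ _

/-- The coordinate ring of `X₁ × X₂` is the tensor product of the coordinate rings. -/
noncomputable def prodEquiv {K : Type} [Field K] {N₁ N₂ : ℕ}
    (I₁ : Ideal (MvPolynomial (Fin N₁) K)) (I₂ : Ideal (MvPolynomial (Fin N₂) K)) :
    (MvPolynomial (Fin N₁ ⊕ Fin N₂) K ⧸ prodIdeal₂ I₁ I₂) ≃ₐ[K]
      (MvPolynomial (Fin N₂) K ⧸ I₂) ⊗[K] (MvPolynomial (Fin N₁) K ⧸ I₁) :=
  let φ := Ideal.Quotient.liftₐ _ (prodCoord I₁ I₂) fun _ ha ↦ prodIdeal_le_ker I₁ I₂ ha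
  have hφ (p) : φ (Ideal.Quotient.mk _ p) = prodCoord I₁ I₂ p := rfl
  AlgEquiv.ofAlgHom φ (prodInv I₁ I₂)
    (by
      refine Algebra.TensorProduct.ext (Ideal.Quotient.algHom_ext _ (AlgHom.ext fun p ↦ ?_))
        (Ideal.Quotient.algHom_ext _ (AlgHom.ext fun p ↦ ?_))
      · change φ (prodInv I₁ I₂ (Ideal.Quotient.mk I₂ p ⊗ₜ Ideal.Quotient.mk I₁ 1)) =
          Ideal.Quotient.mk I₂ p ⊗ₜ 1
        rw [prodInv_tmul, map_one, map_one, mul_one, hφ, prodCoord_inr]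
      · change φ (prodInv I₁ I₂ (Ideal.Quotient.mk I₂ 1 ⊗ₜ Ideal.Quotient.mk I₁ p)) =
          1 ⊗ₜ Ideal.Quotient.mk I₁ p
        rw [prodInv_tmul, map_one, map_one, one_mul, hφ, prodCoord_inl])
    (by
      refine Ideal.Quotient.algHom_ext _ (MvPolynomial.algHom_ext fun i ↦ ?_)
      change prodInv I₁ I₂ (prodCoord I₁ I₂ (.X i)) = Ideal.Quotient.mk _ (.X i)
      rcases i with i | i
      · rw [← MvPolynomial.rename_X Sum.inl, prodCoord_inl, ← map_one (Ideal.Quotient.mk I₂),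
          prodInv_tmul, map_one, map_one, one_mul]
      · rw [← MvPolynomial.rename_X Sum.inr, prodCoord_inr, ← map_one (Ideal.Quotient.mk I₁),
          prodInv_tmul, map_one, map_one, mul_one])

lemma prodEquiv_mk {K : Type} [Field K] {N₁ N₂ : ℕ}
    (I₁ : Ideal (MvPolynomial (Fin N₁) K)) (I₂ : Ideal (MvPolynomial (Fin N₂) K))
    (p : MvPolynomial (Fin N₁ ⊕ Fin N₂) K) :
    prodEquiv I₁ I₂ (Ideal.Quotient.mk _ p) = prodCoord I₁ I₂ p := rfl

/-- The convolution statement for coordinate rings `A₁`, `A₂` and a ring `T` identified with their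
tensor product. -/
lemma flat_and_fibersReduced {K A₁ A₂ T σ : Type} [Field K] [CharZero K] [CommRing A₁]
    [CommRing A₂] [CommRing T] [IsDomain A₂] [IsReduced A₁] [Algebra K A₁] [Algebra K A₂]
    [Algebra K T] (e : T ≃ₐ[K] A₂ ⊗[K] A₁) (f₁ : σ → A₁) (f₂ : σ → A₂)
    (hf₁ : (MvPolynomial.aeval (R := K) f₁).toRingHom.Flat)
    (hf₂ : Function.Injective (MvPolynomial.aeval (R := K) f₂))
    (Ψ : MvPolynomial σ K →ₐ[K] T) (hΨ : ∀ j, e (Ψ (.X j)) = f₂ j ⊗ₜ 1 + 1 ⊗ₜ f₁ j) :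
    Ψ.toRingHom.Flat ∧ FibersReduced Ψ.toRingHom := by
  let θ : MvPolynomial σ K →ₐ[K] A₂ ⊗[K] A₁ :=
    MvPolynomial.aeval fun j ↦ f₂ j ⊗ₜ 1 + 1 ⊗ₜ f₁ j
  have he (x) : e (Ψ x) = θ x := by
    have : e.toAlgHom.comp Ψ = θ := MvPolynomial.algHom_ext fun j ↦
      (hΨ j).trans (MvPolynomial.aeval_X (fun j ↦ f₂ j ⊗ₜ[K] 1 + 1 ⊗ₜ[K] f₁ j) j).symm
    exact congr($this x)
  constructor
  · have hΨe : Ψ.toRingHom = e.symm.toRingEquiv.toRingHom.comp θ.toRingHom :=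
      RingHom.ext fun x ↦ e.eq_symm_apply.mpr (he x)
    rw [hΨe]
    exact (flat_aeval_add f₂ f₁ hf₁).comp (.of_bijective e.symm.bijective)
  · intro p hp
    let : Algebra (MvPolynomial σ K) T := Ψ.toRingHom.toAlgebra
    let : Algebra (MvPolynomial σ K) (A₂ ⊗[K] A₁) := θ.toRingHom.toAlgebra
    have : IsScalarTower K (MvPolynomial σ K) (A₂ ⊗[K] A₁) := .of_algHom θ
    have := isReduced_fiber (κ := FractionRing (MvPolynomial σ K ⧸ p)) f₁ f₂ hf₁ hf₂
      (fun j ↦ MvPolynomial.aeval_X _ j)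
    let e' : T ≃ₐ[MvPolynomial σ K] A₂ ⊗[K] A₁ := .ofRingEquiv (f := e.toRingEquiv) he
    exact isReduced_of_injective (Algebra.TensorProduct.congr
      (.refl : FractionRing (MvPolynomial σ K ⧸ p) ≃ₐ[MvPolynomial σ K] _) e')
      (AlgEquiv.injective _)

theorem convolution_flat_reduced_of_flat_factor :
    ∀ (K : Type) [Field K] [CharZero K]
      (n N₁ N₂ : ℕ)
      (I₁ : Ideal (MvPolynomial (Fin N₁) K)) (I₂ : Ideal (MvPolynomial (Fin N₂) K)),
      -- `X_1, X_2` are reduced (varieties), smooth, geometrically irreducible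
      I₁.IsRadical → I₂.IsRadical →
      Algebra.Smooth K (MvPolynomial (Fin N₁) K ⧸ I₁) →
      Algebra.Smooth K (MvPolynomial (Fin N₂) K ⧸ I₂) →
      (I₁.map (MvPolynomial.map (algebraMap K (AlgebraicClosure K)))).radical.IsPrime →
      (I₂.map (MvPolynomial.map (algebraMap K (AlgebraicClosure K)))).radical.IsPrime →
      ∀ (g₁ : Fin n → MvPolynomial (Fin N₁) K) (g₂ : Fin n → MvPolynomial (Fin N₂) K),
      -- `φ_1` and `φ_2` are dominant
      Function.Injective (MvPolynomial.aeval (R := K)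
        (fun j : Fin n => Ideal.Quotient.mk I₁ (g₁ j))) →
      Function.Injective (MvPolynomial.aeval (R := K)
        (fun j : Fin n => Ideal.Quotient.mk I₂ (g₂ j))) →
      -- `φ_1` is flat
      RingHom.Flat (MvPolynomial.aeval (R := K)
        (fun j : Fin n => Ideal.Quotient.mk I₁ (g₁ j))).toRingHom →
      -- then `φ_1 * φ_2` is flat with reduced fibers
      RingHom.Flat (MvPolynomial.aeval (R := K) (fun j : Fin n =>
        Ideal.Quotient.mk (prodIdeal₂ I₁ I₂)
          (MvPolynomial.rename Sum.inl (g₁ j) +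
            MvPolynomial.rename Sum.inr (g₂ j)))).toRingHom ∧
      FibersReduced (MvPolynomial.aeval (R := K) (fun j : Fin n =>
        Ideal.Quotient.mk (prodIdeal₂ I₁ I₂)
          (MvPolynomial.rename Sum.inl (g₁ j) +
            MvPolynomial.rename Sum.inr (g₂ j)))).toRingHom := by
  intro K _ _ n N₁ N₂ I₁ I₂ hI₁ hI₂ _ _ _ hirr g₁ g₂ _ hinj hflat
  have : I₂.IsPrime := isPrime_of_radical_map_isPrime hI₂ hirr
  have : IsDomain (MvPolynomial (Fin N₂) K ⧸ I₂) := Ideal.Quotient.isDomain I₂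
  have : IsReduced (MvPolynomial (Fin N₁) K ⧸ I₁) :=
    (Ideal.isRadical_iff_quotient_reduced I₁).mp hI₁
  refine flat_and_fibersReduced (prodEquiv I₁ I₂) _ _ hflat hinj _ fun j ↦ ?_
  rw [MvPolynomial.aeval_X, prodEquiv_mk, map_add, prodCoord_inl, prodCoord_inr, add_comm]
end
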